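/- For all integers r, m, d ≥ 2 and n ≥ 1, the Fadell–Neuwirth fibration p: F(ℝ^d, m+n) → F(ℝ^d, m), defined by p(x_1, …, x_m, x_{m+1}, …, x_{m+n}) = (x_1, …, x_m), satisfies dTC_r[p: F(ℝ^d, m+n) → F(ℝ^d, m)] = rn + m − 1 if d is odd, and = rn + m − 2 if d is even. In particular, dTC_r[p] = TC_r[p], the r-th sequential parametrized topological complexity of p. -/

import Mathlib

open MeasureTheory unitInterval Set

universe u v

/-- A (Hurewicz) fibration: a continuous map with the homotopy lifting property
with respect to all topological spaces. -/
def IsHurewiczFibration {E B : Type*} [TopologicalSpace E] [TopologicalSpace B]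
    (p : E → B) : Prop :=
  Continuous p ∧
  ∀ (X : Type u) [TopologicalSpace X] (f : X → E) (H : X × I → B),
    Continuous f → Continuous H → (∀ x, H (x, 0) = p (f x)) →
    ∃ G : X × I → E, Continuous G ∧ (∀ x, G (x, 0) = f x) ∧ ∀ z, H z = p (G z)

/-- `dsecat p`: the distributional sectional category of `p : E → B` (with `E` a metric
space), namely the smallest `n` such that the fibration
`𝔅ₙ₊₁(p) : Eₙ₊₁(p) → B` of probability measures with finite support of size at most `n+1`
contained in single fibers of `p` (with the Lévy–Prokhorov metric topology) admits a
continuous section.  (Value `⊤` if no such `n` exists.) -/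
noncomputable def dsecat {E : Type u} {B : Type v} [MetricSpace E] [TopologicalSpace B]
    (p : E → B) : ℕ∞ :=
  letI : MeasurableSpace E := borel E
  haveI : BorelSpace E := ⟨rfl⟩
  sInf {n : ℕ∞ | ∃ m : ℕ, n = (m : ℕ∞) ∧
    ∃ s : B → LevyProkhorov (ProbabilityMeasure E), Continuous s ∧
      ∀ b : B, ∃ S : Finset E, S.card ≤ m + 1 ∧ (↑S : Set E) ⊆ p ⁻¹' {b} ∧
        (s b).toMeasure (↑S : Set E) = 1}

/-- The classical sectional category (Schwarz genus) of a map: the least `n` such that the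
base admits a cover by `n+1` open sets over each of which there is a continuous partial
section. -/
noncomputable def secat {E : Type u} {B : Type v} [TopologicalSpace E] [TopologicalSpace B]
    (p : E → B) : ℕ∞ :=
  sInf {n : ℕ∞ | ∃ m : ℕ, n = (m : ℕ∞) ∧
    ∃ U : Fin (m + 1) → Set B, (∀ i, IsOpen (U i)) ∧ (⋃ i, U i) = Set.univ ∧
      ∀ i, ∃ s : U i → E, Continuous s ∧ ∀ x : U i, p (s x) = (x : B)}

/-- The point `(i)/(r-1)` of the unit interval, for `i : Fin r`. -/
noncomputable def tDiv (r : ℕ) (i : Fin r) : I :=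
  Set.projIcc (0 : ℝ) 1 zero_le_one ((i : ℝ) / (r - 1))

/-- The space `E^I_B` of paths in `E` lying in one single fiber of `p : E → B`. -/
def FibredPaths {E : Type u} {B : Type v} [TopologicalSpace E] [TopologicalSpace B]
    (p : E → B) : Type u :=
  {γ : C(I, E) // ∃ b : B, ∀ t : I, p (γ t) = b}

/-- The fibred product `E^r_B` of `r` copies of `E` over `B`. -/
def FibredProd {E : Type u} {B : Type v} [TopologicalSpace E] [TopologicalSpace B]
    (p : E → B) (r : ℕ) : Type u :=
  {x : Fin r → E // ∀ i j, p (x i) = p (x j)}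

/-- The fibration `Π_r^E : E^I_B → E^r_B`,
`γ ↦ (γ(0), γ(1/(r-1)), …, γ((r-2)/(r-1)), γ(1))`. -/
noncomputable def parmEval {E : Type u} {B : Type v} [TopologicalSpace E] [TopologicalSpace B]
    (p : E → B) (r : ℕ) : FibredPaths p → FibredProd p r :=
  fun γ => ⟨fun i => γ.1 (tDiv r i), by
    obtain ⟨b, hb⟩ := γ.2
    intro i j
    rw [hb, hb]⟩

noncomputable instance {E : Type u} {B : Type v} [MetricSpace E] [TopologicalSpace B] (p : E → B) :
    MetricSpace (FibredPaths p) :=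
  inferInstanceAs (MetricSpace {γ : C(I, E) // ∃ b : B, ∀ t : I, p (γ t) = b})

instance {E : Type u} {B : Type v} [TopologicalSpace E] [TopologicalSpace B] (p : E → B) :
    TopologicalSpace (FibredPaths p) :=
  inferInstanceAs (TopologicalSpace {γ : C(I, E) // ∃ b : B, ∀ t : I, p (γ t) = b})

instance {E : Type u} {B : Type v} [TopologicalSpace E] [TopologicalSpace B] (p : E → B)
    (r : ℕ) : TopologicalSpace (FibredProd p r) :=
  inferInstanceAs (TopologicalSpace {x : Fin r → E // ∀ i j, p (x i) = p (x j)})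

/-- The `r`-th sequential parametrized distributional complexity
`dTC_r[p : E → B] = dsecat (Π_r^E)`. -/
noncomputable def dTCfib {E : Type u} {B : Type v} [MetricSpace E] [TopologicalSpace B]
    (p : E → B) (r : ℕ) : ℕ∞ :=
  dsecat (parmEval p r)

/-- The `r`-th sequential parametrized topological complexity
`TC_r[p : E → B] = secat (Π_r^E)`. -/
noncomputable def TCfib {E : Type u} {B : Type v} [TopologicalSpace E] [TopologicalSpace B]
    (p : E → B) (r : ℕ) : ℕ∞ :=
  secat (parmEval p r)

/-- The fibration `π_r^X : X^I → X^r`, `φ ↦ (φ(0), φ(1/(r-1)), …, φ(1))`. -/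
noncomputable def freeEval (X : Type u) [TopologicalSpace X] (r : ℕ) :
    C(I, X) → (Fin r → X) :=
  fun φ i => φ (tDiv r i)

/-- The `r`-th sequential distributional complexity `dTC_r(X) = dsecat (π_r^X)`. -/
noncomputable def dTC (X : Type u) [MetricSpace X] (r : ℕ) : ℕ∞ :=
  dsecat (freeEval X r)

/-- The distributional category `dcat(X) = dsecat (P₀(X) → X)` of a pointed space,
where `P₀(X) = {φ : I → X | φ(1) = x₀}` and the fibration is evaluation at `0`. -/
noncomputable def dcat (X : Type u) [MetricSpace X] (x₀ : X) : ℕ∞ :=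
  dsecat (fun φ : {φ : C(I, X) // φ 1 = x₀} => φ.1 0)

/-- The configuration space `F(ℝ^d, k)` of `k` distinct ordered points in `ℝ^d`. -/
def Conf (d k : ℕ) : Type :=
  {x : Fin k → EuclideanSpace ℝ (Fin d) // Function.Injective x}

noncomputable instance (d k : ℕ) : MetricSpace (Conf d k) :=
  inferInstanceAs (MetricSpace {x : Fin k → EuclideanSpace ℝ (Fin d) // Function.Injective x})

/-- The Fadell–Neuwirth fibration `p : F(ℝ^d, m+n) → F(ℝ^d, m)` forgetting the last `n`
points. -/
def fadellNeuwirth (d m n : ℕ) : Conf d (m + n) → Conf d m :=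
  fun x => ⟨fun i => x.1 (Fin.castLE (Nat.le_add_right m n) i),
    x.2.comp (Fin.castLE_injective _)⟩

/-!
**Lower bound.** A continuous family of measures with at most `N` atoms on the fibres of
`parmEval p r`, where `p` is the Fadell–Neuwirth fibration, is pulled back to a family of
configurations over a product of `N` tori of dimension `d - 1`, cubical substitutes for spheres of
vectors. To each of the `N` factors belongs a pair of points whose difference is close to the vector
of that factor at one of the `r` times and close to a vector `w`, the same for all factors, at
another. Along a path in a fibre of `p` this difference does not vanish, which gives a homotopy
between the two vectors. Averaging over the atoms near each point shows that the difference of the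
classes of degree `d - 1` that the two vectors define is, with rational coefficients, a coboundary
wherever the measure splits into clusters of constant number. As this number takes at most `N`
values, the cup product of `N` such differences vanishes. A degree count on the triangulated torus
gives `1` for it if `w` is constant, and `-2` if `d - 1` is even, `w` is the vector of an additional
torus, and one of the other vectors is used twice.

**Upper bound.** Project all points to a line with direction `e`. Among `N` real numbers and `N`
widely separated scales there is one at which every difference is either much smaller or much larger
than the scale, and over the set of configurations with a gap at a given scale all motions can be
planned at once in the plane of `e` and an orthogonal direction `e'`. If `d` is even, `e` can be
chosen along the difference of two fixed points, whose projections are never close, which saves one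
scale.
-/

namespace FadellNeuwirth

/-! ### Alexander–Spanier cochains -/

section Cochains

variable {X Y R : Type*} {p q : ℕ}

/-- A `p`-cochain on the vertex set `X`: a function of vertex sequences that only reads the
vertices `0, …, p`. Infinite sequences are used to avoid casts between the types
`Fin (p + 1) → X`. -/
def IsCochain (p : ℕ) (φ : (ℕ → X) → R) : Prop := DependsOn φ (Iic p)

/-- The `i`-th face of a simplex, obtained by leaving out the vertex with index `i`. -/
def face (i : ℕ) (ξ : ℕ → X) : ℕ → X := fun n => ξ (if n < i then n else n + 1)

/-- The back face of a simplex, obtained by leaving out its first `p` vertices. -/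
def drop (p : ℕ) (ξ : ℕ → X) : ℕ → X := fun n => ξ (n + p)

lemma IsCochain.comp {φ : (ℕ → Y) → R} (hφ : IsCochain p φ) (f : X → Y) :
    IsCochain p (fun ξ : ℕ → X => φ fun n => f (ξ n)) :=
  fun _ _ h => hφ fun n hn => congrArg f (h n hn)

lemma face_face_succ {i j : ℕ} (h : j ≤ i) (ξ : ℕ → X) :
    face j (face (i + 1) ξ) = face i (face j ξ) := by
  funext n
  simp only [face]
  congr 1
  split_ifs <;> omega

lemma drop_face_of_le {i : ℕ} (h : i ≤ p) (ξ : ℕ → X) : drop p (face i ξ) = drop (p + 1) ξ := by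
  funext n
  simp only [face, drop]
  congr 1
  split_ifs <;> omega

lemma drop_face_add (p i : ℕ) (ξ : ℕ → X) : drop p (face (p + i) ξ) = face i (drop p ξ) := by
  funext n
  simp only [face, drop]
  congr 1
  split_ifs <;> omega

lemma IsCochain.apply_face_of_lt {φ : (ℕ → X) → R} (hφ : IsCochain p φ) {i : ℕ} (h : p < i)
    (ξ : ℕ → X) : φ (face i ξ) = φ ξ :=
  hφ fun _ (hn : _ ≤ p) => congrArg ξ (if_pos (by omega))

variable [CommRing R]

/-- The simplicial coboundary of `p`-cochains. -/
def coboundary (p : ℕ) : ((ℕ → X) → R) →ₗ[R] ((ℕ → X) → R) :=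
  ∑ i ∈ Finset.range (p + 2), (-1 : R) ^ i • LinearMap.funLeft R R (face i)

lemma coboundary_apply (p : ℕ) (φ : (ℕ → X) → R) (ξ : ℕ → X) :
    coboundary p φ ξ = ∑ i ∈ Finset.range (p + 2), (-1) ^ i * φ (face i ξ) := by
  simp [coboundary, LinearMap.funLeft_apply]

lemma IsCochain.coboundary {φ : (ℕ → X) → R} (hφ : IsCochain p φ) :
    IsCochain (p + 1) (coboundary p φ) := by
  intro ξ ξ' h
  simp only [coboundary_apply]
  refine Finset.sum_congr rfl fun i _ => ?_
  have hface : φ (face i ξ) = φ (face i ξ') := hφ fun n (hn : n ≤ p) => h _ <| by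
    simp only [mem_Iic]
    split_ifs <;> omega
  rw [hface]

lemma IsCochain.sub {φ ψ : (ℕ → X) → R} (hφ : IsCochain p φ) (hψ : IsCochain p ψ) :
    IsCochain p (φ - ψ) := fun ξ ξ' h => by
  simp only [Pi.sub_apply, hφ h, hψ h]

lemma coboundary_comp (p : ℕ) (φ : (ℕ → Y) → R) (f : X → Y) (ξ : ℕ → X) :
    coboundary p (fun ξ : ℕ → X => φ fun n => f (ξ n)) ξ = coboundary p φ fun n => f (ξ n) := by
  simp only [coboundary_apply]
  rfl

theorem coboundary_coboundary (p : ℕ) (φ : (ℕ → X) → R) :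
    coboundary (p + 1) (coboundary p φ) = 0 := by
  funext ξ
  simp only [coboundary_apply, Finset.mul_sum, ← Finset.sum_product', Pi.zero_apply]
  refine Finset.sum_involution
    (fun a _ => if a.2 < a.1 then (a.2, a.1 - 1) else (a.2 + 1, a.1)) ?_ ?_ ?_ ?_
  · rintro ⟨i, j⟩ _
    rcases lt_or_ge j i with h | h
    · obtain ⟨i, rfl⟩ := Nat.exists_eq_succ_of_ne_zero (Nat.ne_zero_of_lt h)
      simp only [Nat.succ_eq_add_one] at h ⊢
      rw [if_pos h, Nat.add_sub_cancel, face_face_succ (by omega)]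
      ring
    · rw [if_neg h.not_gt, ← face_face_succ h]
      ring
  · rintro ⟨i, j⟩ _ _ h
    split_ifs at h <;> simp only [Prod.mk.injEq] at h <;> omega
  · rintro ⟨i, j⟩ h
    simp only [Finset.mem_product, Finset.mem_range] at h
    split_ifs <;> simp only [Finset.mem_product, Finset.mem_range] <;> omega
  · rintro ⟨i, j⟩ _
    by_cases h : j < i
    · simp only [if_pos h, if_neg (show ¬ i - 1 < j by omega), Prod.mk.injEq, and_true]
      omega
    · simp only [if_neg h, if_pos (show i < j + 1 by omega), Nat.add_sub_cancel]

theorem coboundary_cup {a : (ℕ → X) → R} (ha : IsCochain p a) (b : (ℕ → X) → R) (ξ : ℕ → X) :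
    coboundary (p + q) (fun ξ => a ξ * b (drop p ξ)) ξ =
      coboundary p a ξ * b (drop (p + 1) ξ) +
        (-1) ^ p * (a ξ * coboundary q b (drop p ξ)) := by
  have hfront : ∀ i ∈ Finset.range (p + 1),
      (-1) ^ i * (a (face i ξ) * b (drop p (face i ξ))) =
        (-1) ^ i * a (face i ξ) * b (drop (p + 1) ξ) := fun i hi => by
    rw [drop_face_of_le (Finset.mem_range_succ_iff.1 hi), mul_assoc]
  have hback : ∀ i ∈ Finset.range (q + 1),
      (-1) ^ (p + 1 + i) * (a (face (p + 1 + i) ξ) * b (drop p (face (p + 1 + i) ξ))) =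
        (-1) ^ p * (a ξ * ((-1) ^ (i + 1) * b (face (i + 1) (drop p ξ)))) := fun i _ => by
    rw [ha.apply_face_of_lt (by omega), add_assoc p 1 i, add_comm 1 i, drop_face_add]
    ring
  have hmiddle : face 0 (drop p ξ) = drop (p + 1) ξ := by
    rw [← drop_face_add, add_zero, drop_face_of_le le_rfl]
  simp only [coboundary_apply]
  rw [show p + q + 2 = (p + 1) + (q + 1) by ring, Finset.sum_range_add,
    Finset.sum_range_succ _ (p + 1), Finset.sum_range_succ' _ (q + 1),
    Finset.sum_congr rfl hfront, Finset.sum_congr rfl hback, ha.apply_face_of_lt p.lt_succ_self,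
    hmiddle, ← Finset.sum_mul, ← Finset.mul_sum, ← Finset.mul_sum]
  ring

/-- The vertices of the `i`-th top-dimensional simplex of the prism over a simplex: up to index
`i` they lie in the bottom, from then on in the top. -/
def splice (i : ℕ) (ζ : ℕ → Y × Y) : ℕ → Y := fun n => if n ≤ i then (ζ n).1 else (ζ (n - 1)).2

/-- The prism operator, a homotopy between restriction to the bottom and to the top. -/
def prism (q : ℕ) (w : (ℕ → Y) → R) (ζ : ℕ → Y × Y) : R :=
  ∑ i ∈ Finset.range (q + 1), (-1) ^ i * w (splice i ζ)

lemma IsCochain.prism {w : (ℕ → Y) → R} (hw : IsCochain (q + 1) w) :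
    IsCochain q (prism q w) := by
  intro ζ ζ' h
  refine Finset.sum_congr rfl fun i hi => ?_
  have hi := Finset.mem_range.1 hi
  rw [hw fun n (hn : n ≤ q + 1) => ?_]
  unfold splice
  split_ifs
  · rw [h n (show n ≤ q by omega)]
  · rw [h (n - 1) (show n - 1 ≤ q by omega)]

lemma face_splice_succ {i j : ℕ} (h : j ≤ i) (ζ : ℕ → Y × Y) :
    face j (splice (i + 1) ζ) = splice i (face j ζ) := by
  funext n
  simp only [face, splice]
  split_ifs <;> first | omega | rfl | (congr 2; omega)

lemma face_succ_splice {i j : ℕ} (h : i < j) (ζ : ℕ → Y × Y) :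
    face (j + 1) (splice i ζ) = splice i (face j ζ) := by
  funext n
  simp only [face, splice]
  split_ifs <;> first | omega | rfl | (congr 2; omega)

lemma sum_exterior_faces_splice (w : (ℕ → Y) → R) (ζ : ℕ → Y × Y) :
    ∑ x ∈ Finset.range (q + 2) ×ˢ Finset.range (q + 3) with x.2 < x.1 ∨ x.1 + 1 < x.2,
      (-1) ^ x.1 * ((-1) ^ x.2 * w (face x.2 (splice x.1 ζ))) =
        -coboundary q (prism q w) ζ := by
  simp only [coboundary_apply, prism, Finset.mul_sum, ← Finset.sum_product',
    ← Finset.sum_neg_distrib]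
  refine Finset.sum_bij' (fun x _ => if x.2 < x.1 then (x.2, x.1 - 1) else (x.2 - 1, x.1))
    (fun x _ => if x.1 ≤ x.2 then (x.2 + 1, x.1) else (x.2, x.1 + 1)) ?_ ?_ ?_ ?_ ?_
  · rintro ⟨i, j⟩ h
    simp only [Finset.mem_filter, Finset.mem_product, Finset.mem_range] at h
    split_ifs <;> simp only [Finset.mem_product, Finset.mem_range] <;> omega
  · rintro ⟨i, j⟩ h
    simp only [Finset.mem_product, Finset.mem_range] at h
    split_ifs <;> simp only [Finset.mem_filter, Finset.mem_product, Finset.mem_range] <;> omega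
  · rintro ⟨i, j⟩ h
    simp only [Finset.mem_filter] at h
    by_cases hji : j < i
    · simp only [if_pos hji, if_pos (show j ≤ i - 1 by omega), Prod.mk.injEq, and_true]
      omega
    · simp only [if_neg hji, if_neg (show ¬ j - 1 ≤ i by omega), Prod.mk.injEq, true_and]
      omega
  · rintro ⟨i, j⟩ _
    by_cases hij : i ≤ j
    · simp only [if_pos hij, if_pos (show i < j + 1 by omega), Nat.add_sub_cancel]
    · simp only [if_neg hij, if_neg (show ¬ i + 1 < j by omega), Nat.add_sub_cancel]
  · rintro ⟨i, j⟩ h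
    simp only [Finset.mem_filter] at h
    rcases lt_or_ge j i with hji | hij
    · obtain ⟨i, rfl⟩ := Nat.exists_eq_succ_of_ne_zero (Nat.ne_zero_of_lt hji)
      simp only [Nat.succ_eq_add_one] at hji ⊢
      rw [if_pos hji, Nat.add_sub_cancel, face_splice_succ (by omega)]
      ring
    · obtain ⟨j, rfl⟩ := Nat.exists_eq_succ_of_ne_zero (show j ≠ 0 by omega)
      simp only [Nat.succ_eq_add_one] at h hij ⊢
      rw [if_neg hij.not_gt, Nat.add_sub_cancel, face_succ_splice (by omega)]
      ring

/-- Consecutive simplices of the prism share a face, so that these faces telescope. -/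
lemma sum_interior_faces_splice {w : (ℕ → Y) → R} (hw : IsCochain (q + 1) w) (ζ : ℕ → Y × Y) :
    ∑ x ∈ Finset.range (q + 2) ×ˢ Finset.range (q + 3) with ¬(x.2 < x.1 ∨ x.1 + 1 < x.2),
      (-1) ^ x.1 * ((-1) ^ x.2 * w (face x.2 (splice x.1 ζ))) =
        w (Prod.snd ∘ ζ) - w (Prod.fst ∘ ζ) := by
  set cut : ℕ → ℕ → Y := fun i n => if n < i then (ζ n).1 else (ζ n).2 with hcut
  have hlower : ∀ i, face i (splice i ζ) = cut i := fun i => by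
    funext n
    simp only [face, splice, hcut]
    split_ifs <;> first | omega | rfl
  have hupper : ∀ i, face (i + 1) (splice i ζ) = cut (i + 1) := fun i => by
    funext n
    simp only [face, splice, hcut]
    split_ifs <;> first | omega | rfl
  have hrow : ∀ i ∈ Finset.range (q + 2),
      ∑ j ∈ Finset.range (q + 3) with ¬(j < i ∨ i + 1 < j),
        (-1) ^ i * ((-1) ^ j * w (face j (splice i ζ))) = w (cut i) - w (cut (i + 1)) := by
    intro i hi
    have hpair : {j ∈ Finset.range (q + 3) | ¬(j < i ∨ i + 1 < j)} = {i, i + 1} := by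
      have := Finset.mem_range.1 hi
      ext j
      simp only [Finset.mem_filter, Finset.mem_range, Finset.mem_insert, Finset.mem_singleton]
      omega
    have hsign : (-1 : R) ^ i * (-1) ^ i = 1 := by rw [← mul_pow]; simp
    rw [hpair, Finset.sum_pair (by omega), hlower, hupper, pow_succ]
    linear_combination (w (cut i) - w (cut (i + 1))) * hsign
  have hbottom : w (cut (q + 2)) = w (Prod.fst ∘ ζ) := hw fun n (hn : n ≤ q + 1) => by
    simp only [hcut, if_pos (show n < q + 2 by omega), Function.comp_apply]
  rw [Finset.sum_filter, Finset.sum_product]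
  simp only [← Finset.sum_filter]
  rw [Finset.sum_congr rfl hrow, Finset.sum_range_sub' (fun i => w (cut i)), hbottom]
  simp only [hcut, Nat.not_lt_zero, if_false, Function.comp_def]

theorem coboundary_prism {w : (ℕ → Y) → R} (hw : IsCochain (q + 1) w) (ζ : ℕ → Y × Y)
    (hcl : ∀ i, coboundary (q + 1) w (splice i ζ) = 0) :
    coboundary q (prism q w) ζ = w (Prod.snd ∘ ζ) - w (Prod.fst ∘ ζ) := by
  have hsum : ∑ i ∈ Finset.range (q + 2), (-1) ^ i * coboundary (q + 1) w (splice i ζ) = 0 :=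
    Finset.sum_eq_zero fun i _ => by rw [hcl, mul_zero]
  simp only [coboundary_apply (q + 1), Finset.mul_sum] at hsum
  rw [← Finset.sum_product',
    ← Finset.sum_filter_add_sum_filter_not _ (fun x : ℕ × ℕ => x.2 < x.1 ∨ x.1 + 1 < x.2),
    sum_exterior_faces_splice, sum_interior_faces_splice hw] at hsum
  linear_combination -hsum

/-- The cup product of `N` cochains of degree `q`. -/
def cupProd {N : ℕ} (q : ℕ) (α : Fin N → (ℕ → X) → R) (ξ : ℕ → X) : R :=
  ∏ k, α k (drop (k * q) ξ)

lemma cupProd_succ {N : ℕ} (q : ℕ) (α : Fin (N + 1) → (ℕ → X) → R) :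
    cupProd q α = fun ξ =>
      cupProd q (fun k : Fin N => α k.castSucc) ξ * α (Fin.last N) (drop (N * q) ξ) := by
  funext ξ
  simp only [cupProd, Fin.prod_univ_castSucc, Fin.val_castSucc, Fin.val_last]

lemma IsCochain.cup {a b : (ℕ → X) → R} (ha : IsCochain p a) (hb : IsCochain q b) :
    IsCochain (p + q) (fun ξ => a ξ * b (drop p ξ)) := fun ξ ξ' h => by
  have h : ∀ n ≤ p + q, ξ n = ξ' n := h
  simp only [ha fun n (hn : n ≤ p) => h n (by omega),
    hb fun n (hn : n ≤ q) => show drop p ξ n = drop p ξ' n from h (n + p) (by omega)]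

lemma IsCochain.cupProd {N : ℕ} {α : Fin N → (ℕ → X) → R} (hα : ∀ k, IsCochain q (α k)) :
    IsCochain (N * q) (cupProd q α) := by
  induction N with
  | zero => exact fun ξ ξ' _ => by simp [FadellNeuwirth.cupProd]
  | succ N ih =>
    rw [cupProd_succ, Nat.succ_mul]
    exact (ih fun k => hα k.castSucc).cup (hα (Fin.last N))

lemma coboundary_cupProd {N : ℕ} {S : Set (ℕ → X)} (hS : ∀ ξ ∈ S, ∀ p, drop p ξ ∈ S)
    {α : Fin N → (ℕ → X) → R} (hα : ∀ k, IsCochain q (α k))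
    (hcl : ∀ k, ∀ ξ ∈ S, coboundary q (α k) ξ = 0) :
    ∀ ξ ∈ S, coboundary (N * q) (cupProd q α) ξ = 0 := by
  intro ξ hξ
  induction N with
  | zero => simp [coboundary_apply, cupProd, Finset.sum_range_succ]
  | succ N ih =>
    rw [cupProd_succ, Nat.succ_mul, coboundary_cup (.cupProd fun k => hα k.castSucc),
      ih (fun k => hα _) (fun k => hcl _), hcl _ _ (hS ξ hξ _), zero_mul, mul_zero, mul_zero,
      add_zero]

/-- In the application `S` is a set of small simplices, on which alone the `α k` are cocycles. -/
theorem exists_cupProd_sub_eq_coboundary {N : ℕ} {S : Set (ℕ → X)}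
    (hS : ∀ ξ ∈ S, ∀ p, drop p ξ ∈ S) {α β : Fin (N + 1) → (ℕ → X) → R}
    (hα : ∀ k, IsCochain (q + 1) (α k)) (hβ : ∀ k, IsCochain q (β k))
    (hcl : ∀ k, ∀ ξ ∈ S, coboundary (q + 1) (α k) ξ = 0) :
    ∃ η : (ℕ → X) → R, IsCochain (N * (q + 1) + q) η ∧ ∀ ξ ∈ S,
      cupProd (q + 1) α ξ - cupProd (q + 1) (fun k => α k - coboundary q (β k)) ξ =
        coboundary (N * (q + 1) + q) η ξ := by
  induction N with
  | zero =>
    refine ⟨β 0, by simpa using hβ 0, fun ξ _ => ?_⟩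
    simp [cupProd, show drop 0 ξ = ξ from rfl]
  | succ N ih =>
    obtain ⟨η, hη, hηα⟩ := ih (fun k => hα k.castSucc) (fun k => hβ k.castSucc)
      (fun k => hcl k.castSucc)
    set P := cupProd (q + 1) fun k : Fin (N + 1) =>
      α k.castSucc - coboundary q (β k.castSucc) with hP
    have hPc : IsCochain ((N + 1) * (q + 1)) P :=
      .cupProd fun k => (hα k.castSucc).sub (hβ k.castSucc).coboundary
    have hPcl : ∀ ξ ∈ S, coboundary ((N + 1) * (q + 1)) P ξ = 0 :=
      coboundary_cupProd hS (fun k => (hα k.castSucc).sub (hβ k.castSucc).coboundary)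
        fun k ξ hξ => by
          rw [map_sub, coboundary_coboundary, sub_zero, hcl _ ξ hξ]
    have hdeg : N * (q + 1) + q + (q + 1) = (N + 1) * (q + 1) + q := by ring
    set a := α (Fin.last (N + 1))
    set b := β (Fin.last (N + 1))
    refine ⟨(fun ξ => η ξ * a (drop (N * (q + 1) + q) ξ)) +
      (-1 : R) ^ ((N + 1) * (q + 1)) • fun ξ => P ξ * b (drop ((N + 1) * (q + 1)) ξ), ?_, ?_⟩
    · have h₁ := hdeg ▸ hη.cup (hα (Fin.last (N + 1)))
      have h₂ := hPc.cup (hβ (Fin.last (N + 1)))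
      exact fun ξ ξ' h => congrArg₂ (· + _ * ·) (h₁ h) (h₂ h)
    · intro ξ hξ
      have h₁ := coboundary_cup (q := q + 1) hη a ξ
      rw [hcl _ _ (hS ξ hξ _), ← hηα ξ hξ, hdeg] at h₁
      have h₂ := coboundary_cup (q := q) hPc b ξ
      rw [hPcl ξ hξ] at h₂
      have hsign : (-1 : R) ^ ((N + 1) * (q + 1)) * (-1) ^ ((N + 1) * (q + 1)) = 1 := by
        rw [← mul_pow]; simp
      rw [map_add, map_smul, Pi.add_apply, Pi.smul_apply, smul_eq_mul, h₁, h₂, cupProd_succ _ α,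
        cupProd_succ _ (fun k => α k - coboundary q (β k))]
      dsimp only
      rw [← hP, Pi.sub_apply,
        show N * (q + 1) + q + 1 = (N + 1) * (q + 1) by ring]
      linear_combination
        -(P ξ * coboundary q b (drop ((N + 1) * (q + 1)) ξ)) * hsign

end Cochains

/-! ### The Kuhn triangulation of the discrete torus -/

section Kuhn

variable {R : Type*} [CommRing R] {D L : ℕ}

/-- The vertices of the simplex of the Kuhn triangulation of the discrete torus that starts at `x`
and then moves by one in the coordinate directions `g 0, g 1, …`. -/
def kuhnSimplex (x : Fin D → ZMod L) (g : Equiv.Perm (Fin D)) (n : ℕ) : Fin D → ZMod L :=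
  fun c => x c + if (g.symm c : ℕ) < n then 1 else 0

lemma face_kuhnSimplex_mul_swap (x : Fin D → ZMod L) (g : Equiv.Perm (Fin D)) {i : ℕ}
    (hi : i + 1 < D) :
    face (i + 1) (kuhnSimplex x (g * Equiv.swap ⟨i, by omega⟩ ⟨i + 1, hi⟩)) =
      face (i + 1) (kuhnSimplex x g) := by
  funext n c
  simp only [face, kuhnSimplex, ← Equiv.Perm.inv_def, mul_inv_rev, Equiv.swap_inv,
    Equiv.Perm.mul_apply]
  generalize (g⁻¹ c) = y
  rw [Equiv.swap_apply_def]
  congr 1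
  split_ifs <;> simp_all [Fin.ext_iff] <;> omega

lemma face_zero_kuhnSimplex (x : Fin (D + 1) → ZMod L) (g : Equiv.Perm (Fin (D + 1))) {n : ℕ}
    (hn : n ≤ D) :
    face 0 (kuhnSimplex x g) n =
      kuhnSimplex (x + Pi.single (g 0) 1) (g * finRotate (D + 1)) n := by
  funext c
  obtain ⟨z, rfl⟩ := (g * finRotate (D + 1)).surjective c
  simp only [face, kuhnSimplex, Equiv.symm_apply_apply, Nat.not_lt_zero, if_false, Pi.add_apply,
    Pi.single_apply, add_assoc]
  simp only [Equiv.Perm.mul_apply, Equiv.symm_apply_apply, g.apply_eq_iff_eq]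
  congr 1
  rcases eq_or_ne z (Fin.last D) with rfl | hz
  · simp [hn.not_gt]
  · have hval : (finRotate (D + 1) z : ℕ) = z + 1 := coe_finRotate_of_ne_last hz
    have hne : finRotate (D + 1) z ≠ 0 := fun h => by simp [h] at hval
    rw [hval, if_neg hne, zero_add]
    simp only [Nat.lt_add_one_iff, Nat.succ_le_iff]

variable [NeZero L]

/-- Evaluation of a cochain on the fundamental class of the torus, the signed sum of all top
simplices of the Kuhn triangulation. -/
def torusIntegral : ((ℕ → (Fin D → ZMod L)) → R) →ₗ[R] R :=
  ∑ x : Fin D → ZMod L, ∑ g : Equiv.Perm (Fin D),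
    ((g.sign : ℤ) : R) • LinearMap.proj (kuhnSimplex x g)

lemma torusIntegral_apply (η : (ℕ → (Fin D → ZMod L)) → R) :
    torusIntegral η =
      ∑ x : Fin D → ZMod L, ∑ g : Equiv.Perm (Fin D),
        ((g.sign : ℤ) : R) * η (kuhnSimplex x g) := by
  simp [torusIntegral]

lemma torusIntegral_congr {η θ : (ℕ → (Fin D → ZMod L)) → R}
    (h : ∀ x g, η (kuhnSimplex x g) = θ (kuhnSimplex x g)) :
    torusIntegral η = torusIntegral θ := by
  simp only [torusIntegral_apply, h]

lemma torusIntegral_inner_face (η : (ℕ → (Fin D → ZMod L)) → R) {i : ℕ} (hi : i + 1 < D) :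
    torusIntegral (fun ξ => η (face (i + 1) ξ)) = 0 := by
  rw [torusIntegral_apply]
  refine Finset.sum_eq_zero fun x _ => ?_
  set τ : Equiv.Perm (Fin D) := Equiv.swap ⟨i, by omega⟩ ⟨i + 1, hi⟩
  have hτ : τ.sign = -1 := Equiv.Perm.sign_swap (by simp)
  refine Finset.sum_involution (fun g _ => g * τ) (fun g _ => ?_) (fun g _ _ h => ?_)
    (fun _ _ => Finset.mem_univ _) (fun g _ => by simp [τ, mul_assoc])
  · rw [face_kuhnSimplex_mul_swap, Equiv.Perm.sign_mul, hτ]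
    push_cast
    ring
  · rw [mul_eq_left.1 h, Equiv.Perm.sign_one] at hτ
    exact absurd hτ (by decide)

lemma torusIntegral_first_face {η : (ℕ → (Fin (D + 1) → ZMod L)) → R} (hη : IsCochain D η) :
    torusIntegral (fun ξ => η (face 0 ξ)) = (-1) ^ D * torusIntegral η := by
  have hsign : (-1 : R) ^ D * (-1) ^ D = 1 := by rw [← mul_pow]; simp
  have hface (x : Fin (D + 1) → ZMod L) (g : Equiv.Perm (Fin (D + 1))) :
      ((g.sign : ℤ) : R) * η (face 0 (kuhnSimplex x g)) =
        (-1) ^ D * (((g * finRotate (D + 1)).sign : ℤ) *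
          η (kuhnSimplex (x + Pi.single (g 0) 1) (g * finRotate (D + 1)))) := by
    rw [hη fun n (hn : n ≤ D) => face_zero_kuhnSimplex x g hn, Equiv.Perm.sign_mul, sign_finRotate]
    push_cast
    linear_combination (-((g.sign : ℤ) : R) *
      η (kuhnSimplex (x + Pi.single (g 0) 1) (g * finRotate (D + 1)))) * hsign
  simp only [torusIntegral_apply, hface, ← Finset.mul_sum]
  congr 1
  rw [Finset.sum_comm, Finset.sum_comm (γ := Fin (D + 1) → ZMod L),
    ← Equiv.sum_comp (Equiv.mulRight (finRotate (D + 1)))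
      fun g => ∑ x, ((g.sign : ℤ) : R) * η (kuhnSimplex x g)]
  exact Finset.sum_congr rfl fun g _ => Equiv.sum_comp (Equiv.addRight (Pi.single (g 0) 1))
    fun x => (((g * finRotate (D + 1)).sign : ℤ) : R) * η (kuhnSimplex x (g * finRotate (D + 1)))

theorem torusIntegral_coboundary {p : ℕ} (hD : D = p + 1) {η : (ℕ → (Fin D → ZMod L)) → R}
    (hη : IsCochain p η) : torusIntegral (coboundary p η) = 0 := by
  subst hD
  have hsum : coboundary p η =
      ∑ i ∈ Finset.range (p + 2), (-1 : R) ^ i • fun ξ => η (face i ξ) := by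
    funext ξ
    simp [coboundary_apply]
  have hlast : (fun ξ => η (face (p + 1) ξ)) = η :=
    funext fun ξ => hη.apply_face_of_lt p.lt_succ_self ξ
  have hinner : ∀ i ∈ Finset.range p,
      (-1 : R) ^ (i + 1) • torusIntegral (fun ξ => η (face (i + 1) ξ)) = 0 := fun i hi => by
    rw [torusIntegral_inner_face η (by simpa using hi), smul_zero]
  rw [hsum, map_sum]
  simp only [map_smul]
  rw [Finset.sum_range_succ, Finset.sum_range_succ', Finset.sum_eq_zero hinner, hlast,
    torusIntegral_first_face hη]
  simp only [smul_eq_mul, pow_succ]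
  ring

theorem torusIntegral_cupProd_eq_zero {N q : ℕ} {S : Set (ℕ → (Fin (N * (q + 1)) → ZMod L))}
    (hS : ∀ ξ ∈ S, ∀ p, drop p ξ ∈ S) (hkuhn : ∀ x g, kuhnSimplex x g ∈ S)
    {α β : Fin N → (ℕ → (Fin (N * (q + 1)) → ZMod L)) → R}
    (hα : ∀ k, IsCochain (q + 1) (α k)) (hβ : ∀ k, IsCochain q (β k))
    (hcl : ∀ k, ∀ ξ ∈ S, coboundary (q + 1) (α k) ξ = 0)
    (hexact : ∀ ξ ∈ S, ∃ k, ∀ p, coboundary q (β k) (drop p ξ) = α k (drop p ξ)) :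
    torusIntegral (cupProd (q + 1) α) = 0 := by
  rcases N with _ | N
  · obtain ⟨k, _⟩ := hexact _ (hkuhn 0 1)
    exact k.elim0
  obtain ⟨η, hη, hηα⟩ := exists_cupProd_sub_eq_coboundary hS hα hβ hcl
  rw [← torusIntegral_coboundary (by ring) hη]
  refine torusIntegral_congr fun x g => ?_
  obtain ⟨k, hk⟩ := hexact _ (hkuhn x g)
  rw [← hηα _ (hkuhn x g), eq_comm, sub_eq_self]
  refine Finset.prod_eq_zero (Finset.mem_univ k) ?_
  exact sub_eq_zero.2 (hk _).symm

end Kuhn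

/-! ### Sign labels -/

section Labels

/-- The label of a vector: one plus the largest index of a nonnegative coordinate, or zero if all
coordinates are negative. It takes `d + 1` values, and only near the origin are all of them
taken. -/
noncomputable def signLabel {d : ℕ} (v : Fin d → ℝ) : ℕ :=
  Finset.univ.sup fun i : Fin d => if 0 ≤ v i then (i : ℕ) + 1 else 0

lemma signLabel_le_iff {d n : ℕ} {v : Fin d → ℝ} :
    signLabel v ≤ n ↔ ∀ i, 0 ≤ v i → (i : ℕ) + 1 ≤ n := by
  simp only [signLabel, Finset.sup_le_iff, Finset.mem_univ, true_imp_iff]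
  refine forall_congr' fun i => ?_
  split_ifs with h <;> simp [h]

lemma signLabel_le {d : ℕ} (v : Fin d → ℝ) : signLabel v ≤ d := signLabel_le_iff.2 fun i _ => i.2

lemma signLabel_smul {d : ℕ} (v : Fin d → ℝ) {c : ℝ} (hc : 0 < c) :
    signLabel (c • v) = signLabel v := by
  simp only [signLabel, Pi.smul_apply, smul_eq_mul, mul_nonneg_iff_of_pos_left hc]

lemma neg_of_signLabel_eq_zero {d : ℕ} {v : Fin d → ℝ} (h : signLabel v = 0) (i : Fin d) :
    v i < 0 := by
  by_contra! hi
  exact absurd (signLabel_le_iff.1 h.le i hi) (by omega)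

lemma nonneg_of_signLabel_eq {d : ℕ} {v : Fin d → ℝ} {i : Fin d} (h : signLabel v = i + 1) :
    0 ≤ v i := by
  by_contra hi
  have hle : signLabel v ≤ i := signLabel_le_iff.2 fun j hj => by
    have hji := signLabel_le_iff.1 h.le j hj
    have hne : (j : ℕ) ≠ i := fun e => hi (Fin.ext e ▸ hj)
    omega
  omega

variable {R : Type*} [CommRing R] {q : ℕ} {l : ℕ → ℕ}

/-- The fundamental cocycle of the sphere in terms of labels: `±1` on the simplices whose vertices
carry each of the labels `0, …, q` exactly once, and zero on all others. -/
noncomputable def labelCochain (q : ℕ) (l : ℕ → ℕ) : R :=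
  Matrix.det (Matrix.of fun n j : Fin (q + 1) => if l n = j then (1 : R) else 0)

lemma isCochain_labelCochain : IsCochain q (labelCochain q : (ℕ → ℕ) → R) := fun l l' h => by
  have hl (n : Fin (q + 1)) : l n = l' n := h n (Fin.is_le n)
  simp only [labelCochain, hl]

lemma labelCochain_eq_zero_of_eq {a b : ℕ} (ha : a ≤ q) (hb : b ≤ q) (hab : a ≠ b)
    (h : l a = l b) : (labelCochain q l : R) = 0 :=
  Matrix.det_zero_of_row_eq (i := ⟨a, by omega⟩) (j := ⟨b, by omega⟩) (by simpa using hab)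
    (by funext j; simp [h])

lemma exists_eq_of_labelCochain_ne_zero (h : (labelCochain q l : R) ≠ 0) {j : ℕ} (hj : j ≤ q) :
    ∃ n ≤ q, l n = j := by
  contrapose! h
  exact Matrix.det_eq_zero_of_column_eq_zero ⟨j, by omega⟩ fun n => by
    simp [h n (Fin.is_le n)]

lemma le_of_labelCochain_ne_zero (h : (labelCochain q l : R) ≠ 0) {n : ℕ} (hn : n ≤ q) :
    l n ≤ q := by
  contrapose! h
  exact Matrix.det_eq_zero_of_row_eq_zero ⟨n, by omega⟩ fun j => by
    simp [show l n ≠ j by omega]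

lemma labelCochain_eq_one (h : ∀ n ≤ q, l n = n) : (labelCochain q l : R) = 1 := by
  have hone : (Matrix.of fun n j : Fin (q + 1) => if l n = j then (1 : R) else 0) = 1 := by
    ext n j
    simp [h n (Fin.is_le n), Matrix.one_apply, Fin.ext_iff]
  rw [labelCochain, hone, Matrix.det_one]

/-- The matrix with the labels of a `(q + 1)`-simplex as rows, bordered by a column of ones. -/
def borderedLabelMatrix (q : ℕ) (l : ℕ → ℕ) : Matrix (Fin (q + 2)) (Fin (q + 2)) R :=
  Matrix.of fun n => Fin.cons 1 fun j : Fin (q + 1) => if l n = j then 1 else 0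

lemma det_borderedLabelMatrix (q : ℕ) (l : ℕ → ℕ) :
    (borderedLabelMatrix q l : Matrix _ _ R).det = coboundary q (labelCochain q) l := by
  rw [Matrix.det_succ_column_zero, coboundary_apply,
    ← Fin.sum_univ_eq_sum_range fun i => (-1 : R) ^ i * labelCochain q (face i l)]
  refine Finset.sum_congr rfl fun i _ => ?_
  have hface (n : Fin (q + 1)) : l (i.succAbove n) = face i l n := by
    simp only [Fin.succAbove, face, Fin.lt_def]
    split_ifs <;> simp_all
  simp only [borderedLabelMatrix, labelCochain, Matrix.of_apply, Fin.cons_zero, mul_one]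
  congr 2
  ext n j
  simp [hface]

theorem coboundary_labelCochain_eq_zero [IsDomain R] (hl : ∀ n ≤ q + 1, l n ≤ q + 1) {j : ℕ}
    (hj : j ≤ q + 1) (hlj : ∀ n ≤ q + 1, l n ≠ j) :
    coboundary q (labelCochain q : (ℕ → ℕ) → R) l = 0 := by
  rw [← det_borderedLabelMatrix]
  rcases hj.lt_or_eq with hj | rfl
  · refine Matrix.det_eq_zero_of_column_eq_zero (Fin.succ ⟨j, hj⟩) fun n => ?_
    rw [borderedLabelMatrix, Matrix.of_apply, Fin.cons_succ, if_neg (hlj n (Fin.is_le n))]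
  · refine Matrix.exists_mulVec_eq_zero_iff.1 ⟨Fin.cons 1 fun _ => -1, fun h => ?_, ?_⟩
    · simpa using congrFun h 0
    · funext n
      have hn : l n < q + 1 := (hl n (Fin.is_le n)).lt_of_ne (hlj n (Fin.is_le n))
      have hsum : ∑ j : Fin (q + 1), (if l n = j then (1 : R) else 0) = 1 := by
        rw [Finset.sum_eq_single ⟨l n, hn⟩ (fun j _ hj => if_neg fun h => hj (Fin.ext h.symm))
          (by simp), if_pos rfl]
      simp [borderedLabelMatrix, Matrix.mulVec, dotProduct, Fin.sum_univ_succ (n := q + 1), hsum]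

/-- The pullback to `ℝ^(q+1)` without the origin of the fundamental cocycle of the sphere, a cocycle
on simplices that are small compared to their distance to the origin. -/
noncomputable def sphereCochain (q : ℕ) (v : ℕ → Fin (q + 1) → ℝ) : R :=
  labelCochain q fun n => signLabel (v n)

lemma isCochain_sphereCochain : IsCochain q (sphereCochain q : (ℕ → Fin (q + 1) → ℝ) → R) :=
  isCochain_labelCochain.comp signLabel

theorem coboundary_sphereCochain_eq_zero [IsDomain R] {v : ℕ → Fin (q + 1) → ℝ} {ε : ℝ}
    (hv : ∀ n m, dist (v n) (v m) ≤ ε) (hfar : ∃ n, ε < ‖v n‖) :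
    coboundary q (sphereCochain q : (ℕ → Fin (q + 1) → ℝ) → R) v = 0 := by
  have hcob : coboundary q (sphereCochain q : (ℕ → Fin (q + 1) → ℝ) → R) v =
      coboundary q (labelCochain q) fun n => signLabel (v n) := coboundary_comp q _ signLabel v
  rw [hcob]
  by_contra hne
  have hall : ∀ j ≤ q + 1, ∃ n, signLabel (v n) = j := fun j hj => by
    by_contra! hno
    exact hne (coboundary_labelCochain_eq_zero (fun n _ => signLabel_le _) hj fun n _ => hno n)
  obtain ⟨n, hn⟩ := hfar
  refine hn.not_ge ((pi_norm_le_iff_of_nonneg (dist_nonneg.trans (hv 0 0))).2 fun i => ?_)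
  obtain ⟨a, ha⟩ := hall 0 (by omega)
  obtain ⟨b, hb⟩ := hall (i + 1) (by omega)
  have hna := abs_le.1 ((dist_le_pi_dist (v n) (v a) i).trans (hv n a))
  have hnb := abs_le.1 ((dist_le_pi_dist (v n) (v b) i).trans (hv n b))
  have hneg := neg_of_signLabel_eq_zero ha i
  have hnonneg := nonneg_of_signLabel_eq hb
  exact abs_le.2 ⟨by linarith, by linarith⟩

end Labels

/-! ### Cup products of block classes on the torus -/

section BlockClasses

variable {R : Type*} [CommRing R] {N L q : ℕ}

/-- The `k`-th block of coordinates of a point of the `N * q`-dimensional torus. -/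
def block {Y : Type*} (k : Fin N) (x : Fin (N * q) → Y) : Fin q → Y :=
  fun a => x (finProdFinEquiv (k, a))

/-- The properties of a labelling `Λ` of the discrete `q`-torus with labels `0, …, q + 1` that
determine its degree. On the locus `Λ ≤ q` all coordinates satisfy `near`, and the label is one
plus the largest index of a coordinate satisfying `pos`; as one moves up in a coordinate, `pos`
only changes between `-1` and `0`. -/
structure IsDegreeOneLabelling (Λ : (Fin q → ZMod L) → ℕ) (pos near : ZMod L → Prop) : Prop where
  le_iff : ∀ {u}, Λ u ≤ q → ∀ {n : ℕ}, Λ u ≤ n ↔ ∀ i : Fin q, pos (u i) → (i : ℕ) + 1 ≤ n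
  near_of_le : ∀ {u}, Λ u ≤ q → ∀ i, near (u i)
  eq_neg_one : ∀ {a}, near a → ¬(pos a ↔ pos (a + 1)) → a = -1
  pos_zero : pos 0
  not_pos_neg_one : ¬pos (-1)
  le_of_mem : ∀ {u : Fin q → ZMod L}, (∀ i, u i = -1 ∨ u i = 0) → Λ u ≤ q

lemma kuhnSimplex_apply_perm {D : ℕ} (x : Fin D → ZMod L) (g : Equiv.Perm (Fin D)) (n : ℕ)
    (c : Fin D) : kuhnSimplex x g n (g c) = x (g c) + if (c : ℕ) < n then 1 else 0 := by
  simp [kuhnSimplex]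

lemma eq_one_of_forall_le {h : Equiv.Perm (Fin q)} (hle : ∀ a, h a ≤ a) : h = 1 := by
  ext1 a
  induction a using WellFoundedLT.induction with
  | ind a ih =>
    by_contra hne
    exact hne (h.injective (ih _ ((hle a).lt_of_ne hne)))

lemma le_self_of_forall_lt_succ {l : ℕ → ℕ} (hl : ∀ n < q, l n < l (n + 1)) (hq : l q ≤ q) {n : ℕ}
    (hn : n ≤ q) : l n ≤ n := by
  induction hn using Nat.decreasingInduction with
  | self => exact hq
  | of_succ n hn ih => exact Nat.le_of_lt_succ ((hl n hn).trans_le ih)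

namespace IsDegreeOneLabelling

variable {Λ : (Fin q → ZMod L) → ℕ} {pos near : ZMod L → Prop}

lemma pos_of_eq (hΛ : IsDegreeOneLabelling Λ pos near) {u : Fin q → ZMod L} {i : Fin q}
    (h : Λ u = i + 1) : pos (u i) := by
  have hq : Λ u ≤ q := by omega
  by_contra hi
  have hle : Λ u ≤ i := (hΛ.le_iff hq).2 fun j hj => by
    have hji := (hΛ.le_iff hq).1 h.le j hj
    have hne : (j : ℕ) ≠ i := fun e => hi (Fin.ext e ▸ hj)
    omega
  omega

lemma labelCochain_kuhnSimplex_neg_one (hΛ : IsDegreeOneLabelling Λ pos near) :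
    (labelCochain q fun n => Λ (kuhnSimplex (-1) 1 n) : R) = 1 := by
  refine labelCochain_eq_one fun n hn => ?_
  have hu (i : Fin q) : kuhnSimplex (-1 : Fin q → ZMod L) 1 n i =
      if (i : ℕ) < n then 0 else -1 := by
    have := kuhnSimplex_apply_perm (-1 : Fin q → ZMod L) 1 n i
    split_ifs at this ⊢ <;> simpa using this
  have hle : Λ (kuhnSimplex (-1) 1 n) ≤ q := hΛ.le_of_mem fun i => by
    rw [hu]
    split_ifs <;> simp
  refine le_antisymm ((hΛ.le_iff hle).2 fun i hi => ?_) (le_of_not_gt fun hlt => ?_)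
  · by_contra hni
    rw [hu, if_neg (by omega)] at hi
    exact hΛ.not_pos_neg_one hi
  · have h := (hΛ.le_iff hle).1 (Nat.le_pred_of_lt hlt) ⟨n - 1, by omega⟩ (by
      rw [hu, if_pos (show n - 1 < n by omega)]
      exact hΛ.pos_zero)
    simp only [Nat.pred_eq_sub_one] at h
    omega

variable {y : Fin q → ZMod L} {h : Equiv.Perm (Fin q)}

lemma base_eq_neg_one (hΛ : IsDegreeOneLabelling Λ pos near)
    (hne : (labelCochain q fun n => Λ (kuhnSimplex y h n) : R) ≠ 0) : y = -1 := by
  funext b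
  obtain ⟨a, rfl⟩ := h.surjective b
  have hle : ∀ n ≤ q, Λ (kuhnSimplex y h n) ≤ q := fun n => le_of_labelCochain_ne_zero hne
  obtain ⟨n₀, hn₀, h₀⟩ := exists_eq_of_labelCochain_ne_zero hne (Nat.zero_le q)
  obtain ⟨n₁, _, h₁⟩ := exists_eq_of_labelCochain_ne_zero hne (show (h a : ℕ) + 1 ≤ q by omega)
  have hnot : ¬pos (kuhnSimplex y h n₀ (h a)) := fun hpos => by
    have := (hΛ.le_iff (hle n₀ hn₀)).1 h₀.le _ hpos
    omega
  have hpos := hΛ.pos_of_eq h₁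
  have hfirst := hΛ.near_of_le (hle 0 (Nat.zero_le q)) (h a)
  simp only [kuhnSimplex_apply_perm] at hnot hpos hfirst
  rw [if_neg (Nat.not_lt_zero _), add_zero] at hfirst
  refine hΛ.eq_neg_one hfirst fun hiff => ?_
  split_ifs at hnot hpos <;> simp_all

lemma perm_eq_one (hΛ : IsDegreeOneLabelling Λ pos near)
    (hne : (labelCochain q fun n => Λ (kuhnSimplex (-1) h n) : R) ≠ 0) : h = 1 := by
  have hle : ∀ n ≤ q, Λ (kuhnSimplex (-1) h n) ≤ q := fun n => le_of_labelCochain_ne_zero hne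
  have hpos (n : ℕ) (a : Fin q) : pos (kuhnSimplex (-1) h n (h a)) ↔ (a : ℕ) < n := by
    rw [kuhnSimplex_apply_perm]
    split_ifs with ha <;> simp [ha, hΛ.pos_zero, hΛ.not_pos_neg_one]
  have hle_iff : ∀ n ≤ q, ∀ m, Λ (kuhnSimplex (-1) h n) ≤ m ↔
      ∀ a : Fin q, (a : ℕ) < n → (h a : ℕ) + 1 ≤ m := fun n hn m => by
    rw [hΛ.le_iff (hle n hn), ← h.forall_congr_right]
    simp only [hpos]
  have hstrict : ∀ n < q, Λ (kuhnSimplex (-1) h n) < Λ (kuhnSimplex (-1) h (n + 1)) :=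
    fun n hn => lt_of_le_of_ne
      ((hle_iff n hn.le _).2 fun a ha => (hle_iff (n + 1) hn _).1 le_rfl a (by omega))
      fun heq => hne (labelCochain_eq_zero_of_eq hn.le hn (by omega) heq)
  refine eq_one_of_forall_le fun a => Nat.le_of_succ_le_succ ?_
  exact (hle_iff (a + 1) a.2 _).1 (le_self_of_forall_lt_succ hstrict (hle q le_rfl) a.2) a
    (Nat.lt_succ_self _)

end IsDegreeOneLabelling

/-- The pull-back of the fundamental class of the `q`-sphere to the `N * q`-torus by a labelling
of the `j`-th block of coordinates. -/
noncomputable def blockCochain (Λ : (Fin q → ZMod L) → ℕ) (j : Fin N)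
    (ξ : ℕ → (Fin (N * q) → ZMod L)) : R :=
  labelCochain q fun n => Λ (block j (ξ n))

variable {Λ : (Fin q → ZMod L) → ℕ} {pos near : ZMod L → Prop}
  {x : Fin (N * q) → ZMod L} {g : Equiv.Perm (Fin (N * q))}

/-- Two consecutive vertices must have different labels, hence differ in a coordinate of block
`j`. -/
lemma exists_perm_of_blockCochain_ne_zero {j k : Fin N}
    (h : (blockCochain Λ j (drop (k * q) (kuhnSimplex x g)) : R) ≠ 0) :
    ∃ τ : Equiv.Perm (Fin q),
      (∀ a, g (finProdFinEquiv (k, a)) = finProdFinEquiv (j, τ a)) ∧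
      blockCochain Λ j (drop (k * q) (kuhnSimplex x g)) =
        (labelCochain q fun n => Λ (kuhnSimplex (block j x) τ n) : R) := by
  have hval (a : Fin q) : (finProdFinEquiv (k, a) : ℕ) = a + k * q := by
    rw [finProdFinEquiv_apply_val, mul_comm]
  have hmap : ∀ a, ∃ b, g (finProdFinEquiv (k, a)) = finProdFinEquiv (j, b) := fun a => by
    by_contra! hno
    refine h (labelCochain_eq_zero_of_eq (a := a) (b := a + 1) a.2.le a.2 (by omega)
      (congrArg Λ (funext fun b => ?_)))
    have hne : (g.symm (finProdFinEquiv (j, b)) : ℕ) ≠ a + k * q := fun heq =>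
      hno b <| by
        rw [← g.apply_symm_apply (finProdFinEquiv (j, b)), Fin.ext (heq.trans (hval a).symm)]
    simp only [block, drop, kuhnSimplex]
    congr 2
    exact propext (by omega)
  choose s hs using hmap
  have hinj : s.Injective := fun a b hab =>
    congrArg Prod.snd (finProdFinEquiv.injective (g.injective ((hs a).trans (hab ▸ (hs b).symm))))
  refine ⟨.ofBijective s (Finite.injective_iff_bijective.1 hinj), hs, ?_⟩
  refine congrArg _ (funext fun n => congrArg Λ (funext fun b => ?_))
  obtain ⟨a, rfl⟩ := (Finite.injective_iff_bijective.1 hinj).surjective b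
  have hright := kuhnSimplex_apply_perm (block j x)
    (.ofBijective s (Finite.injective_iff_bijective.1 hinj)) n a
  rw [Equiv.ofBijective_apply] at hright
  rw [hright]
  simp only [block, drop]
  rw [← hs, kuhnSimplex_apply_perm, hval]
  simp only [Nat.add_lt_add_iff_right]

lemma blockCochain_ne_zero_of_cupProd_ne_zero {f : Fin N → Fin N}
    (h : cupProd q (fun k => blockCochain Λ (f k)) (kuhnSimplex x g) ≠ (0 : R)) (k : Fin N) :
    (blockCochain Λ (f k) (drop (k * q) (kuhnSimplex x g)) : R) ≠ 0 :=
  fun h0 => h (Finset.prod_eq_zero (Finset.mem_univ k) h0)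

/-- The blocks that occur in the expansion of the product of the differences
`[k] - [N + 1]`, `k ≤ N`, and `[0] - [N + 1]`: the `t`-th term takes the first summand of the
factors in `t`. -/
def blockChoice (N : ℕ) (t : Finset (Fin (N + 2))) (k : Fin (N + 2)) : Fin (N + 2) :=
  if k ∈ t then Function.update id (Fin.last _) 0 k else Fin.last _

lemma blockChoice_compl_singleton_injective {N : ℕ} {j : Fin (N + 2)}
    (hj : j = 0 ∨ j = Fin.last _) : (blockChoice N {j}ᶜ).Injective := by
  intro k k' h
  simp only [blockChoice, Function.update_apply, Finset.mem_compl, Finset.mem_singleton, id] at h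
  rcases hj with rfl | rfl <;> grind

lemma blockChoice_injective_iff {N : ℕ} (t : Finset (Fin (N + 2))) :
    (blockChoice N t).Injective ↔ t = {0}ᶜ ∨ t = {Fin.last _}ᶜ := by
  have h0 : (0 : Fin (N + 2)) ≠ Fin.last _ := Fin.last_pos'.ne
  refine ⟨fun hinj => ?_, by
    rintro (rfl | rfl) <;> exact blockChoice_compl_singleton_injective (by simp)⟩
  have hmissing : ∀ j ∉ t, t = {j}ᶜ := fun j hj => by
    ext k
    rw [Finset.mem_compl, Finset.mem_singleton]
    refine ⟨fun hk hkj => hj (hkj ▸ hk), fun hkj => ?_⟩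
    by_contra hk
    exact hkj (hinj (by simp [blockChoice, hk, hj]))
  by_cases hzero : 0 ∈ t
  · refine .inr (hmissing _ fun hlast => h0 (hinj ?_))
    simp [blockChoice, hzero, hlast]
  · exact .inl (hmissing _ hzero)

lemma cupProd_blockCochain_sub (Λ : (Fin q → ZMod L) → ℕ) :
    cupProd q (fun k : Fin (N + 2) => (blockCochain Λ (Function.update id (Fin.last _) 0 k) -
        blockCochain Λ (Fin.last _) : (ℕ → (Fin ((N + 2) * q) → ZMod L)) → R)) =
      ∑ t, (-1 : R) ^ tᶜ.card • cupProd q (fun k => blockCochain Λ (blockChoice N t k)) := by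
  funext ξ
  simp only [cupProd, Pi.sub_apply, sub_eq_add_neg, Fintype.prod_add, Finset.prod_neg,
    Finset.sum_apply, Pi.smul_apply, smul_eq_mul]
  refine Finset.sum_congr rfl fun t _ => ?_
  have hmem : ∀ k ∈ t, blockChoice N t k = Function.update id (Fin.last _) 0 k :=
    fun k hk => if_pos hk
  have hnot : ∀ k ∈ tᶜ, blockChoice N t k = Fin.last _ :=
    fun k hk => if_neg (Finset.mem_compl.1 hk)
  rw [← Finset.prod_mul_prod_compl t fun k => blockCochain Λ (blockChoice N t k) _,
    Finset.prod_congr (s₁ := t) rfl fun k hk => by rw [← hmem k hk],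
    Finset.prod_congr (s₁ := tᶜ) rfl fun k hk => by rw [← hnot k hk]]
  ring

variable [NeZero L]

lemma torusIntegral_cupProd_blockCochain_of_not_injective (hq : 0 < q)
    (Λ : (Fin q → ZMod L) → ℕ) {f : Fin N → Fin N} (hf : ¬f.Injective) :
    torusIntegral (cupProd q fun k => blockCochain Λ (f k)) = (0 : R) := by
  simp only [Function.Injective, not_forall] at hf
  obtain ⟨k, k', hkk', hne⟩ := hf
  rw [torusIntegral_apply]
  refine Finset.sum_eq_zero fun x _ => Finset.sum_eq_zero fun g _ => ?_
  by_contra h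
  have hblock := blockCochain_ne_zero_of_cupProd_ne_zero (right_ne_zero_of_mul h)
  obtain ⟨τ, hτ, -⟩ := exists_perm_of_blockCochain_ne_zero (hblock k)
  obtain ⟨τ', hτ', -⟩ := exists_perm_of_blockCochain_ne_zero (hblock k')
  have heq : finProdFinEquiv (k, τ.symm ⟨0, hq⟩) = finProdFinEquiv (k', τ'.symm ⟨0, hq⟩) :=
    g.injective (by rw [hτ, hτ', τ.apply_symm_apply, τ'.apply_symm_apply, hkk'])
  exact hne (congrArg Prod.fst (finProdFinEquiv.injective heq))

/-- The action on coordinates of a permutation of the blocks. -/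
def blockPerm (q : ℕ) (F : Equiv.Perm (Fin N)) : Equiv.Perm (Fin (N * q)) :=
  finProdFinEquiv.permCongr (Equiv.prodCongrLeft fun _ : Fin q => F)

lemma blockPerm_apply (F : Equiv.Perm (Fin N)) (k : Fin N) (a : Fin q) :
    blockPerm q F (finProdFinEquiv (k, a)) = finProdFinEquiv (F k, a) := by
  simp [blockPerm, Equiv.permCongr_apply]

lemma sign_blockPerm (F : Equiv.Perm (Fin N)) : (blockPerm q F).sign = F.sign ^ q := by
  rw [blockPerm, Equiv.Perm.sign_permCongr, Equiv.Perm.sign_prodCongrLeft, Finset.prod_const,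
    Finset.card_univ, Fintype.card_fin]

/-- Only one simplex contributes: it starts at `-1` and runs through the blocks in the order
`F`. -/
theorem torusIntegral_cupProd_blockCochain (hΛ : IsDegreeOneLabelling Λ pos near)
    (F : Equiv.Perm (Fin N)) :
    torusIntegral (cupProd q fun k => blockCochain Λ (F k)) = ((F.sign ^ q : ℤ) : R) := by
  have hvalue : cupProd q (fun k => blockCochain Λ (F k)) (kuhnSimplex (-1) (blockPerm q F)) =
      (1 : R) := Finset.prod_eq_one fun k _ => by
    refine Eq.trans ?_ hΛ.labelCochain_kuhnSimplex_neg_one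
    refine congrArg (labelCochain q) (funext fun n => congrArg Λ (funext fun a => ?_))
    have hleft := kuhnSimplex_apply_perm (-1 : Fin (N * q) → ZMod L) (blockPerm q F) (n + k * q)
      (finProdFinEquiv (k, a))
    have hright := kuhnSimplex_apply_perm (-1 : Fin q → ZMod L) 1 n a
    rw [blockPerm_apply] at hleft
    simp_all [block, drop, mul_comm]
  have hunique : ∀ x g, cupProd q (fun k => blockCochain Λ (F k)) (kuhnSimplex x g) ≠ (0 : R) →
      x = -1 ∧ g = blockPerm q F := fun x g h => by
    have hmain : ∀ k : Fin N, block (F k) x = -1 ∧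
        ∀ a, g (finProdFinEquiv (k, a)) = finProdFinEquiv (F k, a) := fun k => by
      have hk := blockCochain_ne_zero_of_cupProd_ne_zero h k
      obtain ⟨τ, hτ, hblock⟩ := exists_perm_of_blockCochain_ne_zero hk
      rw [hblock] at hk
      have hx := hΛ.base_eq_neg_one hk
      rw [hx] at hk
      exact ⟨hx, fun a => by rw [hτ, hΛ.perm_eq_one hk, Equiv.Perm.one_apply]⟩
    constructor
    · funext c
      obtain ⟨⟨k, a⟩, rfl⟩ := finProdFinEquiv.surjective c
      simpa [block] using congrFun (hmain (F.symm k)).1 a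
    · ext1 c
      obtain ⟨⟨k, a⟩, rfl⟩ := finProdFinEquiv.surjective c
      rw [(hmain k).2 a, blockPerm_apply]
  rw [torusIntegral_apply, Finset.sum_eq_single (-1), Finset.sum_eq_single (blockPerm q F), hvalue,
    sign_blockPerm, mul_one, Units.val_pow_eq_pow_val]
  · exact fun g _ hg => mul_eq_zero_of_right _ (by_contra fun h => hg (hunique _ g h).2)
  · simp
  · exact fun x _ hx => Finset.sum_eq_zero fun g _ =>
      mul_eq_zero_of_right _ (by_contra fun h => hx (hunique x g h).1)
  · simp

theorem torusIntegral_cupProd_blockCochain_sub (hΛ : IsDegreeOneLabelling Λ pos near)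
    (hq : Even q) (hq0 : 0 < q) :
    torusIntegral (cupProd q fun k : Fin (N + 2) =>
      (blockCochain Λ (Function.update id (Fin.last _) 0 k) - blockCochain Λ (Fin.last _) :
        (ℕ → (Fin ((N + 2) * q) → ZMod L)) → R)) = -2 := by
  have hterm : ∀ j : Fin (N + 2), j = 0 ∨ j = Fin.last _ →
      torusIntegral (cupProd q fun k => blockCochain Λ (blockChoice N {j}ᶜ k)) = (1 : R) :=
    fun j hj => by
      have hbij := Finite.injective_iff_bijective.1 (blockChoice_compl_singleton_injective hj)
      have h := torusIntegral_cupProd_blockCochain (R := R) hΛ (.ofBijective _ hbij)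
      rwa [← Units.val_pow_eq_pow_val, Int.units_pow_eq_pow_mod_two, Nat.even_iff.1 hq, pow_zero,
        Units.val_one, Int.cast_one] at h
  have hne : ({0}ᶜ : Finset (Fin (N + 2))) ≠ {Fin.last _}ᶜ := by
    simp
  rw [cupProd_blockCochain_sub, map_sum,
    ← Finset.sum_subset (Finset.subset_univ {{0}ᶜ, {Fin.last _}ᶜ}) fun t _ ht => ?_,
    Finset.sum_pair hne]
  · simp only [map_smul, hterm 0 (.inl rfl), hterm _ (.inr rfl), compl_compl, Finset.card_singleton]
    norm_num
  · rw [Finset.mem_insert, Finset.mem_singleton, ← blockChoice_injective_iff] at ht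
    rw [map_smul, torusIntegral_cupProd_blockCochain_of_not_injective hq0 Λ ht, smul_zero]

end BlockClasses

/-! ### A labelling of degree one -/

section TorusLabel

variable {q L : ℕ}

lemma signLabel_snoc_le_iff {n : ℕ} {u : Fin q → ℝ} {c : ℝ} :
    signLabel (Fin.snoc u c : Fin (q + 1) → ℝ) ≤ n ↔ signLabel u ≤ n ∧ (0 ≤ c → q + 1 ≤ n) := by
  simp [signLabel_le_iff, Fin.forall_fin_succ']

lemma signLabel_snoc_le_self_iff {u : Fin q → ℝ} {c : ℝ} :
    signLabel (Fin.snoc u c : Fin (q + 1) → ℝ) ≤ q ↔ c < 0 := by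
  simp [signLabel_snoc_le_iff, signLabel_le]

/-- The coordinates `im z₁, …, im z_q, q - 1 - ∑ re zᵢ` of a map `(S¹)^q → ℝ^(q+1) \ {0}`. Its
last coordinate is negative only if all `zᵢ` have positive real part. -/
noncomputable def torusVector (z : Fin q → Circle) : Fin (q + 1) → ℝ :=
  Fin.snoc (fun i => (z i : ℂ).im) (q - 1 - ∑ i, (z i : ℂ).re)

/-- If all imaginary parts vanish, then all real parts are `±1` and their sum has the parity of
`q`. -/
lemma torusVector_ne_zero (z : Fin q → Circle) : torusVector z ≠ 0 := by
  intro h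
  have him (i : Fin q) : (z i : ℂ).im = 0 := by
    simpa [torusVector] using congrFun h i.castSucc
  have hre : ∑ i, (z i : ℂ).re = q - 1 := by
    have hlast : (q : ℝ) - 1 - ∑ i, (z i : ℂ).re = 0 := by
      simpa [torusVector] using congrFun h (Fin.last q)
    linarith
  have hsign (i : Fin q) : ∃ b : ℤ, (z i : ℂ).re = 1 - 2 * b := by
    have hnorm : (z i : ℂ).re * (z i : ℂ).re = 1 := by
      simpa [Complex.normSq_apply, him i] using Circle.normSq_coe (z i)
    rcases mul_self_eq_one_iff.1 hnorm with hone | hone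
    · exact ⟨0, by rw [hone]; norm_num⟩
    · exact ⟨1, by rw [hone]; norm_num⟩
  choose b hb using hsign
  simp only [hb, Finset.sum_sub_distrib, ← Finset.mul_sum, Finset.sum_const, Finset.card_univ,
    Fintype.card_fin, nsmul_eq_mul, mul_one, sub_right_inj] at hre
  have htwo : 2 * ∑ i, b i = 1 := by exact_mod_cast hre
  omega

lemma re_pos_of_lt_sum_re {z : Fin q → Circle} (h : (q : ℝ) - 1 < ∑ i, (z i : ℂ).re)
    (i : Fin q) : 0 < (z i : ℂ).re := by
  have hle (j : Fin q) : (z j : ℂ).re ≤ 1 :=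
    (Complex.re_le_norm _).trans (Circle.norm_coe (z j)).le
  have hsum := Finset.sum_le_card_nsmul (Finset.univ.erase i) _ 1 fun j _ => hle j
  rw [Finset.card_erase_of_mem (Finset.mem_univ i), Finset.card_univ, Fintype.card_fin,
    nsmul_eq_mul, mul_one, Nat.cast_pred i.pos] at hsum
  rw [← Finset.add_sum_erase _ _ (Finset.mem_univ i)] at h
  linarith

variable [NeZero L]

lemma toCircle_intCast_eq_exp (k : ℤ) :
    (ZMod.toCircle (k : ZMod L) : ℂ) =
      Complex.exp (((2 * Real.pi * k / L : ℝ) : ℂ) * Complex.I) := by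
  rw [ZMod.toCircle_intCast]
  push_cast
  ring_nf

lemma re_toCircle_intCast (k : ℤ) :
    (ZMod.toCircle (k : ZMod L) : ℂ).re = Real.cos (2 * Real.pi * k / L) := by
  rw [toCircle_intCast_eq_exp, Complex.exp_ofReal_mul_I_re]

lemma im_toCircle_intCast (k : ℤ) :
    (ZMod.toCircle (k : ZMod L) : ℂ).im = Real.sin (2 * Real.pi * k / L) := by
  rw [toCircle_intCast_eq_exp, Complex.exp_ofReal_mul_I_im]

lemma im_toCircle_intCast_nonneg_iff {k : ℤ} (hlow : -(L : ℤ) < 2 * k) (hupp : 2 * k ≤ L) :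
    0 ≤ (ZMod.toCircle (k : ZMod L) : ℂ).im ↔ 0 ≤ k := by
  have hL : (0 : ℝ) < L := Nat.cast_pos.2 (NeZero.pos L)
  have hlow' : -(L : ℝ) < 2 * k := by exact_mod_cast hlow
  have hupp' : 2 * (k : ℝ) ≤ L := by exact_mod_cast hupp
  rw [im_toCircle_intCast]
  refine ⟨fun h => ?_, fun hk => ?_⟩
  · by_contra! hk
    rw [← Int.cast_lt (R := ℝ), Int.cast_zero] at hk
    refine h.not_gt (Real.sin_neg_of_neg_of_neg_pi_lt (div_neg_of_neg_of_pos ?_ hL) ?_)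
    · nlinarith [Real.pi_pos]
    · rw [lt_div_iff₀ hL]
      nlinarith [Real.pi_pos]
  · rw [← Int.cast_nonneg_iff (R := ℝ)] at hk
    refine Real.sin_nonneg_of_nonneg_of_le_pi (by positivity) ?_
    rw [div_le_iff₀ hL]
    nlinarith [Real.pi_pos]

lemma four_mul_lt_of_re_toCircle_pos {k : ℤ} (hupp : 2 * k ≤ L)
    (h : 0 < (ZMod.toCircle (k : ZMod L) : ℂ).re) : 4 * k < L := by
  have hL : (0 : ℝ) < L := Nat.cast_pos.2 (NeZero.pos L)
  have hupp' : 2 * (k : ℝ) ≤ L := by exact_mod_cast hupp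
  by_contra! hk
  have hk' : (L : ℝ) ≤ 4 * k := by exact_mod_cast hk
  rw [re_toCircle_intCast] at h
  refine h.not_ge (Real.cos_nonpos_of_pi_div_two_le_of_le ?_ ?_)
  · rw [le_div_iff₀ hL]
    nlinarith [Real.pi_pos]
  · rw [div_le_iff₀ hL]
    nlinarith [Real.pi_pos]

lemma eq_neg_one_of_im_toCircle_sign_change (hL : 4 ≤ L) {a : ZMod L}
    (hre : 0 < (ZMod.toCircle a : ℂ).re)
    (him : ¬(0 ≤ (ZMod.toCircle a : ℂ).im ↔ 0 ≤ (ZMod.toCircle (a + 1) : ℂ).im)) : a = -1 := by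
  obtain ⟨hlow, hupp⟩ := a.valMinAbs_mem_Ioc
  have ha := a.coe_valMinAbs
  generalize a.valMinAbs = k at hlow hupp ha
  subst ha
  have hk := four_mul_lt_of_re_toCircle_pos (by linarith) hre
  have hsucc : (k : ZMod L) + 1 = ((k + 1 : ℤ) : ZMod L) := by push_cast; rfl
  rw [hsucc, im_toCircle_intCast_nonneg_iff (by linarith) (by linarith),
    im_toCircle_intCast_nonneg_iff (by linarith) (by linarith)] at him
  have hneg : k = -1 := by omega
  rw [hneg, Int.cast_neg, Int.cast_one]

lemma lt_sum_re_toCircle_of_forall_mem (hL : 5 * q + 5 ≤ L) {u : Fin q → ZMod L}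
    (hu : ∀ i, u i = -1 ∨ u i = 0) : (q : ℝ) - 1 < ∑ i, (ZMod.toCircle (u i) : ℂ).re := by
  have hL' : 5 * (q : ℝ) + 5 ≤ L := by exact_mod_cast hL
  have hL₀ : (0 : ℝ) < L := Nat.cast_pos.2 (NeZero.pos L)
  set θ : ℝ := 2 * Real.pi / L with hθ
  have hre (i : Fin q) : 1 - θ ^ 2 / 2 ≤ (ZMod.toCircle (u i) : ℂ).re := by
    rcases hu i with h | h
    · have hcos := re_toCircle_intCast (L := L) (-1)
      rw [Int.cast_neg, Int.cast_one, Int.cast_neg, Int.cast_one, mul_neg_one, neg_div,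
        Real.cos_neg] at hcos
      rw [h, hcos]
      exact Real.one_sub_sq_div_two_le_cos
    · rw [h]
      simpa using by positivity
  have hsmall : q * (θ ^ 2 / 2) < 1 := by
    have hsq : q * (θ ^ 2 / 2) = (q * 2 * Real.pi ^ 2) / L ^ 2 := by
      rw [hθ]
      field_simp
    have hpi : Real.pi ^ 2 ≤ 10 := by nlinarith [Real.pi_lt_d2, Real.pi_pos]
    rw [hsq, div_lt_one (by positivity)]
    nlinarith [Nat.cast_nonneg (α := ℝ) q]
  have hsum := Finset.card_nsmul_le_sum Finset.univ _ _ fun i _ => hre i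
  rw [Finset.card_univ, Fintype.card_fin, nsmul_eq_mul] at hsum
  linarith

/-- The sign label of `torusVector` at a point of the discrete torus. -/
noncomputable def torusLabel (u : Fin q → ZMod L) : ℕ :=
  signLabel (torusVector fun i => ZMod.toCircle (u i))

lemma torusLabel_le_iff {u : Fin q → ZMod L} :
    torusLabel u ≤ q ↔ (q : ℝ) - 1 < ∑ i, (ZMod.toCircle (u i) : ℂ).re := by
  rw [torusLabel, torusVector, signLabel_snoc_le_self_iff, sub_neg]

theorem isDegreeOneLabelling_torusLabel (hL : 5 * q + 5 ≤ L) :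
    IsDegreeOneLabelling (torusLabel (q := q)) (fun a : ZMod L => 0 ≤ (ZMod.toCircle a : ℂ).im)
      (fun a => 0 < (ZMod.toCircle a : ℂ).re) where
  le_iff {u} hu n := by
    rw [torusLabel_le_iff, ← sub_neg] at hu
    rw [torusLabel, torusVector, signLabel_snoc_le_iff, signLabel_le_iff,
      and_iff_left fun h => absurd h hu.not_ge]
  near_of_le hu := re_pos_of_lt_sum_re (torusLabel_le_iff.1 hu)
  eq_neg_one := eq_neg_one_of_im_toCircle_sign_change (by omega)
  pos_zero := by simp
  not_pos_neg_one := by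
    have h := im_toCircle_intCast_nonneg_iff (L := L) (k := -1) (by omega) (by omega)
    rw [Int.cast_neg, Int.cast_one] at h
    simp [h]
  le_of_mem hu := torusLabel_le_iff.2 (lt_sum_re_toCircle_of_forall_mem hL hu)

end TorusLabel

/-! ### Clusters of finitely supported measures -/

section Clusters

variable {P : Type*}

lemma measureReal_coe_le_card_mul [MeasurableSpace P] {ν : Measure P} {T : Finset P}
    {c : ℝ} (h : ∀ γ ∈ T, ν.real {γ} ≤ c) :
    ν.real (T : Set P) ≤ T.card * c := by
  have hunion : (T : Set P) = ⋃ γ ∈ T, {γ} := by ext; simp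
  rw [hunion, ← nsmul_eq_mul]
  exact (measureReal_biUnion_finset_le _ _).trans (Finset.sum_le_card_nsmul _ _ _ h)

lemma inter_nonempty_of_one_lt_add [MeasurableSpace P] {ν : Measure P} [IsProbabilityMeasure ν]
    {B B' : Set P} (hB' : MeasurableSet B') (h : 1 < ν.real B + ν.real B') : (B ∩ B').Nonempty := by
  by_contra hne
  rw [Set.not_nonempty_iff_eq_empty, ← Set.disjoint_iff_inter_eq_empty] at hne
  rw [← measureReal_union hne hB'] at h
  exact h.not_ge measureReal_le_one

variable [MetricSpace P]

lemma thickening_closedBall_subset (γ : P) (r η : ℝ) :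
    Metric.thickening η (Metric.closedBall γ r) ⊆ Metric.closedBall γ (r + η) := fun z hz => by
  obtain ⟨w, hw, hzw⟩ := Metric.mem_thickening_iff.1 hz
  rw [Metric.mem_closedBall] at hw ⊢
  linarith [dist_triangle z w γ]

variable [MeasurableSpace P] {ν : Measure P} {A T : Finset P} {N : ℕ} {s r m e η : ℝ}

/-- `s`-separated centres `A` of balls of radius `r` that each have mass more than `m` and that
miss at most mass `e`. -/
structure IsCluster (ν : Measure P) (A : Finset P) (s r m e : ℝ) : Prop where
  separated : (A : Set P).Pairwise fun γ γ' => s < dist γ γ'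
  lt_measureReal : ∀ γ ∈ A, m < ν.real (Metric.closedBall γ r)
  le_measureReal_union : 1 - e ≤ ν.real (⋃ γ ∈ A, Metric.closedBall γ r)

/-- If `A` cannot be enlarged by an `r`-distant point of mass more than `t`, then the balls of
radius `r` miss only points of `T` of mass at most `t`. -/
lemma isCluster_of_forall_dist_le [IsProbabilityMeasure ν] {t τ : ℝ} (hr : 0 ≤ r) (ht : 0 ≤ t)
    (hT : T.card ≤ N) (hmass : 1 - τ ≤ ν.real (T : Set P))
    (hsep : (A : Set P).Pairwise fun γ γ' => s < dist γ γ') (hheavy : ∀ γ ∈ A, m < ν.real {γ})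
    (hmax : ∀ γ ∈ T, t < ν.real {γ} → ∃ γ' ∈ A, dist γ γ' ≤ r) :
    IsCluster ν A s r m (τ + N * t) := by
  classical
  refine ⟨hsep, fun γ hγ => (hheavy γ hγ).trans_le (measureReal_mono ?_), ?_⟩
  · exact singleton_subset_iff.2 (Metric.mem_closedBall_self hr)
  · have hsub : (T : Set P) ⊆
        (⋃ γ ∈ A, Metric.closedBall γ r) ∪ (T.filter fun γ => ν.real {γ} ≤ t : Finset P) :=
      fun γ hγ => by
        rcases lt_or_ge t (ν.real {γ}) with hlt | hle
        · obtain ⟨γ', hγ', hd⟩ := hmax γ hγ hlt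
          exact .inl (mem_biUnion hγ' hd)
        · exact .inr (Finset.mem_coe.2 (Finset.mem_filter.2 ⟨hγ, hle⟩))
    have hlight : ν.real (T.filter fun γ => ν.real {γ} ≤ t : Finset P) ≤ N * t :=
      (measureReal_coe_le_card_mul fun γ hγ => (Finset.mem_filter.1 hγ).2).trans <| by
        gcongr
        exact (Finset.card_filter_le _ _).trans hT
    linarith [(measureReal_mono (μ := ν) hsub).trans (measureReal_union_le _ _)]

/-- Along decreasing scales `r` and masses `t`, take the last index `k` for which `T` has `k + 1`
points of mass more than `t k` at mutual distance more than `r k`. -/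
theorem exists_isCluster [IsProbabilityMeasure ν] {r t : ℕ → ℝ} {τ : ℝ} (hr : ∀ k, 0 < r k)
    (hrr : Antitone r) (ht : ∀ k, 0 < t k) (htt : Antitone t) (hτ : τ + N * t 0 < 1)
    (hT : T.card ≤ N) (hmass : 1 - τ ≤ ν.real (T : Set P)) :
    ∃ k < N, ∃ A ⊆ T, A.card = k + 1 ∧
      IsCluster ν A (r k) (r (k + 1)) (t k) (τ + N * t (k + 1)) := by
  classical
  let heavy : ℕ → Prop := fun k => ∃ A ⊆ T, A.card = k + 1 ∧
    ((A : Set P).Pairwise fun γ γ' => r k < dist γ γ') ∧ ∀ γ ∈ A, t k < ν.real {γ}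
  have hzero : heavy 0 := by
    by_contra hno
    have hlight : ∀ γ ∈ T, ν.real {γ} ≤ t 0 := fun γ hγ => by
      by_contra! hlt
      exact hno ⟨{γ}, by simpa using hγ, by simp, by simp, by simpa using hlt⟩
    have hle : (T.card : ℝ) * t 0 ≤ N * t 0 := by
      gcongr
      exact (ht 0).le
    linarith [measureReal_coe_le_card_mul hlight]
  have hN : ¬heavy N := fun ⟨A, hAT, hcard, _⟩ => by
    have := Finset.card_le_card hAT
    omega
  obtain ⟨k, hkN, ⟨A, hAT, hcard, hsep, hheavy⟩, hsucc⟩ :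
      ∃ k < N, heavy k ∧ ¬heavy (k + 1) := by
    by_contra! hall
    have hheavy : ∀ k ≤ N, heavy k := fun k => by
      induction k with
      | zero => exact fun _ => hzero
      | succ k ih => exact fun hk => hall k hk (ih (Nat.le_of_succ_le hk))
    exact hN (hheavy N le_rfl)
  refine ⟨k, hkN, A, hAT, hcard, isCluster_of_forall_dist_le (hr _).le (ht _).le hT hmass hsep
    hheavy fun γ hγ hlt => ?_⟩
  by_contra! hfar
  have hγA : γ ∉ A := fun hmem => ((dist_self γ).symm ▸ hfar γ hmem).not_ge (hr _).le
  refine hsucc ⟨insert γ A, Finset.insert_subset hγ hAT,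
    by rw [Finset.card_insert_of_notMem hγA, hcard], ?_, ?_⟩
  · rw [Finset.coe_insert, Set.pairwise_insert]
    exact ⟨hsep.imp fun _ _ h => (hrr k.le_succ).trans_lt h,
      fun γ' hγ' _ => ⟨hfar γ' hγ', dist_comm γ γ' ▸ hfar γ' hγ'⟩⟩
  · exact (Finset.forall_mem_insert _ _ _).2
      ⟨hlt, fun γ' hγ' => (htt k.le_succ).trans_lt (hheavy γ' hγ')⟩

variable [BorelSpace P]

lemma measureReal_le_of_dist_lt {μ ν : LevyProkhorov (ProbabilityMeasure P)} {η : ℝ}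
    (h : dist μ ν < η) {B : Set P} (hB : MeasurableSet B) :
    (μ.toMeasure : Measure P).real B ≤
      (ν.toMeasure : Measure P).real (Metric.thickening η B) + η := by
  have hη : 0 < η := dist_nonneg.trans_lt h
  have hle := left_measure_le_of_levyProkhorovEDist_lt (edist_lt_ofReal.2 h) hB
  rw [ENNReal.toReal_ofReal hη.le] at hle
  have hreal := ENNReal.toReal_mono (by finiteness) hle
  rwa [ENNReal.toReal_add (by finiteness) (by finiteness), ENNReal.toReal_ofReal hη.le] at hreal

lemma IsCluster.exists_of_dist_lt {μ μ' : LevyProkhorov (ProbabilityMeasure P)}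
    (h : IsCluster (μ.toMeasure : Measure P) A s r m e) (hs : 4 * r ≤ s)
    (hη : η ≤ r) (hd : dist μ μ' < η)
    (hT : 1 - (m - η) ≤ (μ'.toMeasure : Measure P).real (T : Set P)) :
    ∃ A' ⊆ T, A'.card = A.card ∧
      IsCluster (μ'.toMeasure : Measure P) A' (s - 4 * r) (4 * r) (m - η) (e + η) := by
  classical
  have hball : ∀ γ ∈ A, m - η < (μ'.toMeasure : Measure P).real (Metric.closedBall γ (2 * r)) :=
    fun γ hγ => by
      have hle := measureReal_le_of_dist_lt hd (B := Metric.closedBall γ r) measurableSet_closedBall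
      have hmono := measureReal_mono (μ := (μ'.toMeasure : Measure P))
        ((thickening_closedBall_subset γ r η).trans
          (Metric.closedBall_subset_closedBall (show r + η ≤ 2 * r by linarith)))
      linarith [h.lt_measureReal γ hγ]
  have hnear : ∀ γ ∈ A, ∃ γ' ∈ T, dist γ' γ ≤ 2 * r := fun γ hγ => by
    obtain ⟨γ', hγ', hd'⟩ := inter_nonempty_of_one_lt_add (B := (T : Set P))
      measurableSet_closedBall (by linarith [hball γ hγ])
    exact ⟨γ', hγ', hd'⟩
  choose! c hcT hcd using hnear
  have hsep : ∀ γ ∈ A, ∀ γ' ∈ A, γ ≠ γ' → s - 4 * r < dist (c γ) (c γ') := fun γ hγ γ' hγ' hne => by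
    have htri := dist_triangle4 γ (c γ) (c γ') γ'
    rw [dist_comm γ (c γ)] at htri
    linarith [h.separated hγ hγ' hne, hcd γ hγ, hcd γ' hγ']
  have hinj : Set.InjOn c A := fun γ hγ γ' hγ' heq => by
    by_contra hne
    have hlt := hsep γ hγ γ' hγ' hne
    rw [heq, dist_self] at hlt
    linarith
  have hsub : ∀ γ ∈ A, Metric.closedBall γ (2 * r) ⊆ Metric.closedBall (c γ) (4 * r) :=
    fun γ hγ => Metric.closedBall_subset_closedBall' (by
      rw [dist_comm]
      linarith [hcd γ hγ])
  refine ⟨A.image c, Finset.image_subset_iff.2 hcT, Finset.card_image_of_injOn hinj, ?_, ?_, ?_⟩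
  · rw [Finset.coe_image]
    rintro _ ⟨γ, hγ, rfl⟩ _ ⟨γ', hγ', rfl⟩ hne
    exact hsep γ hγ γ' hγ' fun heq => hne (congrArg c heq)
  · exact Finset.forall_mem_image.2 fun γ hγ => (hball γ hγ).trans_le (measureReal_mono (hsub γ hγ))
  · have hle := measureReal_le_of_dist_lt hd
      (Finset.measurableSet_biUnion A fun γ _ => measurableSet_closedBall (x := γ) (ε := r))
    have hmono : (μ'.toMeasure : Measure P).real
        (Metric.thickening η (⋃ γ ∈ A, Metric.closedBall γ r)) ≤
        (μ'.toMeasure : Measure P).real (⋃ γ ∈ A.image c, Metric.closedBall γ (4 * r)) := by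
      refine measureReal_mono ?_ (measure_ne_top _ _)
      simp only [Metric.thickening_iUnion, Finset.set_biUnion_finset_image]
      exact iUnion₂_mono fun γ hγ => (thickening_closedBall_subset γ r η).trans
        ((Metric.closedBall_subset_closedBall (by linarith)).trans (hsub γ hγ))
    linarith [h.le_measureReal_union]

lemma IsCluster.exists_dist_lt {μ μ' : LevyProkhorov (ProbabilityMeasure P)} {A' : Finset P}
    (h : IsCluster (μ.toMeasure : Measure P) A s r m e)
    (h' : IsCluster (μ'.toMeasure : Measure P) A' s r m e) (hd : dist μ μ' < η)
    (hm : e + η ≤ m) {γ : P} (hγ : γ ∈ A) : ∃ γ' ∈ A', dist γ γ' ≤ 2 * r + η := by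
  have hle := measureReal_le_of_dist_lt hd (B := Metric.closedBall γ r) measurableSet_closedBall
  have hmono := measureReal_mono (μ := (μ'.toMeasure : Measure P))
    (thickening_closedBall_subset γ r η)
  obtain ⟨z, hz, hz'⟩ := inter_nonempty_of_one_lt_add (ν := (μ'.toMeasure : Measure P))
    (B := Metric.closedBall γ (r + η))
    (Finset.measurableSet_biUnion A' fun γ _ => measurableSet_closedBall (x := γ) (ε := r))
    (by linarith [h.lt_measureReal γ hγ, h'.le_measureReal_union])
  simp only [mem_iUnion] at hz'
  obtain ⟨γ', hγ', hz'⟩ := hz'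
  rw [Metric.mem_closedBall] at hz hz'
  exact ⟨γ', hγ', by linarith [dist_triangle_left γ γ' z]⟩

end Clusters

/-! ### Matched families of clusters -/

section UniformMass

variable {P : Type*} [MetricSpace P] [MeasurableSpace P] {M : Type*} {N : ℕ} {F : M → Set P}

/-- Every `μ x` is carried by at most `N` points of `F x`. -/
def IsCarriedBy (μ : M → LevyProkhorov (ProbabilityMeasure P)) (F : M → Set P) (N : ℕ) : Prop :=
  ∀ x, ∃ S : Finset P, S.card ≤ N ∧ (S : Set P) ⊆ F x ∧ (μ x).toMeasure (S : Set P) = 1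

variable [BorelSpace P]

lemma exists_subset_one_sub_le {μ ν : LevyProkhorov (ProbabilityMeasure P)} {η : ℝ}
    (hd : dist μ ν < η) {S S' : Finset P} (hS : μ.toMeasure (S : Set P) = 1)
    (hS' : ν.toMeasure (S' : Set P) = 1) {G : Set P}
    (hG : Metric.thickening η (S : Set P) ⊆ G) :
    ∃ T ⊆ S', (T : Set P) ⊆ G ∧ 1 - η ≤ (ν.toMeasure : Measure P).real (T : Set P) := by
  classical
  refine ⟨S'.filter (· ∈ G), Finset.filter_subset _ _, fun γ hγ => (Finset.mem_filter.1 hγ).2, ?_⟩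
  have hle := measureReal_le_of_dist_lt hd S.measurableSet
  have hone : (μ.toMeasure : Measure P).real (S : Set P) = 1 := by
    rw [ProbabilityMeasure.measureReal_eq_coe_coeFn, hS, NNReal.coe_one]
  have hcompl : (ν.toMeasure : Measure P).real (S' : Set P)ᶜ = 0 := by
    rw [probReal_compl_eq_one_sub S'.measurableSet, ProbabilityMeasure.measureReal_eq_coe_coeFn,
      hS', NNReal.coe_one, sub_self]
  have hsub : Metric.thickening η (S : Set P) ⊆ (S'.filter (· ∈ G) : Finset P) ∪ (S' : Set P)ᶜ :=
    fun γ hγ => by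
      by_cases hmem : γ ∈ S'
      · exact .inl (Finset.mem_filter.2 ⟨hmem, hG hγ⟩)
      · exact .inr hmem
  linarith [(measureReal_mono (μ := (ν.toMeasure : Measure P)) hsub).trans
    (measureReal_union_le _ _)]

theorem IsCarriedBy.exists_uniform_mass [TopologicalSpace M] [CompactSpace M]
    {μ : M → LevyProkhorov (ProbabilityMeasure P)} (hcar : IsCarriedBy μ F N) (hμ : Continuous μ)
    {G : ℕ → Set P} (hG : Monotone G)
    (hthick : ∀ n, ∃ η > 0, Metric.thickening η (G n) ⊆ G (n + 1)) (hFG : ∀ x, F x ⊆ ⋃ n, G n)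
    {τ : ℝ} (hτ : 0 < τ) :
    ∃ n, ∀ x, ∃ T : Finset P, T.card ≤ N ∧ (T : Set P) ⊆ F x ∩ G n ∧
      1 - τ ≤ ((μ x).toMeasure : Measure P).real (T : Set P) := by
  set W : ℕ → Set M := fun n => {x | ∃ T : Finset P, T.card ≤ N ∧ (T : Set P) ⊆ F x ∩ G n ∧
    1 - τ ≤ ((μ x).toMeasure : Measure P).real (T : Set P)}
  have hW : Monotone W := fun n n' hn x ⟨T, hcard, hT, hmass⟩ =>
    ⟨T, hcard, hT.trans (inter_subset_inter_right _ (hG hn)), hmass⟩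
  have hlocal : ∀ x, ∃ n, x ∈ interior (W n) := fun x => by
    obtain ⟨S, -, hSF, hS⟩ := hcar x
    obtain ⟨n, hn⟩ : ∃ n, (S : Set P) ⊆ G n :=
      hG.directed_le.exists_mem_subset_of_finset_subset_biUnion (hSF.trans (hFG x))
    obtain ⟨η, hη, hηG⟩ := hthick n
    refine ⟨n + 1, mem_interior_iff_mem_nhds.2 ?_⟩
    filter_upwards [(hμ.tendsto x).eventually (Metric.ball_mem_nhds (μ x) (lt_min hη hτ))]
      with y hy
    obtain ⟨S', hcard, hSF', hS'⟩ := hcar y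
    obtain ⟨T, hTS, hTG, hmass⟩ := exists_subset_one_sub_le (Metric.mem_ball_comm.1 hy) hS hS'
      ((Metric.thickening_mono (min_le_left η τ) _).trans
        ((Metric.thickening_subset_of_subset η hn).trans hηG))
    exact ⟨T, (Finset.card_le_card hTS).trans hcard, subset_inter
      ((Finset.coe_subset.2 hTS).trans hSF') hTG, by linarith [min_le_right η τ]⟩
  obtain ⟨n, hn⟩ := isCompact_univ.elim_directed_cover (fun n => interior (W n))
    (fun _ => isOpen_interior) (fun x _ => mem_iUnion.2 (hlocal x))
    (Monotone.directed_le fun n n' h => interior_mono (hW h))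
  exact ⟨n, fun x => interior_subset (s := W n) (hn (mem_univ x))⟩

end UniformMass

section Matched

variable {P M : Type*} [MetricSpace P]

/-- Finite sets `A y`, for `y ∈ U`, all of the same size, whose points are far apart and that are
pairwise matched by moving points a distance of at most `ρ`. -/
structure IsMatchedFamily (A : M → Finset P) (U : Set M) (ρ : ℝ) : Prop where
  card_eq : ∀ y ∈ U, ∀ y' ∈ U, (A y).card = (A y').card
  separated : ∀ y ∈ U, (A y : Set P).Pairwise fun γ γ' => 4 * ρ < dist γ γ'
  exists_dist_le : ∀ y ∈ U, ∀ y' ∈ U, ∀ γ ∈ A y, ∃ γ' ∈ A y', dist γ γ' ≤ ρ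

open Classical in
/-- A point of `A` within `ρ` of `γ`, or `γ` itself if there is none. -/
noncomputable def nearPoint (ρ : ℝ) (A : Finset P) (γ : P) : P :=
  if h : ∃ γ' ∈ A, dist γ γ' ≤ ρ then h.choose else γ

lemma nearPoint_spec {ρ : ℝ} {A : Finset P} {γ : P} (h : ∃ γ' ∈ A, dist γ γ' ≤ ρ) :
    nearPoint ρ A γ ∈ A ∧ dist γ (nearPoint ρ A γ) ≤ ρ := by
  rw [nearPoint, dif_pos h]
  exact h.choose_spec

namespace IsMatchedFamily

variable {A : M → Finset P} {U : Set M} {ρ : ℝ} {y y' y'' : M} {γ : P}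

lemma nearPoint_mem (h : IsMatchedFamily A U ρ) (hy : y ∈ U) (hy' : y' ∈ U) (hγ : γ ∈ A y) :
    nearPoint ρ (A y') γ ∈ A y' :=
  (nearPoint_spec (h.exists_dist_le y hy y' hy' γ hγ)).1

lemma dist_nearPoint_le (h : IsMatchedFamily A U ρ) (hy : y ∈ U) (hy' : y' ∈ U) (hγ : γ ∈ A y) :
    dist γ (nearPoint ρ (A y') γ) ≤ ρ :=
  (nearPoint_spec (h.exists_dist_le y hy y' hy' γ hγ)).2

lemma nearPoint_nearPoint (h : IsMatchedFamily A U ρ) (hy : y ∈ U) (hy' : y' ∈ U) (hy'' : y'' ∈ U)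
    (hγ : γ ∈ A y) :
    nearPoint ρ (A y'') (nearPoint ρ (A y') γ) = nearPoint ρ (A y'') γ := by
  have hγ' := h.nearPoint_mem hy hy' hγ
  by_contra hne
  have hlt := h.separated y'' hy'' (h.nearPoint_mem hy' hy'' hγ') (h.nearPoint_mem hy hy'' hγ) hne
  have hd := h.dist_nearPoint_le hy hy' hγ
  have htri := dist_triangle_left (nearPoint ρ (A y'') (nearPoint ρ (A y') γ))
    (nearPoint ρ (A y'') γ) (nearPoint ρ (A y') γ)
  have htri' := dist_triangle_left (nearPoint ρ (A y') γ) (nearPoint ρ (A y'') γ) γ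
  linarith [h.dist_nearPoint_le hy' hy'' hγ', h.dist_nearPoint_le hy hy'' hγ,
    dist_nonneg.trans hd]

lemma injOn_nearPoint (h : IsMatchedFamily A U ρ) (hy : y ∈ U) (hy' : y' ∈ U) :
    Set.InjOn (nearPoint ρ (A y')) (A y) := fun γ hγ γ' hγ' heq => by
  by_contra hne
  have hd := h.dist_nearPoint_le hy hy' hγ
  have hd' := h.dist_nearPoint_le hy hy' hγ'
  rw [← heq] at hd'
  linarith [h.separated y hy hγ hγ' hne, dist_triangle_right γ γ' (nearPoint ρ (A y') γ),
    dist_nonneg.trans hd]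

lemma sum_nearPoint (h : IsMatchedFamily A U ρ) (hy : y ∈ U) (hy' : y' ∈ U) {R : Type*}
    [AddCommMonoid R] (f : P → R) :
    ∑ γ ∈ A y, f (nearPoint ρ (A y') γ) = ∑ γ ∈ A y', f γ := by
  classical
  have himage : (A y).image (nearPoint ρ (A y')) = A y' :=
    Finset.eq_of_subset_of_card_le
      (Finset.image_subset_iff.2 fun _ hγ => h.nearPoint_mem hy hy' hγ)
      ((h.card_eq y' hy' y hy).trans_le
        (Finset.card_image_of_injOn (h.injOn_nearPoint hy hy')).ge)
  rw [← Finset.sum_image (h.injOn_nearPoint hy hy'), himage]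

end IsMatchedFamily

end Matched

section Existence

variable {P : Type*} [MetricSpace P] [MeasurableSpace P] [BorelSpace P] {M : Type*}
  [PseudoMetricSpace M] {N : ℕ} {F : M → Set P} {G : Set P}
  {μ : M → LevyProkhorov (ProbabilityMeasure P)}

lemma exists_isMatchedFamily_of_scales {r t : ℕ → ℝ} {τ η δ : ℝ} (hr : ∀ k, 0 < r k)
    (hrr : ∀ k, 40 * r (k + 1) ≤ r k) (ht : ∀ k, 0 < t k) (htt : Antitone t)
    (hτ : τ + N * t 0 < 1) (hη : 0 < η) (hηr : ∀ k < N, η ≤ r (k + 1))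
    (hηt : ∀ k < N, τ + N * t (k + 1) + 3 * η ≤ t k)
    (hμ : ∀ x y, dist x y < 2 * δ → dist (μ x) (μ y) < η)
    (hT : ∀ x, ∃ T : Finset P, T.card ≤ N ∧ (T : Set P) ⊆ F x ∩ G ∧
      1 - τ ≤ ((μ x).toMeasure : Measure P).real (T : Set P)) :
    ∃ A : Fin N → M → Finset P, ∀ x, ∃ k,
      IsMatchedFamily (A k) (Metric.ball x δ) (9 * r (k + 1)) ∧
      ∀ y ∈ Metric.ball x δ, (A k y).card = k + 1 ∧ (A k y : Set P) ⊆ F y ∩ G := by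
  classical
  let IsGood : ℕ → M → Finset P → Prop := fun k y A => A.card = k + 1 ∧ (A : Set P) ⊆ F y ∩ G ∧
    IsCluster ((μ y).toMeasure : Measure P) A (36 * r (k + 1)) (4 * r (k + 1)) (t k - η)
      (τ + N * t (k + 1) + η)
  let A : ℕ → M → Finset P := fun k y => if h : ∃ A, IsGood k y A then h.choose else ∅
  refine ⟨fun k => A k, fun x => ?_⟩
  obtain ⟨T, hTN, -, hmass⟩ := hT x
  obtain ⟨k, hkN, A₀, -, hcard₀, hA₀⟩ := exists_isCluster hr
    (antitone_nat_of_succ_le fun k => by linarith [hr (k + 1), hrr k]) ht htt hτ hTN hmass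
  have hgood : ∀ y ∈ Metric.ball x δ, IsGood k y (A k y) := fun y hy => by
    obtain ⟨T', -, hT', hmass'⟩ := hT y
    have hδ : 0 < δ := dist_nonneg.trans_lt hy
    have hNt : 0 ≤ N * t (k + 1) := mul_nonneg N.cast_nonneg (ht _).le
    obtain ⟨A', hA'T, hcard, hA'⟩ := hA₀.exists_of_dist_lt (by linarith [hrr k, hr (k + 1)])
      (hηr k hkN) (hμ x y (by linarith [Metric.mem_ball'.1 hy])) (T := T') (by linarith [hηt k hkN])
    have hex : ∃ A, IsGood k y A := ⟨A', hcard.trans hcard₀, (Finset.coe_subset.2 hA'T).trans hT',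
      fun γ hγ γ' hγ' hne => lt_of_le_of_lt (by linarith [hrr k]) (hA'.separated hγ hγ' hne),
      hA'.lt_measureReal, hA'.le_measureReal_union⟩
    simp only [A, dif_pos hex]
    exact hex.choose_spec
  refine ⟨⟨k, hkN⟩, ⟨fun y hy y' hy' => ?_, fun y hy => ?_, fun y hy y' hy' γ hγ => ?_⟩,
    fun y hy => ⟨(hgood y hy).1, (hgood y hy).2.1⟩⟩
  · rw [(hgood y hy).1, (hgood y' hy').1]
  · exact (hgood y hy).2.2.separated.imp fun γ γ' h => by linarith
  · obtain ⟨γ', hγ', hd⟩ := (hgood y hy).2.2.exists_dist_lt (hgood y' hy').2.2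
      (hμ y y' (by
        linarith [dist_triangle_right y y' x, Metric.mem_ball.1 hy, Metric.mem_ball.1 hy']))
      (by linarith [hηt k hkN]) hγ
    exact ⟨γ', hγ', hd.trans (by linarith [hηr k hkN])⟩

theorem IsCarriedBy.exists_isMatchedFamily [CompactSpace M] (hcar : IsCarriedBy μ F N)
    (hμ : Continuous μ) {G : ℕ → Set P} (hG : Monotone G)
    (hthick : ∀ n, ∃ η > 0, Metric.thickening η (G n) ⊆ G (n + 1)) (hFG : ∀ x, F x ⊆ ⋃ n, G n)
    {R : ℕ → ℝ} (hR : ∀ n, 0 < R n) :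
    ∃ n, ∃ δ > 0, ∃ A : Fin N → M → Finset P, ∃ ρ : Fin N → ℝ, (∀ k, ρ k ≤ R n) ∧
      ∀ x, ∃ k, IsMatchedFamily (A k) (Metric.ball x δ) (ρ k) ∧
        ∀ y ∈ Metric.ball x δ, (A k y).card = k + 1 ∧ (A k y : Set P) ⊆ F y ∩ G n := by
  set t : ℕ → ℝ := fun k => ((8 * (N + 1 : ℝ)) ^ (k + 1))⁻¹ with ht
  have ht0 : ∀ k, 0 < t k := fun k => by positivity
  have hNt : ∀ k, N * t (k + 1) ≤ t k / 8 := fun k => by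
    have hsucc : (N + 1) * t (k + 1) = t k / 8 := by
      simp only [ht, pow_succ _ (k + 1)]
      field_simp
    linarith [ht0 (k + 1)]
  have htt : Antitone t := fun k l h =>
    inv_anti₀ (by positivity) <|
      pow_le_pow_right₀ (by linarith [N.cast_nonneg (α := ℝ)]) (by omega)
  have htzero : (N + 1) * t 0 = 1 / 8 := by
    simp only [ht, zero_add, pow_one]
    field_simp
  obtain ⟨n, hn⟩ := hcar.exists_uniform_mass hμ hG hthick hFG
    (div_pos (ht0 N) (by norm_num : (0 : ℝ) < 8))
  set r : ℕ → ℝ := fun k => R n / 40 ^ k with hr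
  have hr0 : ∀ k, 0 < r k := fun k => div_pos (hR n) (by positivity)
  have hrr : ∀ k, 40 * r (k + 1) = r k := fun k => by
    simp only [hr, pow_succ]
    field_simp
  have hra : Antitone r := antitone_nat_of_succ_le fun k => by linarith [hr0 (k + 1), hrr k]
  obtain ⟨δ, hδ, hδμ⟩ := Metric.uniformContinuous_iff.1
    (CompactSpace.uniformContinuous_of_continuous hμ) (min (r N) (t N / 8))
    (lt_min (hr0 N) (div_pos (ht0 N) (by norm_num)))
  have hηr : min (r N) (t N / 8) ≤ r N := min_le_left _ _
  have hηt : min (r N) (t N / 8) ≤ t N / 8 := min_le_right _ _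
  obtain ⟨A, hA⟩ := exists_isMatchedFamily_of_scales hr0 (fun k => (hrr k).le) ht0 htt
    (τ := t N / 8) (δ := δ / 2) (by linarith [ht0 0, htt N.zero_le])
    (lt_min (hr0 N) (div_pos (ht0 N) (by norm_num)))
    (fun k hk => hηr.trans (hra hk)) (fun k hk => by linarith [hNt k, htt hk.le, ht0 k])
    (fun x y h => hδμ (by linarith)) hn
  refine ⟨n, δ / 2, half_pos hδ, A, _, fun k => ?_, hA⟩
  linarith [hrr k, hra (Nat.zero_le k), hr0 (k + 1), show r 0 = R n by simp [hr]]

end Existence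

/-! ### Averaged homotopies -/

section Averaging

variable {M P R : Type*} [MetricSpace P] [CommRing R] {p : ℕ}

/-- The transfer of a cochain `B` from `P` to `M` along the multivalued map `A`: the sum of `B` over
all lifts of a simplex whose vertices are matched up to `ρ`. -/
noncomputable def clusterSum (A : M → Finset P) (ρ : ℝ) (B : (ℕ → P) → R) (ξ : ℕ → M) : R :=
  ∑ γ ∈ A (ξ 0), B fun n => nearPoint ρ (A (ξ n)) γ

lemma IsCochain.clusterSum {B : (ℕ → P) → R} (hB : IsCochain p B) (A : M → Finset P) (ρ : ℝ) :
    IsCochain p (clusterSum A ρ B) := by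
  intro ξ ξ' h
  simp only [FadellNeuwirth.clusterSum, h 0 p.zero_le]
  refine Finset.sum_congr rfl fun γ _ => hB fun n hn => ?_
  simp only [h n hn]

theorem IsMatchedFamily.coboundary_clusterSum {A : M → Finset P} {U : Set M} {ρ : ℝ}
    (h : IsMatchedFamily A U ρ) (p : ℕ) (B : (ℕ → P) → R) {ξ : ℕ → M} (hξ : ∀ n, ξ n ∈ U) :
    coboundary p (clusterSum A ρ B) ξ = clusterSum A ρ (coboundary p B) ξ := by
  simp only [coboundary_apply, clusterSum]
  rw [Finset.sum_comm]
  refine Finset.sum_congr rfl fun i _ => ?_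
  have hface : face i ξ 0 ∈ U := hξ _
  rw [← h.sum_nearPoint (hξ 0) hface, Finset.mul_sum]
  refine Finset.sum_congr rfl fun γ hγ => ?_
  simp only [face, h.nearPoint_nearPoint (hξ _) (hξ _) (hξ _) hγ]
  rfl

end Averaging

section IteratedPrism

variable {Y R : Type*} [CommRing R] {q T : ℕ} {w : (ℕ → Y) → R}

/-- The sum of the prism operators over `T` consecutive time steps; here `Γ n` is the path of the
`n`-th vertex in discrete time. -/
def iteratedPrism (q T : ℕ) (w : (ℕ → Y) → R) (Γ : ℕ → ℕ → Y) : R :=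
  ∑ t ∈ Finset.range T, prism q w fun n => (Γ n t, Γ n (t + 1))

lemma IsCochain.iteratedPrism (hw : IsCochain (q + 1) w) :
    IsCochain q (iteratedPrism q T w) := by
  intro Γ Γ' h
  refine Finset.sum_congr rfl fun t _ => hw.prism fun n hn => ?_
  simp only [h n hn]

lemma coboundary_iteratedPrism (hw : IsCochain (q + 1) w) {Γ : ℕ → ℕ → Y}
    (hcl : ∀ t < T, ∀ i,
      coboundary (q + 1) w (splice i fun n => (Γ n t, Γ n (t + 1))) = 0) :
    coboundary q (iteratedPrism q T w) Γ = w (fun n => Γ n T) - w fun n => Γ n 0 := by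
  have hsum : coboundary q (iteratedPrism q T w) Γ =
      ∑ t ∈ Finset.range T, coboundary q (prism q w) fun n => (Γ n t, Γ n (t + 1)) := by
    simp only [coboundary_apply, iteratedPrism, Finset.mul_sum]
    exact Finset.sum_comm
  rw [hsum, ← Finset.sum_range_sub fun t => w fun n => Γ n t]
  exact Finset.sum_congr rfl fun t ht => coboundary_prism hw _ (hcl t (Finset.mem_range.1 ht))

end IteratedPrism

section Robust

variable {E : Type*} [NormedAddCommGroup E] {ε ε' : ℝ} {f g : C(I, E)}

/-- A quantitative form of the nowhere vanishing of a path: on time intervals of length `ε` its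
oscillation, even enlarged by `ε`, is smaller than its norm. -/
def IsRobust (ε : ℝ) (f : C(I, E)) : Prop :=
  ∀ s t, dist s t ≤ ε → dist (f s) (f t) + ε < ‖f s‖

lemma IsRobust.of_dist_lt (hf : IsRobust ε f) (h : ε' + 3 * dist f g ≤ ε) : IsRobust ε' g := by
  intro s t hst
  have hrob := hf s t (by linarith [dist_nonneg (x := f) (y := g)])
  have hs := ContinuousMap.dist_apply_le_dist (f := f) (g := g) s
  have ht := ContinuousMap.dist_apply_le_dist (f := f) (g := g) t
  have hnorm : ‖f s‖ ≤ ‖g s‖ + dist (f s) (g s) := by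
    rw [dist_eq_norm]
    exact norm_le_norm_add_norm_sub' _ _
  have hosc := dist_triangle4_left (f s) (f t) (g s) (g t)
  linarith

lemma exists_isRobust (hf : ∀ t, f t ≠ 0) : ∃ ε > 0, IsRobust ε f := by
  obtain ⟨t₀, -, ht₀⟩ := isCompact_univ.exists_isMinOn univ_nonempty f.continuous.norm.continuousOn
  have hpos : 0 < ‖f t₀‖ / 2 := half_pos (norm_pos_iff.2 (hf t₀))
  obtain ⟨δ, hδ, h⟩ := Metric.uniformContinuous_iff.1
    (CompactSpace.uniformContinuous_of_continuous f.continuous) _ hpos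
  refine ⟨min (δ / 2) (‖f t₀‖ / 2), lt_min (half_pos hδ) hpos, fun s t hst => ?_⟩
  have hosc := h (hst.trans_lt ((min_le_left _ _).trans_lt (half_lt_self hδ)))
  have hmin : ‖f t₀‖ ≤ ‖f s‖ := ht₀ (mem_univ s)
  linarith [min_le_right (δ / 2) (‖f t₀‖ / 2)]

end Robust

section Homotopy

variable {R : Type*} [CommRing R] {q T : ℕ} {ε : ℝ}

/-- The point `t / T` of the unit interval. -/
noncomputable def timeGrid (T t : ℕ) : I := projIcc 0 1 zero_le_one (t / T)

@[simp] lemma timeGrid_zero (T : ℕ) : timeGrid T 0 = 0 := by simp [timeGrid]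

lemma timeGrid_self (hT : T ≠ 0) : timeGrid T T = 1 := by
  simp [timeGrid, div_self (Nat.cast_ne_zero (R := ℝ).2 hT)]

lemma dist_timeGrid_succ_le (T t : ℕ) : dist (timeGrid T t) (timeGrid T (t + 1)) ≤ (T : ℝ)⁻¹ := by
  have hproj : dist (timeGrid T t) (timeGrid T (t + 1)) ≤ dist (t / T : ℝ) ((t + 1 : ℕ) / T) := by
    simpa [timeGrid] using (LipschitzWith.projIcc (zero_le_one' ℝ)).dist_le_mul
      (t / T : ℝ) ((t + 1 : ℕ) / T)
  refine hproj.trans_eq ?_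
  rw [dist_comm, Real.dist_eq, ← sub_div, Nat.cast_succ, add_sub_cancel_left, abs_of_nonneg
    (by positivity), one_div]

/-- The chain homotopy induced by paths of nonzero vectors, subdivided into `T` time steps. -/
noncomputable def homotopyCochain (q T : ℕ) (f : ℕ → C(I, Fin (q + 2) → ℝ)) : R :=
  iteratedPrism q T (sphereCochain (q + 1)) fun n t => f n (timeGrid T t)

lemma isCochain_homotopyCochain :
    IsCochain q (homotopyCochain q T : (ℕ → C(I, Fin (q + 2) → ℝ)) → R) := fun _ _ h =>
  isCochain_sphereCochain.iteratedPrism fun n hn => by rw [h n hn]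

lemma IsRobust.coboundary_splice_eq_zero [IsDomain R] {g : C(I, Fin (q + 1) → ℝ)}
    (hg : IsRobust ε g) {f : ℕ → C(I, Fin (q + 1) → ℝ)} (hf : ∀ n, dist (f n) g ≤ ε / 3) {s t : I}
    (hst : dist s t ≤ ε) (i : ℕ) :
    coboundary q (sphereCochain q : (ℕ → Fin (q + 1) → ℝ) → R)
      (splice i fun n => (f n s, f n t)) = 0 := by
  set v := splice i fun n => (f n s, f n t) with hv
  have hnear (n : ℕ) (u : I) : dist (f n u) (g u) ≤ ε / 3 :=
    (ContinuousMap.dist_apply_le_dist u).trans (hf n)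
  have hv_near : ∀ n, dist (v n) (g s) ≤ ε / 3 ∨ dist (v n) (g t) ≤ ε / 3 := fun n => by
    by_cases hn : n ≤ i
    · exact .inl (by simpa only [hv, splice, if_pos hn] using hnear n s)
    · exact .inr (by simpa only [hv, splice, if_neg hn] using hnear (n - 1) t)
  refine coboundary_sphereCochain_eq_zero (ε := 2 * (ε / 3) + dist (g s) (g t))
    (fun n m => ?_) ⟨0, ?_⟩
  · have hst₀ : 0 ≤ dist (g s) (g t) := dist_nonneg
    rcases hv_near n with hn | hn <;> rcases hv_near m with hm | hm
    · linarith [dist_triangle_right (v n) (v m) (g s)]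
    · linarith [dist_triangle4_right (v n) (v m) (g s) (g t)]
    · linarith [dist_triangle4_right (v n) (v m) (g t) (g s), dist_comm (g s) (g t)]
    · linarith [dist_triangle_right (v n) (v m) (g t)]
  · have hv0 : v 0 = f 0 s := if_pos i.zero_le
    have hnorm := norm_le_norm_add_norm_sub' (g s) (f 0 s)
    rw [← dist_eq_norm, dist_comm] at hnorm
    rw [hv0]
    linarith [hg s t hst, hnear 0 s, (dist_nonneg (x := f 0) (y := g)).trans (hf 0)]

theorem IsRobust.coboundary_homotopyCochain [IsDomain R] {g : C(I, Fin (q + 2) → ℝ)}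
    (hg : IsRobust ε g) (hT : T ≠ 0) (hTε : (T : ℝ)⁻¹ ≤ ε) {f : ℕ → C(I, Fin (q + 2) → ℝ)}
    (hf : ∀ n, dist (f n) g ≤ ε / 3) :
    coboundary q (homotopyCochain q T : (ℕ → C(I, Fin (q + 2) → ℝ)) → R) f =
      sphereCochain (q + 1) (fun n => f n 1) - sphereCochain (q + 1) fun n => f n 0 := by
  have hclosed : ∀ t < T, ∀ i, coboundary (q + 1) (sphereCochain (q + 1) : _ → R)
      (splice i fun n => (f n (timeGrid T t), f n (timeGrid T (t + 1)))) = 0 := fun t _ i =>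
    hg.coboundary_splice_eq_zero hf ((dist_timeGrid_succ_le T t).trans hTε) i
  have hcob := coboundary_iteratedPrism (Γ := fun n t => f n (timeGrid T t))
    isCochain_sphereCochain hclosed
  simp only [timeGrid_zero, timeGrid_self hT] at hcob
  rw [← hcob]
  exact coboundary_comp q (iteratedPrism q T (sphereCochain (q + 1)))
    (fun (g : C(I, Fin (q + 2) → ℝ)) t => g (timeGrid T t)) f

end Homotopy

/-! ### The vanishing theorem -/

section RobustSet

variable {P E ι : Type*} [NormedAddCommGroup E] {n : ℕ}

lemma three_mul_dist_le_of_lipschitzWith {Q : Type*} [PseudoMetricSpace P] [PseudoMetricSpace Q]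
    {K : NNReal} {f : P → Q} (hf : LipschitzWith K f) {r : ℝ} {γ γ' : P}
    (h : dist γ γ' ≤ r / (3 * (K + 1))) : 3 * dist (f γ) (f γ') ≤ r := by
  have hle := hf.dist_le_mul γ γ'
  have hr := (le_div_iff₀ (by positivity)).1 h
  nlinarith [dist_nonneg (x := γ) (y := γ')]

/-- The points whose paths `h k γ` are all robust with parameter `1 / (n + 1)`. -/
def robustSet (h : ι → P → C(I, E)) (n : ℕ) : Set P :=
  {γ | ∀ k, IsRobust ((n + 1 : ℕ) : ℝ)⁻¹ (h k γ)}

variable {h : ι → P → C(I, E)}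

lemma strictAnti_inv_succ : StrictAnti fun n : ℕ => ((n + 1 : ℕ) : ℝ)⁻¹ :=
  strictAnti_nat_of_succ_lt fun n =>
    inv_strictAnti₀ (by positivity) (by exact_mod_cast Nat.lt_succ_self _)

lemma monotone_robustSet : Monotone (robustSet h) := fun _ _ hn _ hγ k =>
  (hγ k).of_dist_lt (by simpa using strictAnti_inv_succ.antitone hn)

lemma mem_iUnion_robustSet [Finite ι] {γ : P} (hγ : ∀ k t, h k γ t ≠ 0) :
    γ ∈ ⋃ n, robustSet h n := by
  have hlim : Filter.Tendsto (fun n : ℕ => ((n + 1 : ℕ) : ℝ)⁻¹) Filter.atTop (nhds 0) :=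
    (tendsto_inv_atTop_nhds_zero_nat (𝕜 := ℝ)).comp (Filter.tendsto_add_atTop_nat 1)
  have hev : ∀ k, ∀ᶠ n : ℕ in Filter.atTop, IsRobust ((n + 1 : ℕ) : ℝ)⁻¹ (h k γ) := fun k => by
    obtain ⟨r, hr, hrob⟩ := exists_isRobust (hγ k)
    filter_upwards [hlim.eventually (eventually_le_nhds hr)] with n hn
    exact hrob.of_dist_lt (by simpa using hn)
  exact mem_iUnion.2 (Filter.eventually_all.2 hev).exists

lemma exists_thickening_robustSet_subset [PseudoMetricSpace P] {K : NNReal}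
    (hK : ∀ k, LipschitzWith K (h k)) (n : ℕ) :
    ∃ η > 0, Metric.thickening η (robustSet h n) ⊆ robustSet h (n + 1) := by
  have hgap := sub_pos.2 (strictAnti_inv_succ n.lt_succ_self)
  refine ⟨_, div_pos hgap (by positivity : 0 < 3 * ((K : ℝ) + 1)), fun γ hγ k => ?_⟩
  obtain ⟨γ', hγ', hlt⟩ := Metric.mem_thickening_iff.1 hγ
  refine (hγ' k).of_dist_lt ?_
  linarith [three_mul_dist_le_of_lipschitzWith (hK k) ((dist_comm _ _).trans_le hlt.le)]

end RobustSet

section LocalPrimitive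

variable {M P R : Type*} [MetricSpace P] [Field R] {N q T : ℕ}

lemma IsMatchedFamily.coboundary_clusterSum_homotopyCochain {A : M → Finset P} {U : Set M}
    {ρ : ℝ} (hA : IsMatchedFamily A U ρ) {h : P → C(I, Fin (q + 2) → ℝ)} {ε : ℝ} (hT : T ≠ 0)
    (hTε : (T : ℝ)⁻¹ ≤ ε) (hclose : ∀ γ γ', dist γ γ' ≤ ρ → dist (h γ') (h γ) ≤ ε / 3)
    {a b : M → Fin (q + 2) → ℝ} (hrob : ∀ y ∈ U, ∀ γ ∈ A y, IsRobust ε (h γ))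
    (ha : ∀ y ∈ U, ∀ γ ∈ A y, h γ 0 = a y) (hb : ∀ y ∈ U, ∀ γ ∈ A y, h γ 1 = b y)
    {ξ : ℕ → M} (hξ : ∀ n, ξ n ∈ U) :
    coboundary q (clusterSum A ρ fun Γ => (homotopyCochain q T fun n => h (Γ n) : R)) ξ =
      (A (ξ 0)).card * (sphereCochain (q + 1) (fun n => b (ξ n)) -
        sphereCochain (q + 1) fun n => a (ξ n)) := by
  rw [hA.coboundary_clusterSum q _ hξ, clusterSum, ← nsmul_eq_mul, ← Finset.sum_const]
  refine Finset.sum_congr rfl fun γ hγ => ?_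
  have hmem (n : ℕ) : nearPoint ρ (A (ξ n)) γ ∈ A (ξ n) := hA.nearPoint_mem (hξ 0) (hξ n) hγ
  rw [coboundary_comp, (hrob _ (hξ 0) γ hγ).coboundary_homotopyCochain hT hTε fun n =>
    hclose _ _ (hA.dist_nearPoint_le (hξ 0) (hξ n) hγ)]
  simp only [ha _ (hξ _) _ (hmem _), hb _ (hξ _) _ (hmem _)]

variable [CharZero R] [PseudoMetricSpace M] [CompactSpace M] [MeasurableSpace P] [BorelSpace P]

/-- Averaging the homotopies `h k` over the `k + 1` points of a cluster gives a
primitive of `a k - b k`, and clusters of some cardinality `k + 1` are available near each point. -/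
theorem IsCarriedBy.exists_local_primitive {μ : M → LevyProkhorov (ProbabilityMeasure P)}
    {F : M → Set P} (hcar : IsCarriedBy μ F N) (hμ : Continuous μ)
    {h : Fin N → P → C(I, Fin (q + 2) → ℝ)} {K : NNReal} (hK : ∀ k, LipschitzWith K (h k))
    (hne : ∀ k x, ∀ γ ∈ F x, ∀ t, h k γ t ≠ 0) {a b : Fin N → M → Fin (q + 2) → ℝ}
    (ha : ∀ k x, ∀ γ ∈ F x, h k γ 0 = a k x) (hb : ∀ k x, ∀ γ ∈ F x, h k γ 1 = b k x) :
    ∃ δ > 0, ∃ β : Fin N → (ℕ → M) → R, (∀ k, IsCochain q (β k)) ∧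
      ∀ x, ∃ k, ∀ ξ : ℕ → M, (∀ n, ξ n ∈ Metric.ball x δ) →
        coboundary q (β k) ξ = sphereCochain (q + 1) (fun n => a k (ξ n)) -
          sphereCochain (q + 1) fun n => b k (ξ n) := by
  obtain ⟨n, δ, hδ, A, ρ, hρ, hA⟩ := hcar.exists_isMatchedFamily hμ (monotone_robustSet (h := h))
    (exists_thickening_robustSet_subset hK)
    (fun x γ hγ => mem_iUnion_robustSet fun k => hne k x γ hγ)
    (R := fun n => ((n + 1 : ℕ) : ℝ)⁻¹ / (3 * (K + 1))) fun n => by positivity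
  refine ⟨δ, hδ, fun k => -((k : R) + 1)⁻¹ • clusterSum (A k) (ρ k)
    fun Γ => homotopyCochain q (n + 1) fun i => h k (Γ i), fun k ξ ξ' hξ => ?_, fun x => ?_⟩
  · simp only [Pi.smul_apply]
    rw [(isCochain_homotopyCochain.comp (h k)).clusterSum (A k) (ρ k) hξ]
  obtain ⟨k, hmatched, hprop⟩ := hA x
  refine ⟨k, fun ξ hξ => ?_⟩
  have hmain := hmatched.coboundary_clusterSum_homotopyCochain (R := R) (h := h k) (a := a k)
    (b := b k) n.succ_ne_zero le_rfl
    (fun γ γ' hγ => by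
      linarith [three_mul_dist_le_of_lipschitzWith (hK k) (hγ.trans (hρ k)),
        dist_comm (h k γ) (h k γ')])
    (fun y hy γ hγ => ((hprop y hy).2 hγ).2 k) (fun y hy γ hγ => ha k y γ ((hprop y hy).2 hγ).1)
    (fun y hy γ hγ => hb k y γ ((hprop y hy).2 hγ).1) hξ
  rw [map_smul, Pi.smul_apply, hmain, (hprop _ (hξ 0)).1, smul_eq_mul]
  have hk : (k : R) + 1 ≠ 0 := by exact_mod_cast Nat.succ_ne_zero k
  push_cast
  field_simp
  ring

end LocalPrimitive

section Vanishing

variable {N q L : ℕ}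

/-- The embedding of the discrete torus into the torus. -/
noncomputable def torusGrid [NeZero L] (x : Fin (N * q) → ZMod L) : Fin N → Fin q → Circle :=
  fun k i => ZMod.toCircle (block k x i)

lemma eventually_dist_toCircle_add_one_lt {δ : ℝ} (hδ : 0 < δ) :
    ∀ᶠ L in Filter.atTop, ∀ [NeZero L] (x : ZMod L),
      dist (ZMod.toCircle (x + 1)) (ZMod.toCircle x) < δ := by
  have hlim : Filter.Tendsto
      (fun L : ℕ => Complex.exp (2 * Real.pi * Complex.I * (1 : ℤ) / L)) Filter.atTop (nhds 1) := by
    rw [← Complex.exp_zero]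
    exact (Complex.continuous_exp.tendsto 0).comp (tendsto_const_div_atTop_nhds_zero_nat _)
  filter_upwards [hlim.eventually (Metric.ball_mem_nhds 1 hδ)] with L hL _ x
  rw [AddChar.map_add_eq_mul, ← Int.cast_one (R := ZMod L)]
  change dist (_ : ℂ) (_ : ℂ) < δ
  rw [dist_eq_norm, Circle.coe_mul, ← mul_sub_one, norm_mul, Circle.norm_coe, one_mul,
    ZMod.toCircle_intCast]
  exact mem_ball_iff_norm.1 hL

lemma eventually_dist_torusGrid_kuhnSimplex_lt {δ : ℝ} (hδ : 0 < δ) :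
    ∀ᶠ L in Filter.atTop, ∀ [NeZero L] (x : Fin (N * q) → ZMod L) (g : Equiv.Perm (Fin (N * q)))
      (n m : ℕ), dist (torusGrid (kuhnSimplex x g n)) (torusGrid (kuhnSimplex x g m)) < δ := by
  filter_upwards [eventually_dist_toCircle_add_one_lt hδ] with L hL _ x g n m
  refine (dist_pi_lt_iff hδ).2 fun k => (dist_pi_lt_iff hδ).2 fun i => ?_
  simp only [torusGrid, block, kuhnSimplex]
  split_ifs
  · rwa [dist_self]
  · simpa only [add_zero] using hL _
  · simpa only [add_zero, dist_comm] using hL _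
  · rwa [dist_self]

open Filter Topology in
lemma eventually_coboundary_sphereCochain_comp_eq_zero {M R : Type*} [PseudoMetricSpace M]
    [CompactSpace M] [CommRing R] [IsDomain R] {a : M → Fin (q + 1) → ℝ} (ha : Continuous a)
    (ha0 : ∀ x, a x ≠ 0) :
    ∀ᶠ δ in 𝓝[>] (0 : ℝ), ∀ ξ : ℕ → M, (∀ n m, dist (ξ n) (ξ m) < δ) →
      coboundary q (fun ξ : ℕ → M => (sphereCochain q fun n => a (ξ n) : R)) ξ = 0 := by
  rcases isEmpty_or_nonempty M with hM | hM
  · exact Eventually.of_forall fun δ ξ => (hM.false (ξ 0)).elim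
  obtain ⟨x₀, -, hx₀⟩ := isCompact_univ.exists_isMinOn univ_nonempty ha.norm.continuousOn
  have hpos : 0 < ‖a x₀‖ / 2 := half_pos (norm_pos_iff.2 (ha0 x₀))
  obtain ⟨δ₀, hδ₀, hunif⟩ := Metric.uniformContinuous_iff.1
    (CompactSpace.uniformContinuous_of_continuous ha) _ hpos
  filter_upwards [Ioo_mem_nhdsGT hδ₀] with δ hδ ξ hξ
  rw [coboundary_comp]
  refine coboundary_sphereCochain_eq_zero (ε := ‖a x₀‖ / 2)
    (fun n m => (hunif ((hξ n m).trans hδ.2)).le) ⟨0, ?_⟩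
  have hmin : ‖a x₀‖ ≤ ‖a (ξ 0)‖ := hx₀ (mem_univ (ξ 0))
  linarith

open Filter Topology in
theorem IsCarriedBy.eventually_torusIntegral_cupProd_eq_zero {R P : Type*} [Field R] [CharZero R]
    [MetricSpace P] [MeasurableSpace P] [BorelSpace P]
    {μ : (Fin N → Fin (q + 1) → Circle) → LevyProkhorov (ProbabilityMeasure P)}
    {F : (Fin N → Fin (q + 1) → Circle) → Set P} (hcar : IsCarriedBy μ F N) (hμ : Continuous μ)
    {h : Fin N → P → C(I, Fin (q + 2) → ℝ)} {K : NNReal} (hK : ∀ k, LipschitzWith K (h k))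
    (hne : ∀ k x, ∀ γ ∈ F x, ∀ t, h k γ t ≠ 0)
    {a b : Fin N → (Fin N → Fin (q + 1) → Circle) → Fin (q + 2) → ℝ}
    (ha : ∀ k, Continuous (a k)) (hb : ∀ k, Continuous (b k))
    (ha0 : ∀ k x, a k x ≠ 0) (hb0 : ∀ k x, b k x ≠ 0)
    (hha : ∀ k x, ∀ γ ∈ F x, h k γ 0 = a k x) (hhb : ∀ k x, ∀ γ ∈ F x, h k γ 1 = b k x) :
    ∀ᶠ L in atTop, ∀ [NeZero L],
      torusIntegral (cupProd (q + 1) fun k (ξ : ℕ → Fin (N * (q + 1)) → ZMod L) =>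
        (sphereCochain (q + 1) (fun n => a k (torusGrid (ξ n))) -
          sphereCochain (q + 1) fun n => b k (torusGrid (ξ n)) : R)) = 0 := by
  obtain ⟨δ₀, hδ₀, β, hβ, hlocal⟩ := hcar.exists_local_primitive (R := R) hμ hK hne hha hhb
  obtain ⟨δ, ⟨hδ, hδδ₀⟩, hcla, hclb⟩ := ((eventually_mem_set.2 (Ioo_mem_nhdsGT hδ₀)).and
    ((eventually_all.2 fun k => eventually_coboundary_sphereCochain_comp_eq_zero (R := R)
      (ha k) (ha0 k)).and
    (eventually_all.2 fun k => eventually_coboundary_sphereCochain_comp_eq_zero (R := R)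
      (hb k) (hb0 k)))).exists
  filter_upwards [eventually_dist_torusGrid_kuhnSimplex_lt (N := N) (q := q + 1) hδ] with L hL _
  set α : Fin N → (ℕ → Fin N → Fin (q + 1) → Circle) → R := fun k =>
    (fun ζ => sphereCochain (q + 1) fun n => a k (ζ n)) -
      fun ζ => sphereCochain (q + 1) fun n => b k (ζ n) with hα
  set S : Set (ℕ → Fin (N * (q + 1)) → ZMod L) :=
    {ξ | ∀ n m, dist (torusGrid (ξ n)) (torusGrid (ξ m)) < δ}
  have hS : ∀ ξ ∈ S, ∀ p, drop p ξ ∈ S := fun ξ hξ p n m => hξ _ _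
  refine torusIntegral_cupProd_eq_zero (S := S) hS hL
    (α := fun k ξ => α k fun n => torusGrid (ξ n))
    (β := fun k ξ => β k fun n => torusGrid (ξ n))
    (fun k => IsCochain.comp (IsCochain.sub (isCochain_sphereCochain.comp (a k))
      (isCochain_sphereCochain.comp (b k))) torusGrid)
    (fun k => (hβ k).comp torusGrid) (fun k ξ hξ => ?_) fun ξ hξ => ?_
  · rw [coboundary_comp, hα, map_sub, Pi.sub_apply, hcla k _ hξ, hclb k _ hξ, sub_zero]
  · obtain ⟨k, hk⟩ := hlocal (torusGrid (ξ 0))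
    refine ⟨k, fun p => ?_⟩
    rw [coboundary_comp]
    exact hk _ fun n => (hξ _ _).trans hδδ₀

end Vanishing

/-! ### Nonvanishing paths of differences -/

section Bridge

variable {E : Type*} [NormedAddCommGroup E] [NormedSpace ℝ E]

/-- The path that runs affinely from `v₀` to `f 0`, then along `f`, then affinely from `f 1`
to `v₁`, each in a third of the time. -/
noncomputable def bridge (v₀ : E) (f : C(I, E)) (v₁ : E) : C(I, E) where
  toFun t := f (projIcc 0 1 zero_le_one (3 * (t : ℝ) - 1)) +
    (projIcc 0 1 zero_le_one (1 - 3 * (t : ℝ)) : ℝ) • (v₀ - f 0) +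
    (projIcc 0 1 zero_le_one (3 * (t : ℝ) - 2) : ℝ) • (v₁ - f 1)
  continuous_toFun := by fun_prop

variable {v₀ v₁ w₀ w₁ : E} {f g : C(I, E)}

lemma bridge_zero : bridge v₀ f v₁ 0 = v₀ := by
  simp [bridge, projIcc_of_le_left]

lemma bridge_one : bridge v₀ f v₁ 1 = v₁ := by
  have h0 : projIcc (0 : ℝ) 1 zero_le_one (1 - 3) = 0 := projIcc_of_le_left _ (by norm_num)
  have h1 : projIcc (0 : ℝ) 1 zero_le_one (3 - 1) = 1 := projIcc_of_right_le _ (by norm_num)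
  have h2 : projIcc (0 : ℝ) 1 zero_le_one (3 - 2) = 1 := projIcc_of_right_le _ (by norm_num)
  simp [bridge, h0, h1, h2]

lemma bridge_sub_bridge :
    bridge v₀ f v₁ - bridge w₀ g w₁ = bridge (v₀ - w₀) (f - g) (v₁ - w₁) := by
  ext t
  simp only [bridge, ContinuousMap.sub_apply, ContinuousMap.coe_mk]
  module

lemma norm_bridge_le {C : ℝ} (h₀ : ‖v₀‖ ≤ C) (hf : ‖f‖ ≤ C) (h₁ : ‖v₁‖ ≤ C) :
    ‖bridge v₀ f v₁‖ ≤ 5 * C := by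
  have hsmul (s : I) (t : I) {v : E} (hv : ‖v‖ ≤ C) : ‖(s : ℝ) • (v - f t)‖ ≤ C + C := by
    rw [norm_smul, Real.norm_of_nonneg s.2.1]
    refine (mul_le_of_le_one_left (norm_nonneg _) s.2.2).trans ((norm_sub_le _ _).trans ?_)
    exact add_le_add hv ((f.norm_coe_le_norm t).trans hf)
  refine (ContinuousMap.norm_le _ (by linarith [norm_nonneg v₀])).2 fun t => ?_
  refine norm_add₃_le.trans ?_
  linarith [hsmul (projIcc 0 1 zero_le_one (1 - 3 * (t : ℝ))) 0 h₀,
    hsmul (projIcc 0 1 zero_le_one (3 * (t : ℝ) - 2)) 1 h₁,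
    (f.norm_coe_le_norm (projIcc 0 1 zero_le_one (3 * (t : ℝ) - 1))).trans hf]

lemma add_smul_sub_ne_zero {v w : E} (h : ‖w - v‖ < ‖v‖) (s : I) : w + (s : ℝ) • (v - w) ≠ 0 := by
  intro h0
  have hv : v = -(((σ s : I) : ℝ) • (w - v)) := by
    rw [coe_symm_eq, ← sub_eq_zero, ← h0]
    module
  have hle : ‖v‖ ≤ ‖w - v‖ := by
    rw [hv, norm_neg, norm_smul, Real.norm_of_nonneg (σ s).2.1, ← hv]
    exact mul_le_of_le_one_left (norm_nonneg _) (σ s).2.2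
  exact hle.not_gt h

lemma bridge_ne_zero (hf : ∀ t, f t ≠ 0) (h₀ : ‖f 0 - v₀‖ < ‖v₀‖) (h₁ : ‖f 1 - v₁‖ < ‖v₁‖)
    (t : I) : bridge v₀ f v₁ t ≠ 0 := by
  simp only [bridge, ContinuousMap.coe_mk]
  rcases le_total (3 * (t : ℝ)) 1 with ht | ht
  · rw [projIcc_of_le_left zero_le_one (show 3 * (t : ℝ) - 1 ≤ 0 by linarith),
      projIcc_of_le_left zero_le_one (show 3 * (t : ℝ) - 2 ≤ 0 by linarith), zero_smul, add_zero]
    exact add_smul_sub_ne_zero h₀ _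
  rw [projIcc_of_le_left zero_le_one (show 1 - 3 * (t : ℝ) ≤ 0 by linarith), zero_smul, add_zero]
  rcases le_total (3 * (t : ℝ)) 2 with ht' | ht'
  · rw [projIcc_of_le_left zero_le_one (show 3 * (t : ℝ) - 2 ≤ 0 by linarith), zero_smul, add_zero]
    exact hf _
  · rw [projIcc_of_right_le zero_le_one (show 1 ≤ 3 * (t : ℝ) - 1 by linarith)]
    exact add_smul_sub_ne_zero h₁ _

end Bridge

section PathDifference

variable {d m n : ℕ}

/-- The difference of the `i`-th and the `j`-th point along a path of configurations. -/
noncomputable def pathDifference (i j : Fin (m + n)) (γ : FibredPaths (fadellNeuwirth d m n)) :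
    C(I, Fin d → ℝ) where
  toFun t := ((γ.1 t).1 i).ofLp - ((γ.1 t).1 j).ofLp
  continuous_toFun := by
    have hcoord (i : Fin (m + n)) : Continuous fun t => ((γ.1 t).1 i).ofLp :=
      (PiLp.continuous_ofLp 2 _).comp
        ((continuous_apply i).comp (continuous_subtype_val.comp γ.1.continuous))
    exact (hcoord i).sub (hcoord j)

lemma pathDifference_apply_ne_zero {i j : Fin (m + n)} (hij : i ≠ j)
    (γ : FibredPaths (fadellNeuwirth d m n)) (t : I) : pathDifference i j γ t ≠ 0 :=
  sub_ne_zero.2 fun h => hij ((γ.1 t).2 (WithLp.ofLp_injective 2 h))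

lemma norm_pathDifference_sub_le (i j : Fin (m + n)) (γ γ' : FibredPaths (fadellNeuwirth d m n)) :
    ‖pathDifference i j γ - pathDifference i j γ'‖ ≤ 2 * dist γ γ' := by
  have hcoord (i : Fin (m + n)) (t : I) :
      ‖((γ.1 t).1 i).ofLp - ((γ'.1 t).1 i).ofLp‖ ≤ dist γ γ' := by
    refine ((pi_norm_le_iff_of_nonneg dist_nonneg).2 fun a => ?_).trans
      ((dist_le_pi_dist (γ.1 t).1 (γ'.1 t).1 i).trans
        (ContinuousMap.dist_apply_le_dist (f := γ.1) (g := γ'.1) t))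
    rw [dist_eq_norm]
    exact PiLp.norm_apply_le ((γ.1 t).1 i - (γ'.1 t).1 i) a
  refine (ContinuousMap.norm_le _ (by positivity)).2 fun t => ?_
  simp only [ContinuousMap.sub_apply, pathDifference, ContinuousMap.coe_mk]
  rw [sub_sub_sub_comm, two_mul]
  exact (norm_sub_le _ _).trans (add_le_add (hcoord i t) (hcoord j t))

/-- The affine path in the unit interval from `s` to `s'`. -/
noncomputable def intervalSegment (s s' : I) : C(I, I) where
  toFun t := projIcc 0 1 zero_le_one (AffineMap.lineMap (s : ℝ) (s' : ℝ) (t : ℝ))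
  continuous_toFun := continuous_projIcc.comp (AffineMap.lineMap_continuous.comp
    continuous_subtype_val)

lemma intervalSegment_zero (s s' : I) : intervalSegment s s' 0 = s := by
  simp [intervalSegment]

lemma intervalSegment_one (s s' : I) : intervalSegment s s' 1 = s' := by
  simp [intervalSegment]

/-- The difference of the pair `p` of points along the part between the times `s` and `s'` of a
path of configurations, bridged to the differences of `p₀` at time `s` and of `p₁` at time `s'`. -/
noncomputable def bridgedDifference (p p₀ p₁ : Fin (m + n) × Fin (m + n)) (s s' : I)
    (γ : FibredPaths (fadellNeuwirth d m n)) : C(I, Fin d → ℝ) :=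
  bridge (pathDifference p₀.1 p₀.2 γ s) ((pathDifference p.1 p.2 γ).comp (intervalSegment s s'))
    (pathDifference p₁.1 p₁.2 γ s')

variable (p p₀ p₁ : Fin (m + n) × Fin (m + n)) (s s' : I)

lemma lipschitzWith_bridgedDifference :
    LipschitzWith 10 (bridgedDifference (d := d) p p₀ p₁ s s') := by
  refine LipschitzWith.of_dist_le_mul fun γ γ' => ?_
  have hle (i j : Fin (m + n)) (t : I) :
      ‖pathDifference i j γ t - pathDifference i j γ' t‖ ≤ 2 * dist γ γ' :=
    (ContinuousMap.norm_coe_le_norm (pathDifference i j γ - pathDifference i j γ') t).trans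
      (norm_pathDifference_sub_le i j γ γ')
  rw [dist_eq_norm, bridgedDifference, bridgedDifference, bridge_sub_bridge]
  refine (norm_bridge_le (hle _ _ _) ?_ (hle _ _ _)).trans_eq ?_
  · exact (ContinuousMap.norm_le _ (by positivity)).2 fun t => hle _ _ _
  · push_cast
    ring

variable {p p₀ p₁ s s'}

lemma bridgedDifference_ne_zero (hp : p.1 ≠ p.2) {γ : FibredPaths (fadellNeuwirth d m n)}
    (h₀ : ‖pathDifference p.1 p.2 γ s - pathDifference p₀.1 p₀.2 γ s‖ <
      ‖pathDifference p₀.1 p₀.2 γ s‖)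
    (h₁ : ‖pathDifference p.1 p.2 γ s' - pathDifference p₁.1 p₁.2 γ s'‖ <
      ‖pathDifference p₁.1 p₁.2 γ s'‖) (t : I) :
    bridgedDifference p p₀ p₁ s s' γ t ≠ 0 := by
  refine bridge_ne_zero (f := (pathDifference p.1 p.2 γ).comp _)
    (fun t => pathDifference_apply_ne_zero hp γ _) ?_ ?_ t
  · rwa [ContinuousMap.comp_apply, intervalSegment_zero]
  · rwa [ContinuousMap.comp_apply, intervalSegment_one]

end PathDifference

/-! ### A torus of configurations -/

/-- The index set of the torus directions: one for each base point other than the origin and the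
far point, and one for each fibre point at each time. -/
abbrev Direction (s n r : ℕ) : Type := Fin s ⊕ Fin n × Fin r

/-- The length of the vector attached to a torus direction. -/
noncomputable def Direction.radius {s n r : ℕ} : Direction s n r → ℝ
  | .inl i => i + 1
  | .inr (j, _) => 1 / (j + 2)

section Points

variable {E : Type*} [NormedAddCommGroup E] {s n r : ℕ} (u : Direction s n (r + 2) → E) (w : E)

/-- The origin, the points `-u i`, and the far point `w`. -/
def basePoints : Fin (s + 2) → E :=
  Fin.cons 0 (Fin.snoc (fun i => -u (.inl i)) w)

/-- The point close to which the fibre points lie at time `l`: the far point at time `1`, the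
origin at all other times. -/
def fibreCenter (l : Fin (r + 2)) : E :=
  if l = 1 then w else 0

/-- The fibre points at time `l`, close to `fibreCenter w l`. -/
def fibrePoints (l : Fin (r + 2)) (j : Fin n) : E :=
  if l = 1 then w - u (.inr (j, l)) else u (.inr (j, l))

/-- The base points followed by the fibre points at time `l`. -/
def configurationPoints (l : Fin (r + 2)) : Fin (s + 2 + n) → E :=
  Fin.append (basePoints u w) (fibrePoints u w l)

variable (l : Fin (r + 2))

lemma configurationPoints_origin : configurationPoints u w l (Fin.castAdd n 0) = 0 := by
  simp [configurationPoints, basePoints]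

lemma configurationPoints_base (i : Fin s) :
    configurationPoints u w l (Fin.castAdd n i.castSucc.succ) = -u (.inl i) := by
  simp only [configurationPoints, Fin.append_left, basePoints, Fin.cons_succ, Fin.snoc_castSucc]

lemma configurationPoints_far :
    configurationPoints u w l (Fin.castAdd n (Fin.last s).succ) = w := by
  simp only [configurationPoints, Fin.append_left, basePoints, Fin.cons_succ, Fin.snoc_last]

lemma configurationPoints_fibre (j : Fin n) :
    configurationPoints u w l (Fin.natAdd (s + 2) j) = fibrePoints u w l j := by
  simp only [configurationPoints, Fin.append_right]

variable {u w}

lemma norm_basePoints_succ (hu : ∀ k, ‖u k‖ = k.radius) (hw : ‖w‖ = s + 1) (i : Fin (s + 1)) :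
    ‖basePoints u w i.succ‖ = i + 1 := by
  rw [basePoints, Fin.cons_succ]
  refine Fin.lastCases ?_ (fun i => ?_) i
  · rw [Fin.snoc_last, hw, Fin.val_last]
  · rw [Fin.snoc_castSucc, norm_neg, hu, Direction.radius, Fin.val_castSucc]

lemma injective_basePoints (hu : ∀ k, ‖u k‖ = k.radius) (hw : ‖w‖ = s + 1) :
    Function.Injective (basePoints u w) := by
  have hnorm (i : Fin (s + 1)) :
      ‖(Fin.snoc (fun i => -u (.inl i)) w : Fin (s + 1) → E) i‖ = i + 1 :=
    norm_basePoints_succ hu hw i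
  refine Fin.cons_injective_iff.2 ⟨fun ⟨i, hi⟩ => ?_, fun i j hij => ?_⟩
  · have := hnorm i
    rw [hi, norm_zero] at this
    linarith [(Nat.cast_nonneg (i : ℕ) : (0 : ℝ) ≤ _)]
  · have := hnorm i
    rw [hij, hnorm j, add_left_inj] at this
    exact Fin.ext (by exact_mod_cast this.symm)

lemma one_le_norm_basePoints_sub_fibreCenter (hu : ∀ k, ‖u k‖ = k.radius) (hw : ‖w‖ = s + 1)
    (i : Fin (s + 2)) (hi : basePoints u w i ≠ fibreCenter w l) :
    1 ≤ ‖basePoints u w i - fibreCenter w l‖ := by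
  have hw1 : 1 ≤ ‖w‖ := by
    rw [hw]
    linarith [(Nat.cast_nonneg s : (0 : ℝ) ≤ s)]
  by_cases hl : l = 1
  · rw [fibreCenter, if_pos hl] at hi ⊢
    refine Fin.cases (fun _ => ?_) (fun i => Fin.lastCases (fun hi => ?_) (fun i _ => ?_) i) i hi
    · rwa [basePoints, Fin.cons_zero, zero_sub, norm_neg]
    · simp [basePoints] at hi
    · have hsucc : ((i : ℕ) : ℝ) + 1 ≤ s := by exact_mod_cast i.2
      have := norm_sub_norm_le w (-u (.inl i))
      rw [norm_neg, hu, hw, Direction.radius] at this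
      rw [basePoints, Fin.cons_succ, Fin.snoc_castSucc, norm_sub_rev]
      linarith
  · rw [fibreCenter, if_neg hl] at hi ⊢
    refine Fin.cases (fun hi => ?_) (fun i _ => ?_) i hi
    · exact (hi rfl).elim
    · rw [sub_zero, norm_basePoints_succ hu hw]
      linarith [(Nat.cast_nonneg (i : ℕ) : (0 : ℝ) ≤ _)]

lemma norm_fibrePoints_sub_fibreCenter (hu : ∀ k, ‖u k‖ = k.radius) (j : Fin n) :
    ‖fibrePoints u w l j - fibreCenter w l‖ = 1 / (j + 2) := by
  rw [fibrePoints, fibreCenter]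
  split_ifs
  · rw [sub_sub_cancel_left, norm_neg, hu, Direction.radius]
  · rw [sub_zero, hu, Direction.radius]

lemma injective_configurationPoints (hu : ∀ k, ‖u k‖ = k.radius) (hw : ‖w‖ = s + 1) :
    Function.Injective (configurationPoints u w l) := by
  have hfibre (j : Fin n) := norm_fibrePoints_sub_fibreCenter (w := w) l hu j
  refine Fin.append_injective_iff.2
    ⟨injective_basePoints hu hw, fun j j' hj => ?_, fun i j hij => ?_⟩
  · have := hfibre j
    rw [hj, hfibre j', one_div, one_div, inv_inj, add_left_inj] at this
    exact Fin.ext (by exact_mod_cast this.symm)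
  · have hj : (0 : ℝ) < j + 2 := by positivity
    have hlt : ‖basePoints u w i - fibreCenter w l‖ < 1 := by
      rw [hij, hfibre, div_lt_one hj]
      linarith [(Nat.cast_nonneg (j : ℕ) : (0 : ℝ) ≤ _)]
    refine hlt.not_ge (one_le_norm_basePoints_sub_fibreCenter l hu hw i fun h => ?_)
    have := hfibre j
    rw [← hij, h, sub_self, norm_zero] at this
    exact (one_div_pos.2 hj).ne this

lemma radius_inr_pos_and_lt_one {n r : ℕ} (jl : Fin n × Fin r) :
    0 < Direction.radius (.inr jl : Direction s n r) ∧
      Direction.radius (.inr jl : Direction s n r) < 1 := by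
  simp only [Direction.radius]
  exact ⟨by positivity, (div_lt_one (by positivity)).2
    (by linarith [(Nat.cast_nonneg (jl.1 : ℕ) : (0 : ℝ) ≤ _)])⟩

lemma exists_pair_almost_eq {n : ℕ} (k : Direction s (n + 1) (r + 2)) :
    ∃ (p p₀ : Fin (s + 2 + (n + 1)) × Fin (s + 2 + (n + 1))) (l l' : Fin (r + 2)), p.1 ≠ p.2 ∧
      ∀ (u : Direction s (n + 1) (r + 2) → E) (w : E), (∀ k, ‖u k‖ = k.radius) → ‖w‖ = s + 1 →
        configurationPoints u w l p₀.1 - configurationPoints u w l p₀.2 = u k ∧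
        ‖configurationPoints u w l p.1 - configurationPoints u w l p.2 - u k‖ < ‖u k‖ ∧
        ‖configurationPoints u w l' p.1 - configurationPoints u w l' p.2 - w‖ < ‖w‖ := by
  set base : Fin (s + 2) → Fin (s + 2 + (n + 1)) := Fin.castAdd (n + 1)
  set fibre : Fin (n + 1) → Fin (s + 2 + (n + 1)) := Fin.natAdd (s + 2)
  have hne (i : Fin (s + 2)) (j : Fin (n + 1)) : base i ≠ fibre j :=
    Fin.ne_of_lt (i.2.trans_le (Nat.le_add_right (s + 2) j))
  have h01 : (0 : Fin (r + 2)) ≠ 1 := zero_ne_one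
  have hs : (0 : ℝ) ≤ s := Nat.cast_nonneg s
  rcases k with i | ⟨j, l⟩
  · refine ⟨(fibre 0, base i.castSucc.succ), (base 0, base i.castSucc.succ), 0, 1, (hne _ _).symm,
      fun u w hu hw => ?_⟩
    have hi : ((i : ℕ) : ℝ) + 1 ≤ s := by exact_mod_cast i.2
    simp only [base, fibre, configurationPoints_origin, configurationPoints_base,
      configurationPoints_fibre, fibrePoints, if_neg h01, if_true, sub_neg_eq_add, zero_add,
      add_sub_cancel_right, true_and]
    have hfibre (l : Fin (r + 2)) := radius_inr_pos_and_lt_one (s := s) ((0 : Fin (n + 1)), l)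
    constructor
    · rw [hu, hu]
      exact (hfibre 0).2.trans_le (by simp [Direction.radius])
    · rw [show w - u (.inr (0, 1)) + u (.inl i) - w = u (.inl i) - u (.inr (0, 1)) by abel]
      refine (norm_sub_le _ _).trans_lt ?_
      rw [hu, hu, hw]
      exact add_lt_add_of_le_of_lt hi (hfibre 1).2
  · obtain ⟨hpos, hlt⟩ := radius_inr_pos_and_lt_one (s := s) (j, l)
    by_cases hl : l = 1
    · refine ⟨(base (Fin.last s).succ, fibre j), (base (Fin.last s).succ, fibre j), l, 0, hne _ _,
        fun u w hu hw => ?_⟩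
      have := radius_inr_pos_and_lt_one (s := s) (j, (0 : Fin (r + 2)))
      simp only [base, fibre, configurationPoints_far,
        configurationPoints_fibre, fibrePoints, if_pos hl, if_neg h01, sub_sub_cancel, sub_self,
        norm_zero, sub_sub_cancel_left, norm_neg, hu, hw, true_and]
      exact ⟨hpos, by linarith [hlt, hs]⟩
    · refine ⟨(fibre j, base 0), (fibre j, base 0), l, 1, (hne _ _).symm, fun u w hu hw => ?_⟩
      have := radius_inr_pos_and_lt_one (s := s) (j, (1 : Fin (r + 2)))
      simp only [base, fibre, configurationPoints_origin,
        configurationPoints_fibre, fibrePoints, if_neg hl, if_true, sub_self,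
        sub_zero, norm_zero, sub_sub_cancel_left, norm_neg, hu, hw, true_and]
      exact ⟨hpos, by linarith [hlt, hs]⟩

end Points

section Configuration

variable {d s n r : ℕ}

/-- The configurations `configurationPoints u w l` of points of `ℝᵈ`, which all lie over the same
base point. -/
noncomputable def configuration (u : Direction s n (r + 2) → Fin d → ℝ) (w : Fin d → ℝ)
    (hu : ∀ k, ‖u k‖ = k.radius) (hw : ‖w‖ = s + 1) :
    FibredProd (fadellNeuwirth d (s + 2) n) (r + 2) :=
  ⟨fun l => ⟨fun i => WithLp.toLp 2 (configurationPoints u w l i),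
    (WithLp.toLp_injective 2).comp (injective_configurationPoints l hu hw)⟩, fun l l' =>
    Subtype.ext <| funext fun i => congrArg (WithLp.toLp 2) <|
      (Fin.append_left (basePoints u w) (fibrePoints u w l) i).trans
        (Fin.append_left (basePoints u w) (fibrePoints u w l') i).symm⟩

lemma pathDifference_tDiv {u : Direction s n (r + 2) → Fin d → ℝ} {w : Fin d → ℝ}
    {hu : ∀ k, ‖u k‖ = k.radius} {hw : ‖w‖ = s + 1}
    {γ : FibredPaths (fadellNeuwirth d (s + 2) n)}
    (hγ : parmEval (fadellNeuwirth d (s + 2) n) (r + 2) γ = configuration u w hu hw)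
    (i j : Fin (s + 2 + n)) (l : Fin (r + 2)) :
    pathDifference i j γ (tDiv (r + 2) l) =
      configurationPoints u w l i - configurationPoints u w l j := by
  have hpoint (i : Fin (s + 2 + n)) :
      (γ.1 (tDiv (r + 2) l)).1 i = WithLp.toLp 2 (configurationPoints u w l i) :=
    congrFun (congrArg Subtype.val (congrFun (congrArg Subtype.val hγ) l)) i
  change ((γ.1 (tDiv (r + 2) l)).1 i).ofLp - ((γ.1 (tDiv (r + 2) l)).1 j).ofLp = _
  rw [hpoint, hpoint]

variable {X : Type*} [TopologicalSpace X] {u : X → Direction s n (r + 2) → Fin d → ℝ}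
  {w : X → Fin d → ℝ}

lemma continuous_configurationPoints (hu : Continuous u) (hw : Continuous w) (l : Fin (r + 2))
    (i : Fin (s + 2 + n)) : Continuous fun x => configurationPoints (u x) (w x) l i := by
  have hu' (k : Direction s n (r + 2)) : Continuous fun x => u x k :=
    (continuous_apply k).comp hu
  refine Fin.addCases (fun i => ?_) (fun j => ?_) i
  · refine Fin.cases ?_ (fun i => Fin.lastCases ?_ (fun i => ?_) i) i
    · simpa only [configurationPoints_origin] using continuous_const
    · simpa only [configurationPoints_far] using hw
    · simp only [configurationPoints_base]
      exact (hu' _).neg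
  · simp only [configurationPoints_fibre, fibrePoints]
    split_ifs
    · exact hw.sub (hu' _)
    · exact hu' _

lemma continuous_configuration (hu : Continuous u) (hw : Continuous w)
    (hu' : ∀ x k, ‖u x k‖ = k.radius) (hw' : ∀ x, ‖w x‖ = s + 1) :
    Continuous fun x => configuration (u x) (w x) (hu' x) (hw' x) :=
  Continuous.subtype_mk (continuous_pi fun l => Continuous.subtype_mk (continuous_pi fun i =>
    (PiLp.continuous_toLp 2 _).comp (continuous_configurationPoints hu hw l i)) _) _

end Configuration

section Rescale

variable {E : Type*} [NormedAddCommGroup E] [NormedSpace ℝ E]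

/-- The positive multiple of `v` of norm `c` (for `v ≠ 0` and `c > 0`). -/
noncomputable def rescale (c : ℝ) (v : E) : E :=
  (c / ‖v‖) • v

lemma norm_rescale {c : ℝ} (hc : 0 ≤ c) {v : E} (hv : v ≠ 0) : ‖rescale c v‖ = c := by
  rw [rescale, norm_smul, norm_div, norm_norm, Real.norm_of_nonneg hc,
    div_mul_cancel₀ _ (norm_ne_zero_iff.2 hv)]

lemma continuous_rescale_comp {X : Type*} [TopologicalSpace X] {v : X → E} (hv : Continuous v)
    (hv0 : ∀ x, v x ≠ 0) (c : ℝ) : Continuous fun x => rescale c (v x) :=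
  (continuous_const.div hv.norm fun x => norm_ne_zero_iff.2 (hv0 x)).smul hv

lemma signLabel_rescale {q : ℕ} {c : ℝ} (hc : 0 < c) {v : Fin (q + 1) → ℝ} (hv : v ≠ 0) :
    signLabel (rescale c v) = signLabel v :=
  signLabel_smul v (div_pos hc (norm_pos_iff.2 hv))

end Rescale

/-! ### Nonexistence of sections by measures of small support -/

/-- The map `p` has a continuous section by probability measures on its fibres with support of
cardinality at most `N`, so that `dsecat p` is the least `N` with `HasMeasureSection p (N + 1)`. -/
def HasMeasureSection {E B : Type*} [MetricSpace E] [TopologicalSpace B] (p : E → B) (N : ℕ) :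
    Prop :=
  letI : MeasurableSpace E := borel E
  haveI : BorelSpace E := ⟨rfl⟩
  ∃ μ : B → LevyProkhorov (ProbabilityMeasure E), Continuous μ ∧
    ∀ b, ∃ S : Finset E, S.card ≤ N ∧ (S : Set E) ⊆ p ⁻¹' {b} ∧ (μ b).toMeasure (S : Set E) = 1

lemma continuous_torusVector (q : ℕ) : Continuous (torusVector (q := q)) := by
  refine continuous_pi fun i => Fin.lastCases ?_ (fun j => ?_) i
  · simp only [torusVector, Fin.snoc_last]
    fun_prop
  · simp only [torusVector, Fin.snoc_castSucc]
    fun_prop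

section Vanishing

variable {q s n r N : ℕ}

lemma Direction.radius_pos (k : Direction s n r) : 0 < k.radius := by
  rcases k with i | jl
  · exact Nat.cast_add_one_pos _
  · exact (radius_inr_pos_and_lt_one jl).1

theorem HasMeasureSection.eventually_torusIntegral_cupProd_eq_zero
    (hsec : HasMeasureSection (parmEval (fadellNeuwirth (q + 2) (s + 2) (n + 1)) (r + 2)) N)
    {u : (Fin N → Fin (q + 1) → Circle) → Direction s (n + 1) (r + 2) → Fin (q + 2) → ℝ}
    {w : (Fin N → Fin (q + 1) → Circle) → Fin (q + 2) → ℝ} (hu : Continuous u) (hw : Continuous w)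
    (hu' : ∀ x k, ‖u x k‖ = k.radius) (hw' : ∀ x, ‖w x‖ = s + 1)
    (c : Fin N → Direction s (n + 1) (r + 2)) :
    ∀ᶠ L in Filter.atTop, ∀ [NeZero L],
      torusIntegral (cupProd (q + 1) fun k (ξ : ℕ → Fin (N * (q + 1)) → ZMod L) =>
        (sphereCochain (q + 1) (fun i => u (torusGrid (ξ i)) (c k)) -
          sphereCochain (q + 1) fun i => w (torusGrid (ξ i)) : ℚ)) = 0 := by
  let : MeasurableSpace (FibredPaths (fadellNeuwirth (q + 2) (s + 2) (n + 1))) :=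
    @borel _ UniformSpace.toTopologicalSpace
  have : @BorelSpace (FibredPaths (fadellNeuwirth (q + 2) (s + 2) (n + 1)))
    UniformSpace.toTopologicalSpace _ := ⟨rfl⟩
  obtain ⟨μ, hμ, hcar⟩ := hsec
  choose p p₀ l l' hp hpair using
    exists_pair_almost_eq (s := s) (n := n) (r := r) (E := Fin (q + 2) → ℝ)
  let far : Fin (s + 2 + (n + 1)) := Fin.castAdd (n + 1) (Fin.last s).succ
  let origin : Fin (s + 2 + (n + 1)) := Fin.castAdd (n + 1) 0
  have hfar (x) (l : Fin (r + 2)) : configurationPoints (u x) (w x) l far -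
      configurationPoints (u x) (w x) l origin = w x := by
    rw [configurationPoints_far, configurationPoints_origin, sub_zero]
  set X := fun x => configuration (u x) (w x) (hu' x) (hw' x)
  have hcarX : IsCarriedBy (fun x => μ (X x)) (fun x => parmEval _ (r + 2) ⁻¹' {X x}) N :=
    fun x => hcar (X x)
  refine hcarX.eventually_torusIntegral_cupProd_eq_zero
    (hμ.comp (continuous_configuration hu hw hu' hw'))
    (h := fun k => bridgedDifference (p (c k)) (p₀ (c k)) (far, origin)
      (tDiv (r + 2) (l (c k))) (tDiv (r + 2) (l' (c k))))
    (a := fun k x => u x (c k)) (b := fun _ => w)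
    (fun k => lipschitzWith_bridgedDifference _ _ _ _ _)
    (fun k x γ hγ => bridgedDifference_ne_zero (hp _) ?_ ?_)
    (fun k => (continuous_apply _).comp hu) (fun _ => hw)
    (fun k x => norm_pos_iff.1 ((hu' x (c k)).symm ▸ (c k).radius_pos))
    (fun _ x => norm_pos_iff.1 ((hw' x).symm ▸ Nat.cast_add_one_pos s))
    (fun k x γ hγ => ?_) (fun k x γ hγ => ?_)
  · rw [pathDifference_tDiv hγ, pathDifference_tDiv hγ, (hpair _ _ _ (hu' x) (hw' x)).1]
    exact (hpair _ _ _ (hu' x) (hw' x)).2.1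
  · rw [pathDifference_tDiv hγ, pathDifference_tDiv hγ, hfar]
    exact (hpair _ _ _ (hu' x) (hw' x)).2.2
  · rw [bridgedDifference, bridge_zero, pathDifference_tDiv hγ,
      (hpair _ _ _ (hu' x) (hw' x)).1]
  · rw [bridgedDifference, bridge_one, pathDifference_tDiv hγ, hfar]

theorem HasMeasureSection.eventually_torusIntegral_cupProd_eq_zero_of_ne_zero
    (hsec : HasMeasureSection (parmEval (fadellNeuwirth (q + 2) (s + 2) (n + 1)) (r + 2)) N)
    {v : (Fin N → Fin (q + 1) → Circle) → Direction s (n + 1) (r + 2) → Fin (q + 2) → ℝ}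
    {w : (Fin N → Fin (q + 1) → Circle) → Fin (q + 2) → ℝ} (hv : ∀ k, Continuous fun x => v x k)
    (hw : Continuous w) (hv0 : ∀ x k, v x k ≠ 0) (hw0 : ∀ x, w x ≠ 0)
    (c : Fin N → Direction s (n + 1) (r + 2)) :
    ∀ᶠ L in Filter.atTop, ∀ [NeZero L],
      torusIntegral (cupProd (q + 1) fun k (ξ : ℕ → Fin (N * (q + 1)) → ZMod L) =>
        (sphereCochain (q + 1) (fun i => v (torusGrid (ξ i)) (c k)) -
          sphereCochain (q + 1) fun i => w (torusGrid (ξ i)) : ℚ)) = 0 := by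
  have hs : (0 : ℝ) < s + 1 := Nat.cast_add_one_pos s
  simpa only [sphereCochain, signLabel_rescale, Direction.radius_pos, hs, hv0, hw0, ne_eq,
    not_false_eq_true] using
    hsec.eventually_torusIntegral_cupProd_eq_zero
      (u := fun x k => rescale k.radius (v x k)) (w := fun x => rescale (s + 1) (w x))
      (continuous_pi fun k => continuous_rescale_comp (hv k) (hv0 · k) _)
      (continuous_rescale_comp hw hw0 _)
      (fun x k => norm_rescale k.radius_pos.le (hv0 x k)) (fun x => norm_rescale hs.le (hw0 x)) c

end Vanishing

section Nonexistence

variable {q s n r : ℕ}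

lemma card_direction : Fintype.card (Direction s n r) = s + n * r := by
  simp [Direction]

theorem not_hasMeasureSection_fadellNeuwirth :
    ¬HasMeasureSection (parmEval (fadellNeuwirth (q + 2) (s + 2) (n + 1)) (r + 2))
      (s + (n + 1) * (r + 2)) := fun hsec => by
  set e : Direction s (n + 1) (r + 2) ≃ Fin (s + (n + 1) * (r + 2)) :=
    Fintype.equivFinOfCardEq card_direction
  obtain ⟨L, hvanish, hL⟩ := ((hsec.eventually_torusIntegral_cupProd_eq_zero_of_ne_zero
    (v := fun x k => torusVector (x (e k))) (w := fun _ => torusVector 1)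
    (fun k => (continuous_torusVector _).comp (continuous_apply _)) continuous_const
    (fun _ _ => torusVector_ne_zero _) (fun _ => torusVector_ne_zero _) e.symm).and
    (Filter.eventually_ge_atTop (5 * (q + 1) + 5))).exists
  have : NeZero L := ⟨by omega⟩
  have hconst : sphereCochain (R := ℚ) (q + 1) (fun _ => torusVector 1) = 0 :=
    labelCochain_eq_zero_of_eq (Nat.zero_le _) le_rfl q.succ_ne_zero.symm rfl
  have hone := torusIntegral_cupProd_blockCochain (R := ℚ) (isDegreeOneLabelling_torusLabel hL)
    (1 : Equiv.Perm (Fin (s + (n + 1) * (r + 2))))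
  rw [Equiv.Perm.sign_one, Units.val_one, one_pow, Int.cast_one] at hone
  simp only [hconst, sub_zero, e.apply_symm_apply] at hvanish
  exact one_ne_zero (hone.symm.trans hvanish)

theorem not_hasMeasureSection_fadellNeuwirth_of_even (hq : Even (q + 1)) :
    ¬HasMeasureSection (parmEval (fadellNeuwirth (q + 2) (s + 2) (n + 1)) (r + 2))
      (s + (n + 1) * (r + 2) + 1) := fun hsec => by
  obtain ⟨M, hM⟩ : ∃ M, s + (n + 1) * (r + 2) = M + 1 :=
    Nat.exists_eq_add_one_of_ne_zero (by positivity)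
  rw [hM] at hsec
  set e : Direction s (n + 1) (r + 2) ≃ Fin (M + 1) :=
    Fintype.equivFinOfCardEq (card_direction.trans hM)
  set c : Fin (M + 2) → Direction s (n + 1) (r + 2) := Fin.snoc e.symm (e.symm 0)
  have hc (k : Fin (M + 2)) : (e (c k)).castSucc = Function.update id (Fin.last _) 0 k := by
    refine Fin.lastCases ?_ (fun k => ?_) k
    · simp [c]
    · simp [c, (Fin.castSucc_lt_last k).ne]
  obtain ⟨L, hvanish, hL⟩ := ((hsec.eventually_torusIntegral_cupProd_eq_zero_of_ne_zero
    (v := fun x k => torusVector (x (e k).castSucc)) (w := fun x => torusVector (x (Fin.last _)))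
    (fun k => (continuous_torusVector _).comp (continuous_apply _))
    ((continuous_torusVector _).comp (continuous_apply _))
    (fun _ _ => torusVector_ne_zero _) (fun _ => torusVector_ne_zero _) c).and
    (Filter.eventually_ge_atTop (5 * (q + 1) + 5))).exists
  have : NeZero L := ⟨by omega⟩
  have hneg := torusIntegral_cupProd_blockCochain_sub (R := ℚ) (N := M)
    (isDegreeOneLabelling_torusLabel hL) hq q.succ_pos
  simp only [hc] at hvanish
  exact neg_ne_zero.2 two_ne_zero (hneg.symm.trans hvanish)

end Nonexistence

/-! ### Comparison of the distributional and the classical sectional category -/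

section ConvexDirac

variable {ι E : Type*} [Fintype ι] [MeasurableSpace E]

/-- The combination of the Dirac measures at the points `x i` with coefficients `w i`. -/
noncomputable def diracCombination (w : ι → ℝ) (x : ι → E) : Measure E :=
  ∑ i, ENNReal.ofReal (w i) • Measure.dirac (x i)

variable {w : ι → ℝ} {x : ι → E}

lemma diracCombination_eq_one (hw : ∀ i, 0 ≤ w i) (hsum : ∑ i, w i = 1) {S : Set E}
    (hS : ∀ i, w i ≠ 0 → x i ∈ S) : diracCombination w x S = 1 := by
  rw [diracCombination, Measure.coe_finsetSum, Finset.sum_apply, ← ENNReal.ofReal_one, ← hsum,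
    ENNReal.ofReal_sum_of_nonneg fun i _ => hw i]
  refine Finset.sum_congr rfl fun i _ => ?_
  rw [Measure.smul_apply, smul_eq_mul]
  by_cases hi : w i = 0
  · simp [hi]
  · rw [Measure.dirac_apply_of_mem (hS i hi), mul_one]

lemma integral_diracCombination [TopologicalSpace E] [BorelSpace E] (hw : ∀ i, 0 ≤ w i)
    (g : BoundedContinuousFunction E ℝ) : ∫ y, g y ∂diracCombination w x = ∑ i, w i * g (x i) := by
  rw [diracCombination, integral_finsetSum_measure fun i _ =>
    (g.integrable _).smul_measure ENNReal.ofReal_ne_top]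
  refine Finset.sum_congr rfl fun i _ => ?_
  rw [integral_smul_measure, integral_dirac' _ _ g.continuous.stronglyMeasurable,
    ENNReal.toReal_ofReal (hw i), smul_eq_mul]

end ConvexDirac

section Comparison

variable {E B : Type*} [MetricSpace E] [TopologicalSpace B] {p : E → B}

lemma HasMeasureSection.of_partitionOfUnity [TopologicalSpace.SeparableSpace E] {ι : Type*}
    [Fintype ι] (f : PartitionOfUnity ι B) {t : ι → B → E}
    (ht : ∀ i, ∀ b ∈ tsupport (f i), ContinuousAt (t i) b)
    (hp : ∀ i b, f i b ≠ 0 → p (t i b) = b) : HasMeasureSection p (Fintype.card ι) := by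
  classical
  let : MeasurableSpace E := borel E
  have : BorelSpace E := ⟨rfl⟩
  have hsum (b : B) : ∑ i, f i b = 1 := by
    rw [← finsum_eq_sum_of_fintype, f.sum_eq_one (mem_univ b)]
  have hone (b : B) {S : Set E} (hS : ∀ i, f i b ≠ 0 → t i b ∈ S) :
      diracCombination (f · b) (t · b) S = 1 :=
    diracCombination_eq_one (fun i => f.nonneg i b) (hsum b) hS
  let μ : B → ProbabilityMeasure E := fun b =>
    ⟨diracCombination (f · b) (t · b), ⟨hone b fun _ _ => mem_univ _⟩⟩
  have hμ : Continuous μ := by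
    refine continuous_iff_continuousAt.2 fun b =>
      ProbabilityMeasure.tendsto_iff_forall_integral_tendsto.2 fun g => ?_
    simp only [μ, ProbabilityMeasure.coe_mk, integral_diracCombination fun i => f.nonneg i _]
    refine (continuous_finsetSum _ fun i _ =>
      continuous_of_tsupport fun c hc => ?_).continuousAt
    exact (f i).continuous.continuousAt.mul (g.continuous.continuousAt.comp
      (ht i c (closure_mono (Function.support_mul_subset_left _ _) hc)))
  refine ⟨fun b => .ofMeasure (μ b), LevyProkhorov.probabilityMeasureHomeomorph.continuous.comp hμ,
    fun b => ⟨({i | f i b ≠ 0} : Finset ι).image (t · b),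
      Finset.card_image_le.trans (Finset.card_le_univ _), ?_, ?_⟩⟩
  · intro e he
    obtain ⟨i, hi, rfl⟩ := Finset.mem_image.1 (Finset.mem_coe.1 he)
    exact hp i b (Finset.mem_filter.1 hi).2
  · change μ b _ = 1
    rw [← ENNReal.coe_inj, ProbabilityMeasure.ennreal_coeFn_eq_coeFn_toMeasure]
    exact hone b fun i hi => Finset.mem_coe.2 (Finset.mem_image_of_mem _ (by simpa using hi))

theorem dsecat_le_secat [TopologicalSpace.SeparableSpace E] [NormalSpace B] (p : E → B) :
    dsecat p ≤ secat p := by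
  refine le_sInf ?_
  rintro _ ⟨k, rfl, U, hU, hcov, hs⟩
  refine sInf_le ⟨k, rfl, ?_⟩
  choose s hs hps using hs
  choose idx hidx using fun b => mem_iUnion.1 (hcov.symm.subset (mem_univ b))
  obtain ⟨f, hf⟩ := PartitionOfUnity.exists_isSubordinate_of_locallyFinite isClosed_univ U hU
    (locallyFinite_of_finite U) hcov.symm.subset
  have hmeas : HasMeasureSection p (Fintype.card (Fin (k + 1))) := .of_partitionOfUnity f
    (t := fun i => Function.extend Subtype.val (s i) fun b => s (idx b) ⟨b, hidx b⟩)
    (fun i b hb => ?_) fun i b hb => ?_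
  · rwa [Fintype.card_fin] at hmeas
  · rw [← (hU i).isOpenEmbedding_subtypeVal.continuousAt_iff (x := ⟨b, hf i hb⟩),
      Function.extend_comp Subtype.val_injective]
    exact (hs i).continuousAt
  · rw [Subtype.val_injective.extend_apply (a := ⟨b, hf i (subset_tsupport _ hb)⟩), hps]

theorem le_dsecat_of_not_hasMeasureSection {N : ℕ} (h : ¬HasMeasureSection p N) :
    (N : ℕ∞) ≤ dsecat p := by
  refine le_sInf ?_
  rintro _ ⟨k, rfl, μ, hμ, hcar⟩
  refine Nat.cast_le.2 (Nat.le_of_not_lt fun hk => h ⟨μ, hμ, fun b => ?_⟩)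
  obtain ⟨S, hS, hrest⟩ := hcar b
  exact ⟨S, hS.trans hk, hrest⟩

end Comparison

instance secondCountableTopology_conf (d k : ℕ) : SecondCountableTopology (Conf d k) :=
  inferInstanceAs (SecondCountableTopology
    {x : Fin k → EuclideanSpace ℝ (Fin d) // Function.Injective x})

theorem dTCfib_fadellNeuwirth_le_TCfib (d m n r : ℕ) :
    dTCfib (fadellNeuwirth d m n) r ≤ TCfib (fadellNeuwirth d m n) r := by
  have : @SecondCountableTopology (FibredPaths (fadellNeuwirth d m n))
      UniformSpace.toTopologicalSpace :=
    inferInstanceAs (SecondCountableTopology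
      {γ : C(I, Conf d (m + n)) // ∃ b, ∀ t, fadellNeuwirth d m n (γ t) = b})
  have : @TopologicalSpace.SeparableSpace (FibredPaths (fadellNeuwirth d m n))
    UniformSpace.toTopologicalSpace := inferInstance
  have : NormalSpace (FibredProd (fadellNeuwirth d m n) r) :=
    inferInstanceAs (NormalSpace {x : Fin r → Conf d (m + n) //
      ∀ i j, fadellNeuwirth d m n (x i) = fadellNeuwirth d m n (x j)})
  exact dsecat_le_secat _

/-! ### Scales without gaps -/

lemma exists_step_between {w : ℕ → ℝ} (hw : Monotone w) {a b : ℕ} (hab : a < b) :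
    ∃ k, a ≤ k ∧ k < b ∧
      w b - w a ≤ (b - a : ℕ) * (w (k + 1) - w k) ∧ w (k + 1) - w k ≤ w b - w a := by
  obtain ⟨k, hk, hle⟩ := Finset.exists_le_of_sum_le (s := Finset.Ico a b)
    (f := fun _ => (w b - w a) / (b - a : ℕ)) (g := fun k => w (k + 1) - w k)
    (Finset.nonempty_Ico.2 hab) (by
      have hpos : ((b - a : ℕ) : ℝ) ≠ 0 := by exact_mod_cast (Nat.sub_pos_of_lt hab).ne'
      rw [Finset.sum_Ico_sub w hab.le, Finset.sum_const, Nat.card_Ico, nsmul_eq_mul,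
        mul_div_cancel₀ _ hpos])
  obtain ⟨hak, hkb⟩ := Finset.mem_Ico.1 hk
  refine ⟨k, hak, hkb, ?_, sub_le_sub (hw hkb) (hw hak)⟩
  rwa [div_le_iff₀' (by exact_mod_cast Nat.sub_pos_of_lt hab)] at hle

lemma exists_monotone_comp_rank {ι : Type*} [Fintype ι] (y : ι → ℝ) :
    ∃ (w : ℕ → ℝ) (rank : ι → ℕ),
      Monotone w ∧ (∀ i, rank i < Fintype.card ι) ∧ ∀ i, w (rank i) = y i := by
  let e := Fintype.equivFin ι
  let f := Tuple.sort (y ∘ e.symm)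
  rcases isEmpty_or_nonempty ι with _ | _
  · exact ⟨fun _ => 0, isEmptyElim, monotone_const, isEmptyElim, isEmptyElim⟩
  have hlast (k : ℕ) : min k (Fintype.card ι - 1) < Fintype.card ι :=
    (min_le_right _ _).trans_lt (Nat.sub_lt Fintype.card_pos one_pos)
  refine ⟨fun k => y (e.symm (f ⟨_, hlast k⟩)), fun i => f.symm (e i), fun k l hkl => ?_,
    fun i => (f.symm (e i)).2, fun i => ?_⟩
  · exact Tuple.monotone_sort (y ∘ e.symm) (Fin.mk_le_mk.2 (min_le_min_right _ hkl))
  · have : (⟨_, hlast (f.symm (e i))⟩ : Fin _) = f.symm (e i) :=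
      Fin.ext (min_eq_left (Nat.le_sub_one_of_lt (f.symm (e i)).2))
    simp only [this, Equiv.apply_symm_apply, Equiv.symm_apply_apply]

lemma exists_gaps {ι : Type*} [Fintype ι] (y : ι → ℝ) :
    ∃ gap : Fin (Fintype.card ι - 1) → ℝ, ∀ i j, y j < y i →
      ∃ k, y i - y j ≤ Fintype.card ι * gap k ∧ gap k ≤ y i - y j := by
  obtain ⟨w, rank, hw, hrank, hy⟩ := exists_monotone_comp_rank y
  refine ⟨fun k => w (k + 1) - w k, fun i j hij => ?_⟩
  rw [← hy, ← hy] at hij ⊢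
  obtain ⟨k, -, hk, hle, hge⟩ := exists_step_between hw (hw.reflect_lt hij)
  refine ⟨⟨k, by have := hrank i; omega⟩, hle.trans ?_, hge⟩
  refine mul_le_mul_of_nonneg_right ?_ (sub_nonneg.2 (hw k.le_succ))
  exact_mod_cast (Nat.sub_le _ _).trans (hrank i).le

/-- A difference `≥ scale c` of two of the `N` values of `y` contains a gap between neighbouring
values of size `≥ scale c / N`, and there are only `N - 1` such gaps. -/
lemma exists_scale_forall_le_sub {ι κ : Type*} [Fintype ι] [Fintype κ] [Nonempty κ]
    [LinearOrder κ] (hcard : Fintype.card ι ≤ Fintype.card κ) (y : ι → ℝ) {scale : κ → ℝ}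
    (hpos : ∀ c, 0 < scale c) :
    ∃ c, ∀ i j, scale c ≤ y i - y j → ∃ c' < c, scale c' ≤ Fintype.card ι * (y i - y j) := by
  by_contra! hbad
  choose i j hle hlt using hbad
  obtain ⟨gap, hgap⟩ := exists_gaps y
  choose k hk hk' using fun c => hgap (i c) (j c) (sub_pos.1 ((hpos c).trans_le (hle c)))
  have hinj : Function.Injective k := by
    refine .of_lt_imp_ne fun c c' hcc' heq => (hlt c' c hcc').not_ge ?_
    calc scale c ≤ y (i c) - y (j c) := hle c
      _ ≤ Fintype.card ι * gap (k c') := heq ▸ hk c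
      _ ≤ Fintype.card ι * (y (i c') - y (j c')) := by gcongr; exact hk' c'
  have hlast := Fintype.card_le_of_injective k hinj
  have : 0 < Fintype.card ι := Fintype.card_pos_iff.2 ⟨i (Classical.arbitrary κ)⟩
  rw [Fintype.card_fin] at hlast
  omega

/-- The scale `s` is a gap of the family `y` with ratio `N` if no difference of two values of `y`
has absolute value in `[s, N * s]`. -/
def IsGap {ι : Type*} (N : ℕ) (s : ℝ) (y : ι → ℝ) : Prop :=
  ∀ a b, |y a - y b| < s ∨ N * s < |y a - y b|

lemma IsGap.sub_ne_mul {ι : Type*} {N : ℕ} {s k : ℝ} {y : ι → ℝ} (h : IsGap N s y) (hs : 0 < s)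
    (hk : 1 ≤ |k|) (hkN : |k| ≤ N) (a b : ι) : y a - y b ≠ k * s := by
  intro hab
  have := h a b
  rw [hab, abs_mul, abs_of_pos hs] at this
  rcases this with h | h
  · exact h.not_ge (le_mul_of_one_le_left hs.le hk)
  · exact h.not_ge (mul_le_mul_of_nonneg_right hkN hs.le)

lemma isOpen_setOf_isGap {X ι : Type*} [TopologicalSpace X] [Finite ι] {N : ℕ} {s : X → ℝ}
    {y : X → ι → ℝ} (hs : Continuous s) (hy : ∀ a, Continuous fun x => y x a) :
    IsOpen {x | IsGap N (s x) (y x)} := by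
  simp only [IsGap, ofPred_forall, ofPred_or]
  refine isOpen_iInter_of_finite fun a => isOpen_iInter_of_finite fun b => ?_
  have hab := ((hy a).sub (hy b)).abs
  exact (isOpen_lt hab hs).union (isOpen_lt (continuous_const.mul hs) hab)

/-- A sequence of scales, starting from `δ` and decreasing fast enough to separate `N` numbers. -/
noncomputable def gapScale (N : ℕ) (δ : ℝ) (c : ℕ) : ℝ :=
  δ / (2 * (N + 1) ^ 2) ^ c

section GapScale

variable {N : ℕ} {δ : ℝ}

lemma gapScale_zero : gapScale N δ 0 = δ := by
  simp [gapScale]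

lemma gapScale_pos (hδ : 0 < δ) (c : ℕ) : 0 < gapScale N δ c := by
  unfold gapScale
  positivity

lemma mul_gapScale_le (hδ : 0 < δ) {c' c : ℕ} (h : c' < c) :
    2 * (N + 1) ^ 2 * gapScale N δ c ≤ gapScale N δ c' := by
  have hbase : (1 : ℝ) ≤ 2 * (N + 1) ^ 2 := by
    nlinarith [(Nat.cast_nonneg N : (0 : ℝ) ≤ N)]
  calc 2 * (N + 1) ^ 2 * gapScale N δ c
    _ ≤ 2 * (N + 1) ^ 2 * gapScale N δ (c' + 1) := by
        unfold gapScale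
        gcongr
        exact h
    _ = gapScale N δ c' := by
        rw [gapScale, gapScale, pow_succ' _ c', mul_div_assoc',
          mul_div_mul_left _ _ (by positivity)]

lemma mul_gapScale_lt_half (hδ : 0 < δ) {c : ℕ} (hc : 0 < c) : N * gapScale N δ c < δ / 2 := by
  have hle := mul_gapScale_le (N := N) hδ hc
  rw [gapScale_zero] at hle
  nlinarith [gapScale_pos (N := N) hδ c, (Nat.cast_nonneg N : (0 : ℝ) ≤ N)]

lemma mul_mul_gapScale_lt (hδ : 0 < δ) {c' c : ℕ} (h : c' < c) :
    N * (N * gapScale N δ c) < gapScale N δ c' := by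
  have hle := mul_gapScale_le (N := N) hδ h
  nlinarith [gapScale_pos (N := N) hδ c, (Nat.cast_nonneg N : (0 : ℝ) ≤ N)]

end GapScale

section ExistsGap

variable {ι : Type*} [Fintype ι] {δ : ℝ}

lemma isGap_gapScale (hδ : 0 < δ) {y : ι → ℝ} {c : ℕ}
    (h : ∀ a b, gapScale (Fintype.card ι) δ c ≤ y a - y b →
      ∃ c' < c, gapScale (Fintype.card ι) δ c' ≤ Fintype.card ι * (y a - y b)) :
    IsGap (Fintype.card ι) (gapScale (Fintype.card ι) δ c) y := by
  have hlt (a b : ι) (hab : gapScale (Fintype.card ι) δ c ≤ y a - y b) :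
      Fintype.card ι * gapScale (Fintype.card ι) δ c < y a - y b := by
    obtain ⟨c', hc', hle⟩ := h a b hab
    exact lt_of_mul_lt_mul_left ((mul_mul_gapScale_lt hδ hc').trans_le hle) (Nat.cast_nonneg _)
  intro a b
  refine or_iff_not_imp_left.2 fun hab => ?_
  rcases le_abs.1 (not_lt.1 hab) with hle | hle
  · exact (hlt a b hle).trans_le (le_abs_self _)
  · rw [neg_sub] at hle
    exact (hlt b a hle).trans_le (abs_sub_comm (y a) (y b) ▸ le_abs_self _)

lemma exists_isGap_succ {K : ℕ} (hK : Fintype.card ι ≤ K + 1) (hδ : 0 < δ) (y : ι → ℝ) :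
    ∃ c : Fin (K + 1), IsGap (Fintype.card ι) (gapScale (Fintype.card ι) δ (c + 1)) y := by
  obtain ⟨c, hc⟩ := exists_scale_forall_le_sub (κ := Fin (K + 1)) (by rwa [Fintype.card_fin]) y
    (scale := fun c => gapScale (Fintype.card ι) δ (c + 1)) fun c => gapScale_pos hδ _
  refine ⟨c, isGap_gapScale hδ fun a b hab => ?_⟩
  obtain ⟨c', hlt, hle⟩ := hc a b hab
  exact ⟨c' + 1, Nat.succ_lt_succ hlt, hle⟩

lemma exists_isGap_succ_of_le_sub {K : ℕ} (hK : Fintype.card ι ≤ K + 2) (hδ : 0 < δ) (y : ι → ℝ)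
    {i j : ι} (hij : δ ≤ y i - y j) :
    ∃ c : Fin (K + 1), IsGap (Fintype.card ι) (gapScale (Fintype.card ι) δ (c + 1)) y := by
  obtain ⟨c, hc⟩ := exists_scale_forall_le_sub (κ := Fin (K + 2)) (by rwa [Fintype.card_fin]) y
    (scale := fun c => gapScale (Fintype.card ι) δ c) fun c => gapScale_pos hδ _
  have hc0 : c ≠ 0 := by
    rintro rfl
    obtain ⟨c', hlt, -⟩ := hc i j (by rwa [Fin.val_zero, gapScale_zero])
    exact (Fin.zero_le c').not_gt hlt
  obtain ⟨c, rfl⟩ := Fin.exists_succ_eq.2 hc0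
  refine ⟨c, isGap_gapScale hδ fun a b hab => ?_⟩
  obtain ⟨c', hlt, hle⟩ := hc a b (by simpa using hab)
  exact ⟨c', by simpa using Fin.lt_def.1 hlt, hle⟩

end ExistsGap

/-! ### Motion through the plane of two directions -/

section Gather

variable {V : Type*} [NormedAddCommGroup V] [InnerProductSpace ℝ V]

/-- The motion of a point `z` to `h • e'` in three phases of equal length: shift by `a • e`, move
the component orthogonal to `e` to `h • e'`, remove the component along `e`. The `projIcc`s are the
clocks of the phases. -/
noncomputable def gather (e e' z : V) (a h t : ℝ) : V :=
  ((1 - projIcc (0 : ℝ) 1 zero_le_one (3 * t - 2)) *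
      (inner ℝ e z + projIcc (0 : ℝ) 1 zero_le_one (3 * t) * a)) • e +
    (1 - projIcc (0 : ℝ) 1 zero_le_one (3 * t - 1) : ℝ) • (z - (inner ℝ e z : ℝ) • e) +
    (projIcc (0 : ℝ) 1 zero_le_one (3 * t - 1) * h) • e'

lemma continuous_gather {X : Type*} [TopologicalSpace X] {e e' z : X → V} {a h t : X → ℝ}
    (he : Continuous e) (he' : Continuous e') (hz : Continuous z) (ha : Continuous a)
    (hh : Continuous h) (ht : Continuous t) :
    Continuous fun x => gather (e x) (e' x) (z x) (a x) (h x) (t x) := by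
  unfold gather
  fun_prop

variable {e e' z w : V} {a b h k t δ : ℝ}

lemma gather_of_three_mul_le_one (ht : 3 * t ≤ 1) :
    gather e e' z a h t = z + (projIcc (0 : ℝ) 1 zero_le_one (3 * t) * a) • e := by
  rw [gather, projIcc_of_le_left _ (by linarith : 3 * t - 1 ≤ 0),
    projIcc_of_le_left _ (by linarith : 3 * t - 2 ≤ 0)]
  simp only [sub_zero, one_mul, one_smul, zero_mul, zero_smul, add_zero, add_smul]
  abel

lemma gather_zero : gather e e' z a h 0 = z := by
  simp [gather_of_three_mul_le_one]

lemma gather_of_one_le (ht : 1 ≤ t) : gather e e' z a h t = h • e' := by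
  rw [gather, projIcc_of_right_le _ (by linarith : 1 ≤ 3 * t - 1),
    projIcc_of_right_le _ (by linarith : 1 ≤ 3 * t - 2)]
  simp

lemma inner_gather_left (he : ‖e‖ = 1) (hee' : inner ℝ e e' = (0 : ℝ)) (ht : 1 ≤ 3 * t)
    (ht' : 3 * t ≤ 2) : inner ℝ e (gather e e' z a h t) = inner ℝ e z + a := by
  rw [gather, projIcc_of_right_le _ ht, projIcc_of_le_left _ (by linarith : 3 * t - 2 ≤ 0)]
  simp only [inner_add_right, inner_smul_right, inner_sub_right, real_inner_self_eq_norm_sq, he,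
    hee']
  ring

lemma inner_gather_right (he' : ‖e'‖ = 1) (hee' : inner ℝ e e' = (0 : ℝ)) (ht : 2 ≤ 3 * t) :
    inner ℝ e' (gather e e' z a h t) = h := by
  rw [gather, projIcc_of_right_le _ (by linarith : 1 ≤ 3 * t - 1)]
  simp [inner_add_right, inner_smul_right, real_inner_comm, he', hee']

lemma abs_projIcc_mul_lt {u : ℝ} (ha : |a| < δ) :
    |(projIcc (0 : ℝ) 1 zero_le_one u : ℝ) * a| < δ := by
  rw [abs_mul, abs_of_nonneg (projIcc (0 : ℝ) 1 zero_le_one u).2.1]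
  exact (mul_le_of_le_one_left (abs_nonneg a) (projIcc (0 : ℝ) 1 zero_le_one u).2.2).trans_lt ha

lemma gather_ne_gather (he : ‖e‖ = 1) (he' : ‖e'‖ = 1) (hee' : inner ℝ e e' = (0 : ℝ))
    (hzw : δ ≤ ‖z - w‖) (ha : |a| < δ / 2) (hb : |b| < δ / 2)
    (hab : inner ℝ e z + a ≠ (inner ℝ e w + b : ℝ)) (hhk : h ≠ k) :
    gather e e' z a h t ≠ gather e e' w b k t := by
  intro heq
  rcases le_or_gt (3 * t) 1 with ht | ht
  · rw [gather_of_three_mul_le_one ht, gather_of_three_mul_le_one ht] at heq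
    set u : ℝ := (projIcc (0 : ℝ) 1 zero_le_one (3 * t) : ℝ) with hu
    have hsub : z - w = (u * b - u * a) • e := by
      rw [sub_smul, sub_eq_sub_iff_add_eq_add, heq, add_comm]
    rw [hsub, norm_smul, he, mul_one, Real.norm_eq_abs] at hzw
    linarith [abs_sub (u * b) (u * a), hu ▸ abs_projIcc_mul_lt (u := 3 * t) ha,
      hu ▸ abs_projIcc_mul_lt (u := 3 * t) hb]
  rcases le_total (3 * t) 2 with ht' | ht'
  · refine hab ?_
    rw [← inner_gather_left he hee' ht.le ht', heq, inner_gather_left he hee' ht.le ht']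
  · refine hhk ?_
    rw [← inner_gather_right (z := z) (a := a) (h := h) he' hee' ht', heq,
      inner_gather_right he' hee' ht']

lemma gather_ne (he : ‖e‖ = 1) (he' : ‖e'‖ = 1) (hee' : inner ℝ e e' = (0 : ℝ))
    (hzw : δ ≤ ‖z - w‖) (ha : |a| < δ) (hew : inner ℝ e z + a ≠ (inner ℝ e w : ℝ))
    (hwh : ‖w‖ < h) : gather e e' z a h t ≠ w := by
  intro heq
  rcases le_or_gt (3 * t) 1 with ht | ht
  · rw [gather_of_three_mul_le_one ht] at heq
    rw [← heq, sub_add_cancel_left, norm_neg, norm_smul, he, mul_one, Real.norm_eq_abs] at hzw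
    exact hzw.not_gt (abs_projIcc_mul_lt ha)
  rcases le_total (3 * t) 2 with ht' | ht'
  · exact hew (by rw [← inner_gather_left he hee' ht.le ht', heq])
  · have hle := real_inner_le_norm e' w
    rw [← heq, inner_gather_right he' hee' ht', heq, he', one_mul] at hle
    exact hle.not_gt hwh

end Gather

section Tour

variable {V : Type*} [NormedAddCommGroup V] [InnerProductSpace ℝ V] {r : ℕ}

/-- Twice the distance between `t` and the time of the `l`-th of `r + 1` equidistant visits, in
units of the time between two visits. It is less than `1` for at most one visit. -/
noncomputable def visitClock (r : ℕ) (l : Fin (r + 1)) (t : ℝ) : ℝ :=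
  2 * |r * t - l|

lemma visitClock_tDiv (l : Fin (r + 1)) : visitClock r l (tDiv (r + 1) l) = 0 := by
  have hl : ((l : ℕ) : ℝ) ≤ r := by exact_mod_cast Nat.lt_succ_iff.1 l.2
  have htDiv : (tDiv (r + 1) l : ℝ) = l / r := by
    rw [tDiv, Nat.cast_add_one, add_sub_cancel_right,
      projIcc_of_mem _ ⟨by positivity, div_le_one_of_le₀ hl (Nat.cast_nonneg r)⟩]
  have hmul : (r : ℝ) * (l / r) = l := by
    rcases eq_or_ne r 0 with rfl | hr
    · rw [Fin.eq_zero l]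
      simp
    · exact mul_div_cancel₀ _ (Nat.cast_ne_zero.2 hr)
  rw [visitClock, htDiv, hmul, sub_self, abs_zero, mul_zero]

lemma exists_forall_ne_one_le_visitClock (r : ℕ) (t : ℝ) :
    ∃ l₀, ∀ l ≠ l₀, 1 ≤ visitClock r l t := by
  by_cases hnear : ∃ l₀, visitClock r l₀ t < 1
  · obtain ⟨l₀, hl₀⟩ := hnear
    refine ⟨l₀, fun l hl => ?_⟩
    have hdist : (1 : ℝ) ≤ |((l₀ : ℕ) : ℝ) - (l : ℕ)| := by
      have hne : ((l₀ : ℕ) : ℤ) - (l : ℕ) ≠ 0 := by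
        rw [Ne, sub_eq_zero]
        exact_mod_cast Fin.val_injective.ne hl.symm
      exact_mod_cast Int.one_le_abs hne
    have htri := abs_sub_le ((l₀ : ℕ) : ℝ) (r * t) (l : ℕ)
    rw [abs_sub_comm ((l₀ : ℕ) : ℝ) (r * t)] at htri
    unfold visitClock at hl₀ ⊢
    linarith
  · exact ⟨0, fun l _ => not_lt.1 fun hl => hnear ⟨l, hl⟩⟩

/-- The motion that visits the points `z l` at the times `l / r`, going from one to the next
through `h • e'`. -/
noncomputable def tour (e e' : V) (z : Fin (r + 1) → V) (a h t : ℝ) : V :=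
  h • e' + ∑ l, (gather e e' (z l) a h (visitClock r l t) - h • e')

lemma continuous_tour {X : Type*} [TopologicalSpace X] {e e' : X → V} {z : X → Fin (r + 1) → V}
    {a h t : X → ℝ} (he : Continuous e) (he' : Continuous e') (hz : ∀ l, Continuous fun x => z x l)
    (ha : Continuous a) (hh : Continuous h) (ht : Continuous t) :
    Continuous fun x => tour (e x) (e' x) (z x) (a x) (h x) (t x) := by
  have hgather (l : Fin (r + 1)) : Continuous fun x =>
      gather (e x) (e' x) (z x l) (a x) (h x) (visitClock r l (t x)) := by
    refine continuous_gather he he' (hz l) ha hh ?_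
    unfold visitClock
    fun_prop
  unfold tour
  fun_prop

variable {e e' : V} {z : Fin (r + 1) → V} {a h t : ℝ}

lemma tour_eq_gather {l₀ : Fin (r + 1)} (hl₀ : ∀ l ≠ l₀, 1 ≤ visitClock r l t) :
    tour e e' z a h t = gather e e' (z l₀) a h (visitClock r l₀ t) := by
  rw [tour, Finset.sum_eq_single_of_mem l₀ (Finset.mem_univ _)
    fun l _ hl => by rw [gather_of_one_le (hl₀ l hl), sub_self], add_sub_cancel]

lemma tour_tDiv (l : Fin (r + 1)) : tour e e' z a h (tDiv (r + 1) l) = z l := by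
  obtain ⟨l₀, hl₀⟩ := exists_forall_ne_one_le_visitClock r (tDiv (r + 1) l)
  obtain rfl : l = l₀ := by
    by_contra hl
    exact zero_lt_one.not_ge (visitClock_tDiv l ▸ hl₀ l hl)
  rw [tour_eq_gather hl₀, visitClock_tDiv, gather_zero]

end Tour

/-! ### Motion planning over a gap -/

section Plan

variable {d m n r : ℕ}

/-- The `i`-th point kept by `fadellNeuwirth d m n`, common to all configurations of `x`. -/
def commonPoint (x : FibredProd (fadellNeuwirth d m n) (r + 1)) (i : Fin m) :
    EuclideanSpace ℝ (Fin d) :=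
  (x.1 0).1 (Fin.castAdd n i)

/-- The `j`-th point forgotten by `fadellNeuwirth d m n` in the `l`-th configuration of `x`. -/
def freePoint (x : FibredProd (fadellNeuwirth d m n) (r + 1)) (l : Fin (r + 1)) (j : Fin n) :
    EuclideanSpace ℝ (Fin d) :=
  (x.1 l).1 (Fin.natAdd m j)

/-- All the points in the configurations of `x`, the common ones listed once. -/
def allPoints (x : FibredProd (fadellNeuwirth d m n) (r + 1)) : Fin m ⊕ Fin (r + 1) × Fin n →
    EuclideanSpace ℝ (Fin d) :=
  Sum.elim (commonPoint x) fun p => freePoint x p.1 p.2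

/-- Pairwise distinct heights above all common points. -/
noncomputable def height (x : FibredProd (fadellNeuwirth d m n) (r + 1)) (j : Fin n) : ℝ :=
  ∑ i, ‖commonPoint x i‖ + 1 + j

lemma continuous_point (l : Fin (r + 1)) (i : Fin (m + n)) :
    Continuous fun x : FibredProd (fadellNeuwirth d m n) (r + 1) => (x.1 l).1 i :=
  (continuous_apply i).comp
    (continuous_subtype_val.comp ((continuous_apply l).comp continuous_subtype_val))

lemma continuous_allPoints (a : Fin m ⊕ Fin (r + 1) × Fin n) :
    Continuous fun x : FibredProd (fadellNeuwirth d m n) (r + 1) => allPoints x a :=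
  a.casesOn (fun _ => continuous_point _ _) fun _ => continuous_point _ _

lemma continuous_height (j : Fin n) :
    Continuous fun x : FibredProd (fadellNeuwirth d m n) (r + 1) => height x j :=
  ((continuous_finsetSum _ fun _ _ => (continuous_point _ _).norm).add continuous_const).add
    continuous_const

variable (x : FibredProd (fadellNeuwirth d m n) (r + 1))

lemma apply_castAdd (l : Fin (r + 1)) (i : Fin m) :
    (x.1 l).1 (Fin.castAdd n i) = commonPoint x i :=
  congrFun (congrArg Subtype.val (x.2 l 0)) i

lemma norm_commonPoint_lt_height (i : Fin m) (j : Fin n) : ‖commonPoint x i‖ < height x j := by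
  have hle := Finset.single_le_sum (f := fun i => ‖commonPoint x i‖)
    (fun _ _ => norm_nonneg _) (Finset.mem_univ i)
  rw [height]
  linarith [(Nat.cast_nonneg (j : ℕ) : (0 : ℝ) ≤ _)]

lemma injective_height : Function.Injective (height x) := fun j j' h =>
  Fin.ext (by exact_mod_cast add_left_cancel h)

/-- The configuration at time `t`: the common points rest, while the `j`-th free point makes the
tour of its positions, shifted by `s * (j + 1)` on the way. -/
noncomputable def plan (e e' : EuclideanSpace ℝ (Fin d)) (s t : ℝ) :
    Fin (m + n) → EuclideanSpace ℝ (Fin d) :=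
  Fin.append (commonPoint x) fun j =>
    tour e e' (fun l => freePoint x l j) ((j + 1) * s) (height x j) t

lemma plan_tDiv (e e' : EuclideanSpace ℝ (Fin d)) (s : ℝ) (l : Fin (r + 1)) :
    plan x e e' s (tDiv (r + 1) l) = (x.1 l).1 := by
  rw [← Fin.append_castAdd_natAdd (f := (x.1 l).1), plan]
  simp only [tour_tDiv, apply_castAdd]
  rfl

lemma continuous_plan {X : Type*} [TopologicalSpace X] {e e' : X → EuclideanSpace ℝ (Fin d)}
    {s t : X → ℝ} {x : X → FibredProd (fadellNeuwirth d m n) (r + 1)}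
    (he : Continuous e) (he' : Continuous e') (hs : Continuous s) (ht : Continuous t)
    (hx : Continuous x) : Continuous fun y => plan (x y) (e y) (e' y) (s y) (t y) := by
  refine continuous_pi fun i => Fin.addCases (fun i => ?_) (fun j => ?_) i
  · simp only [plan, Fin.append_left]
    exact (continuous_point 0 _).comp hx
  · simp only [plan, Fin.append_right]
    exact continuous_tour he he' (fun l => (continuous_point l _).comp hx)
      (continuous_const.mul hs) ((continuous_height j).comp hx) ht

variable {x} {e e' : EuclideanSpace ℝ (Fin d)} {s t δ : ℝ} {N : ℕ}
  {l : Fin (r + 1)} {j j' : Fin n} {i : Fin m}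

lemma gather_freePoint_ne_gather (he : ‖e‖ = 1) (he' : ‖e'‖ = 1) (hee' : inner ℝ e e' = (0 : ℝ))
    (hsep : δ ≤ ‖freePoint x l j - freePoint x l j'‖) (hn : n ≤ N) (hs : 0 < s)
    (hsδ : N * s < δ / 2) (hgap : IsGap N s (inner ℝ e ∘ allPoints x)) (hj : j ≠ j') :
    gather e e' (freePoint x l j) ((j + 1) * s) (height x j) t ≠
      gather e e' (freePoint x l j') ((j' + 1) * s) (height x j') t := by
  have hN (j : Fin n) : ((j : ℕ) : ℝ) + 1 ≤ N := by exact_mod_cast j.2.trans_le hn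
  have hshift (j : Fin n) : |((j : ℕ) + 1) * s| < δ / 2 := by
    rw [abs_of_nonneg (by positivity)]
    exact (mul_le_mul_of_nonneg_right (hN j) hs.le).trans_lt hsδ
  refine gather_ne_gather he he' hee' hsep (hshift j) (hshift j') (fun h => ?_)
    ((injective_height x).ne hj)
  have hdist : (1 : ℝ) ≤ |((j' : ℕ) : ℝ) - (j : ℕ)| := by
    have hne : ((j' : ℕ) : ℤ) - (j : ℕ) ≠ 0 := by
      rw [Ne, sub_eq_zero]
      exact_mod_cast Fin.val_injective.ne hj.symm
    exact_mod_cast Int.one_le_abs hne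
  have hj0 (j : Fin n) : (0 : ℝ) ≤ (j : ℕ) := Nat.cast_nonneg _
  refine hgap.sub_ne_mul hs hdist ?_ (.inr (l, j)) (.inr (l, j')) ?_
  · rw [abs_le]
    constructor <;> linarith [hN j, hN j', hj0 j, hj0 j']
  · change inner ℝ e (freePoint x l j) - inner ℝ e (freePoint x l j') = _
    linarith

lemma gather_freePoint_ne_commonPoint (he : ‖e‖ = 1) (he' : ‖e'‖ = 1)
    (hee' : inner ℝ e e' = (0 : ℝ)) (hsep : δ ≤ ‖freePoint x l j - commonPoint x i‖) (hn : n ≤ N)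
    (hs : 0 < s) (hsδ : N * s < δ) (hgap : IsGap N s (inner ℝ e ∘ allPoints x)) :
    gather e e' (freePoint x l j) ((j + 1) * s) (height x j) t ≠ commonPoint x i := by
  have hN : ((j : ℕ) : ℝ) + 1 ≤ N := by exact_mod_cast j.2.trans_le hn
  have hshift : |((j : ℕ) + 1) * s| < δ := by
    rw [abs_of_nonneg (by positivity)]
    exact (mul_le_mul_of_nonneg_right hN hs.le).trans_lt hsδ
  refine gather_ne he he' hee' hsep hshift (fun h => ?_) (norm_commonPoint_lt_height x i j)
  have habs : |-(((j : ℕ) : ℝ) + 1)| = (j : ℕ) + 1 := by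
    rw [abs_neg, abs_of_nonneg (by positivity)]
  refine hgap.sub_ne_mul hs (habs.symm ▸ le_add_of_nonneg_left (Nat.cast_nonneg _))
    (habs.trans_le hN) (.inr (l, j)) (.inl i) ?_
  change inner ℝ e (freePoint x l j) - inner ℝ e (commonPoint x i) = _
  linarith

lemma injective_plan (he : ‖e‖ = 1) (he' : ‖e'‖ = 1) (hee' : inner ℝ e e' = (0 : ℝ))
    (hδ : ∀ l i j, i ≠ j → δ ≤ ‖(x.1 l).1 i - (x.1 l).1 j‖) (hn : n ≤ N) (hs : 0 < s)
    (hsδ : N * s < δ / 2) (hgap : IsGap N s (inner ℝ e ∘ allPoints x)) :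
    Function.Injective (plan x e e' s t) := by
  obtain ⟨l, hl⟩ := exists_forall_ne_one_le_visitClock r t
  refine Fin.append_injective_iff.2 ⟨fun i i' h => ?_, fun j j' heq => ?_, fun i j => ?_⟩
  · exact Fin.castAdd_injective m n ((x.1 0).2 h)
  · by_contra hj
    simp only [tour_eq_gather hl] at heq
    exact gather_freePoint_ne_gather he he' hee' (hδ l (Fin.natAdd m j) (Fin.natAdd m j')
      ((Fin.natAdd_injective n m).ne hj)) hn hs hsδ hgap hj heq
  · rw [tour_eq_gather hl]
    have hsep : δ ≤ ‖freePoint x l j - commonPoint x i‖ := by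
      have hij : Fin.castAdd n i < Fin.natAdd m j := i.2.trans_le (Nat.le_add_right m j)
      exact apply_castAdd x l i ▸ hδ l (Fin.natAdd m j) (Fin.castAdd n i) hij.ne'
    have hsδ' : N * s < δ := by linarith [mul_nonneg N.cast_nonneg hs.le]
    exact (gather_freePoint_ne_commonPoint he he' hee' hsep hn hs hsδ' hgap).symm

end Plan

lemma exists_continuous_section_of_isGap {d m n r N : ℕ} (hn : n ≤ N)
    {U : Set (FibredProd (fadellNeuwirth d m n) (r + 1))}
    {e e' : FibredProd (fadellNeuwirth d m n) (r + 1) → EuclideanSpace ℝ (Fin d)}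
    {s δ : FibredProd (fadellNeuwirth d m n) (r + 1) → ℝ}
    (he : Continuous e) (he' : Continuous e') (hs : Continuous s)
    (he1 : ∀ x, ‖e x‖ = 1) (he1' : ∀ x, ‖e' x‖ = 1) (hee' : ∀ x, inner ℝ (e x) (e' x) = (0 : ℝ))
    (hδ : ∀ x l i j, i ≠ j → δ x ≤ ‖(x.1 l).1 i - (x.1 l).1 j‖) (hs0 : ∀ x, 0 < s x)
    (hsδ : ∀ x, N * s x < δ x / 2)
    (hgap : ∀ x ∈ U, IsGap N (s x) (inner ℝ (e x) ∘ allPoints x)) :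
    ∃ f : U → FibredPaths (fadellNeuwirth d m n), Continuous f ∧
      ∀ x, parmEval (fadellNeuwirth d m n) (r + 1) (f x) = x := by
  let F : C(U × I, Conf d (m + n)) :=
    { toFun z := ⟨plan z.1.1 (e z.1) (e' z.1) (s z.1) z.2, injective_plan (he1 _) (he1' _) (hee' _)
        (hδ _) hn (hs0 _) (hsδ _) (hgap _ z.1.2)⟩
      continuous_toFun := Continuous.subtype_mk (continuous_plan (by fun_prop) (by fun_prop)
        (by fun_prop) (by fun_prop) (by fun_prop)) _ }
  have hfibre (x : U) (t : I) :
      fadellNeuwirth d m n (F.curry x t) = fadellNeuwirth d m n (x.1.1 0) :=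
    by
    refine Subtype.ext (funext fun i => ?_)
    change plan x.1 (e x) (e' x) (s x) t (Fin.castAdd n i) = commonPoint x.1 i
    exact Fin.append_left _ _ i
  refine ⟨fun x => ⟨F.curry x, _, hfibre x⟩, F.curry.continuous.subtype_mk _, fun x => ?_⟩
  exact Subtype.ext (funext fun l => Subtype.ext (plan_tDiv _ _ _ _ l))

/-! ### Upper bound for the topological complexity -/

lemma exists_continuous_pos_forall_le {X ι : Type*} [TopologicalSpace X] [Finite ι]
    {f : ι → X → ℝ} (hf : ∀ i, Continuous (f i)) (hpos : ∀ i x, 0 < f i x) :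
    ∃ δ : X → ℝ, Continuous δ ∧ (∀ x, 0 < δ x) ∧ ∀ i x, δ x ≤ f i x := by
  have := Fintype.ofFinite ι
  have hinv (i : ι) (x : X) : 0 < (f i x)⁻¹ := inv_pos.2 (hpos i x)
  have hsum (x : X) : 0 < 1 + ∑ i, (f i x)⁻¹ :=
    add_pos_of_pos_of_nonneg one_pos (Finset.sum_nonneg fun i _ => (hinv i x).le)
  refine ⟨fun x => (1 + ∑ i, (f i x)⁻¹)⁻¹, ?_, fun x => inv_pos.2 (hsum x), fun i x => ?_⟩
  · exact (continuous_const.add (continuous_finsetSum _ fun i _ =>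
      (hf i).inv₀ fun x => (hpos i x).ne')).inv₀ fun x => (hsum x).ne'
  · have hle := Finset.single_le_sum (f := fun i => (f i x)⁻¹) (fun i _ => (hinv i x).le)
      (Finset.mem_univ i)
    exact inv_le_of_inv_le₀ (hpos i x) (by linarith)

variable {d m n r K : ℕ}

lemma exists_separation (d m n r : ℕ) :
    ∃ δ : FibredProd (fadellNeuwirth d m n) (r + 1) → ℝ, Continuous δ ∧ (∀ x, 0 < δ x) ∧
      ∀ x l i j, i ≠ j → δ x ≤ ‖(x.1 l).1 i - (x.1 l).1 j‖ := by
  obtain ⟨δ, hcont, hpos, hle⟩ := exists_continuous_pos_forall_le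
    (X := FibredProd (fadellNeuwirth d m n) (r + 1))
    (ι := Fin (r + 1) × {p : Fin (m + n) × Fin (m + n) // p.1 ≠ p.2})
    (f := fun a x => ‖(x.1 a.1).1 a.2.1.1 - (x.1 a.1).1 a.2.1.2‖)
    (fun a => ((continuous_point _ _).sub (continuous_point _ _)).norm)
    fun a x => norm_sub_pos_iff.2 ((x.1 a.1).2.ne a.2.2)
  exact ⟨δ, hcont, hpos, fun x l i j hij => hle (l, ⟨(i, j), hij⟩) x⟩

lemma TCfib_fadellNeuwirth_le_of_forall_isGap
    {e e' : FibredProd (fadellNeuwirth d m n) (r + 1) → EuclideanSpace ℝ (Fin d)}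
    {δ : FibredProd (fadellNeuwirth d m n) (r + 1) → ℝ} {N : ℕ} (hn : n ≤ N)
    (he : Continuous e) (he' : Continuous e') (hδ : Continuous δ) (he1 : ∀ x, ‖e x‖ = 1)
    (he1' : ∀ x, ‖e' x‖ = 1) (hee' : ∀ x, inner ℝ (e x) (e' x) = (0 : ℝ)) (hδ0 : ∀ x, 0 < δ x)
    (hsep : ∀ x l i j, i ≠ j → δ x ≤ ‖(x.1 l).1 i - (x.1 l).1 j‖)
    (hgap : ∀ x, ∃ c : Fin (K + 1),
      IsGap N (gapScale N (δ x) (c + 1)) (inner ℝ (e x) ∘ allPoints x)) :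
    TCfib (fadellNeuwirth d m n) (r + 1) ≤ K := by
  have hscale (c : ℕ) : Continuous fun x => gapScale N (δ x) c := hδ.div_const _
  refine sInf_le ⟨K, rfl, fun c => {x | IsGap N (gapScale N (δ x) (c + 1))
    (inner ℝ (e x) ∘ allPoints x)}, fun c => ?_, ?_, fun c => ?_⟩
  · exact isOpen_setOf_isGap (hscale _) fun a => he.inner (continuous_allPoints a)
  · exact eq_univ_of_forall fun x => mem_iUnion.2 (hgap x)
  · exact exists_continuous_section_of_isGap hn he he' (hscale _) he1 he1' hee' hsep
      (fun x => gapScale_pos (hδ0 x) _) (fun x => mul_gapScale_lt_half (hδ0 x) c.succ_pos)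
      fun x hx => hx

lemma card_allPoints (m n r : ℕ) :
    Fintype.card (Fin m ⊕ Fin (r + 1) × Fin n) = (r + 1) * n + m := by
  simp [add_comm]

lemma le_card_allPoints (m n r : ℕ) : n ≤ Fintype.card (Fin m ⊕ Fin (r + 1) × Fin n) := by
  rw [card_allPoints, add_mul, one_mul]
  omega

lemma TCfib_fadellNeuwirth_le (q m n r : ℕ) :
    TCfib (fadellNeuwirth (q + 2) (m + 1) n) (r + 1) ≤ ((r + 1) * n + m : ℕ) := by
  obtain ⟨δ, hδ, hδ0, hsep⟩ := exists_separation (q + 2) (m + 1) n r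
  refine TCfib_fadellNeuwirth_le_of_forall_isGap (le_card_allPoints (m + 1) n r)
    (e := fun _ => EuclideanSpace.single 0 1) (e' := fun _ => EuclideanSpace.single 1 1)
    continuous_const continuous_const hδ (fun _ => by simp) (fun _ => by simp) (fun _ => ?_) hδ0
    hsep fun x => exists_isGap_succ (card_allPoints (m + 1) n r).le (hδ0 x) _
  simp [EuclideanSpace.inner_single_left]

lemma exists_continuous_norm_eq_inner_eq_zero {d : ℕ} (hd : Even d) :
    ∃ J : EuclideanSpace ℝ (Fin d) → EuclideanSpace ℝ (Fin d),
      Continuous J ∧ (∀ v, ‖J v‖ = ‖v‖) ∧ ∀ v, inner ℝ v (J v) = 0 := by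
  obtain ⟨k, hk⟩ := hd
  have hdim : Module.finrank ℝ (EuclideanSpace ℂ (Fin k)) = d := by
    rw [finrank_real_of_complex, finrank_euclideanSpace_fin]
    omega
  let φ : EuclideanSpace ℂ (Fin k) ≃ₗᵢ[ℝ] EuclideanSpace ℝ (Fin d) :=
    ((stdOrthonormalBasis ℝ _).reindex (finCongr hdim)).repr
  refine ⟨fun v => φ (Complex.I • φ.symm v), by fun_prop, fun v => ?_, fun v => ?_⟩
  · rw [φ.norm_map, norm_smul, Complex.norm_I, one_mul, φ.symm.norm_map]
  · rw [← φ.symm.inner_map_map, φ.symm_apply_apply, PiLp.inner_apply]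
    refine Finset.sum_eq_zero fun i _ => ?_
    rw [PiLp.smul_apply, Complex.inner, smul_eq_mul, mul_assoc, Complex.mul_conj,
      Complex.re_mul_ofReal, Complex.I_re, zero_mul]


lemma TCfib_fadellNeuwirth_le_of_even (hd : Even d) (m n r : ℕ) :
    TCfib (fadellNeuwirth d (m + 2) n) (r + 1) ≤ ((r + 1) * n + m : ℕ) := by
  obtain ⟨δ, hδ, hδ0, hsep⟩ := exists_separation d (m + 2) n r
  obtain ⟨J, hJ, hJnorm, hJinner⟩ := exists_continuous_norm_eq_inner_eq_zero hd
  let v (x : FibredProd (fadellNeuwirth d (m + 2) n) (r + 1)) : EuclideanSpace ℝ (Fin d) :=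
    commonPoint x 1 - commonPoint x 0
  have hv : Continuous v := (continuous_point _ _).sub (continuous_point _ _)
  have hδv (x) : δ x ≤ ‖v x‖ :=
    hsep x 0 _ _ ((Fin.castAdd_injective (m + 2) n).ne (one_ne_zero : (1 : Fin (m + 2)) ≠ 0))
  have hv0 (x) : ‖v x‖ ≠ 0 := ((hδ0 x).trans_le (hδv x)).ne'
  have hnorm (x) : ‖‖v x‖⁻¹ • v x‖ = 1 := by
    rw [norm_smul, norm_inv, norm_norm, inv_mul_cancel₀ (hv0 x)]
  have hdir : Continuous fun x => ‖v x‖⁻¹ • v x := (hv.norm.inv₀ hv0).smul hv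
  have hinner (x) : inner ℝ (‖v x‖⁻¹ • v x) (v x) = ‖v x‖ := by
    rw [real_inner_smul_left, real_inner_self_eq_norm_sq, sq, inv_mul_cancel_left₀ (hv0 x)]
  refine TCfib_fadellNeuwirth_le_of_forall_isGap (le_card_allPoints (m + 2) n r) hdir
    (hJ.comp hdir) hδ hnorm (fun x => (hJnorm _).trans (hnorm x)) (fun x => hJinner _) hδ0 hsep
    fun x => exists_isGap_succ_of_le_sub (card_allPoints (m + 2) n r).le (hδ0 x) _
      (i := .inl 1) (j := .inl 0) ?_
  change δ x ≤ inner ℝ _ (commonPoint x 1) - inner ℝ _ (commonPoint x 0)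
  rw [← inner_sub_right]
  exact (hδv x).trans_eq (hinner x).symm

end FadellNeuwirth

open FadellNeuwirth

/-- For all `r, m, d ≥ 2` and `n ≥ 1`, the Fadell–Neuwirth fibration
`p : F(ℝ^d, m+n) → F(ℝ^d, m)` satisfies `dTC_r[p] = rn + m - 1` if `d` is odd and
`dTC_r[p] = rn + m - 2` if `d` is even; in particular `dTC_r[p] = TC_r[p]`. -/
theorem dTCfib_fadellNeuwirth (r m d n : ℕ) (hr : 2 ≤ r) (hm : 2 ≤ m) (hd : 2 ≤ d)
    (hn : 1 ≤ n) :
    dTCfib (fadellNeuwirth d m n) r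
        = (if Odd d then ((r * n + m - 1 : ℕ) : ℕ∞) else ((r * n + m - 2 : ℕ) : ℕ∞)) ∧
      dTCfib (fadellNeuwirth d m n) r = TCfib (fadellNeuwirth d m n) r := by
  obtain ⟨r, rfl⟩ := Nat.exists_eq_add_of_le' hr
  obtain ⟨m, rfl⟩ := Nat.exists_eq_add_of_le' hm
  obtain ⟨d, rfl⟩ := Nat.exists_eq_add_of_le' hd
  obtain ⟨n, rfl⟩ := Nat.exists_eq_add_of_le' hn
  have hle := dTCfib_fadellNeuwirth_le_TCfib (d + 2) (m + 2) (n + 1) (r + 2)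
  split_ifs with hodd
  · have hupper := TCfib_fadellNeuwirth_le d (m + 1) (n + 1) (r + 1)
    have hlower := le_dsecat_of_not_hasMeasureSection
      (not_hasMeasureSection_fadellNeuwirth_of_even (s := m) (n := n) (r := r)
        (by simpa [parity_simps] using hodd))
    rw [show m + (n + 1) * (r + 2) + 1 = (r + 2) * (n + 1) + (m + 2) - 1 by
      rw [mul_comm]; omega] at hlower
    exact ⟨le_antisymm (hle.trans hupper) hlower, le_antisymm hle (hupper.trans hlower)⟩
  · have hupper := TCfib_fadellNeuwirth_le_of_even (Nat.not_odd_iff_even.1 hodd) m (n + 1) (r + 1)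
    have hlower := le_dsecat_of_not_hasMeasureSection
      (not_hasMeasureSection_fadellNeuwirth (q := d) (s := m) (n := n) (r := r))
    rw [show m + (n + 1) * (r + 2) = (r + 2) * (n + 1) + (m + 2) - 2 by
      rw [mul_comm]; omega] at hlower
    exact ⟨le_antisymm (hle.trans hupper) hlower, le_antisymm hle (hupper.trans hlower)⟩
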